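/- Let W be a finitely generated group admitting a twist-rigid Coxeter generating set. Then the outer automorphism group Out(W) = Aut(W)/Inn(W) is finite. -/

import Mathlib

/-- A finite subset `S` of a group `W` is a *Coxeter generating set* if there is a Coxeter
matrix indexed by `S` and a Coxeter system for that matrix on `W` whose simple reflections
are exactly the elements of `S` (via the inclusion `S ⊆ W`). -/
def IsCoxeterGeneratingSet {W : Type*} [Group W] (S : Set W) : Prop :=
  S.Finite ∧ ∃ (M : CoxeterMatrix ↥S) (cs : CoxeterSystem M W), ∀ s : S, cs.simple s = (s : W)

/-- Two elements are *adjacent* if they generate a finite subgroup. -/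
def AdjacentElems {W : Type*} [Group W] (s s' : W) : Prop :=
  (Subgroup.closure {s, s'} : Set W).Finite

/-- Coxeter generating sets `S` and `R` are *angle-compatible* if every pair of elements
of `S` (allowing equal elements) generating a finite subgroup is conjugate to a pair of
elements of `R`. -/
def AngleCompatible {W : Type*} [Group W] (S R : Set W) : Prop :=
  ∀ s ∈ S, ∀ s' ∈ S, (Subgroup.closure {s, s'} : Set W).Finite →
    ∃ w : W, ∃ r ∈ R, ∃ r' ∈ R, ({w * s * w⁻¹, w * s' * w⁻¹} : Set W) = {r, r'}

/-- `perpIn S J` is the set `J⊥` of elements of `S ∖ J` commuting with every element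
of `J`. -/
def perpIn {W : Type*} [Group W] (S J : Set W) : Set W :=
  {t ∈ S \ J | ∀ j ∈ J, Commute t j}

/-- A set is *irreducible* if it cannot be partitioned into two nonempty subsets that
commute elementwise. -/
def IrreducibleSubset {W : Type*} [Group W] (J : Set W) : Prop :=
  ¬ ∃ K L : Set W, K.Nonempty ∧ L.Nonempty ∧ Disjoint K L ∧ K ∪ L = J ∧
      ∀ k ∈ K, ∀ l ∈ L, Commute k l

/-- A subset `T` is *connected* in the adjacency graph if any two of its elements are
joined by a path inside `T` whose edges are adjacent pairs. -/
def ConnectedIn {W : Type*} [Group W] (T : Set W) : Prop :=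
  ∀ a ∈ T, ∀ b ∈ T,
    Relation.ReflTransGen (fun x y => x ∈ T ∧ y ∈ T ∧ AdjacentElems x y) a b

/-- A Coxeter generating set `S` is *twist-rigid* if for every irreducible spherical subset
`J ⊆ S` the set `S ∖ (J ∪ J⊥)` is connected in the adjacency graph. -/
def IsTwistRigid {W : Type*} [Group W] (S : Set W) : Prop :=
  ∀ J ⊆ S, IrreducibleSubset J → (Subgroup.closure J : Set W).Finite →
    ConnectedIn (S \ (J ∪ perpIn S J))


set_option linter.all false

namespace TR

variable {ι W : Type*} [Fintype ι] [DecidableEq ι] [Group W] {M : CoxeterMatrix ι}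

/-- simple root -/
def al (s : ι) : ι → ℝ := Pi.single s 1

@[simp] theorem al_self (s : ι) : al s s = 1 := by simp [al]

theorem al_ne {s t : ι} (h : t ≠ s) : al s t = 0 := by simp [al, h]

theorem al_apply (s t : ι) : al s t = if t = s then 1 else 0 := by
  simp [al, Pi.single_apply]

theorem sum_al (v : ι → ℝ) : v = ∑ s, v s • al s := by
  ext t
  simp [al_apply, Finset.sum_apply]

/-- height functional -/
noncomputable def ht : (ι → ℝ) →ₗ[ℝ] ℝ := ∑ s, LinearMap.proj s

theorem ht_apply (v : ι → ℝ) : ht v = ∑ s, v s := by simp [ht]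

@[simp] theorem ht_al (s : ι) : ht (al s) = 1 := by simp [ht_apply, al_apply]

/-- geometric data: an admissible symmetric form -/
structure Geo (cs : CoxeterSystem M W) where
  k : ι → ι → ℝ
  symm : ∀ s t, k s t = k t s
  fin : ∀ s t, M s t ≠ 0 → k s t = - Real.cos (Real.pi / M s t)
  inf : ∀ s t, M s t = 0 → k s t ≤ -1

namespace Geo
variable {cs : CoxeterSystem M W} (G : Geo cs)

theorem k_self (s : ι) : G.k s s = 1 := by
  rw [G.fin s s (by simp [M.diagonal])]; simp [M.diagonal]

/-- the bilinear form -/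
noncomputable def B : LinearMap.BilinForm ℝ (ι → ℝ) := Matrix.toBilin' (Matrix.of G.k)

@[simp] theorem B_al (s t : ι) : G.B (al s) (al t) = G.k s t := by
  simp [B, al]

theorem B_sum (u v : ι → ℝ) : G.B u v = ∑ s, ∑ t, u s * G.k s t * v t := by
  simp [B, Matrix.toBilin'_apply]

theorem B_comm (u v : ι → ℝ) : G.B u v = G.B v u := by
  rw [B_sum, B_sum, Finset.sum_comm]
  refine Finset.sum_congr rfl fun s _ => Finset.sum_congr rfl fun t _ => ?_
  rw [G.symm]; ring

theorem B_al_right (u : ι → ℝ) (t : ι) : G.B u (al t) = ∑ s, u s * G.k s t := by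
  conv_lhs => rw [sum_al u]
  simp

theorem B_expand_right (u v : ι → ℝ) : G.B u v = ∑ t, v t * G.B u (al t) := by
  conv_lhs => rw [sum_al v]
  simp

theorem k_le_zero {s t : ι} (h : s ≠ t) : G.k s t ≤ 0 := by
  by_cases hM : M s t = 0
  · linarith [G.inf s t hM]
  · rw [G.fin s t hM, neg_nonpos]
    have h1 : M s t ≠ 1 := M.off_diagonal s t h
    have h2 : (2:ℝ) ≤ M s t := by exact_mod_cast (by omega : 2 ≤ M s t)
    apply Real.cos_nonneg_of_neg_pi_div_two_le_of_le
    · have : 0 ≤ Real.pi / M s t := by positivity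
      linarith [Real.pi_pos]
    · exact div_le_div_of_nonneg_left Real.pi_pos.le (by norm_num) h2

theorem k_lt_one {s t : ι} (h : s ≠ t) (hM : M s t ≠ 0) : -1 < G.k s t := by
  rw [G.fin s t hM, neg_lt_neg_iff]
  have h1 : M s t ≠ 1 := M.off_diagonal s t h
  have h2 : (2:ℝ) ≤ M s t := by exact_mod_cast (by omega : 2 ≤ M s t)
  rw [← Real.cos_zero]
  apply Real.cos_lt_cos_of_nonneg_of_le_pi_div_two le_rfl
  · exact div_le_div_of_nonneg_left Real.pi_pos.le (by norm_num) h2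
  · have : (0:ℝ) < M s t := by linarith
    exact div_pos Real.pi_pos this

theorem k_eq_zero_iff {s t : ι} (h : s ≠ t) : G.k s t = 0 ↔ M s t = 2 := by
  constructor
  · intro h0
    by_contra h2
    by_cases hM : M s t = 0
    · linarith [G.inf s t hM]
    · have h1 : M s t ≠ 1 := M.off_diagonal s t h
      have h3 : (3:ℝ) ≤ M s t := by exact_mod_cast (by omega : 3 ≤ M s t)
      have : 0 < Real.cos (Real.pi / M s t) := by
        apply Real.cos_pos_of_mem_Ioo
        constructor
        · have : 0 ≤ Real.pi / M s t := by positivity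
          linarith [Real.pi_pos]
        · have : Real.pi / M s t ≤ Real.pi / 3 :=
            div_le_div_of_nonneg_left Real.pi_pos.le (by norm_num) h3
          linarith [Real.pi_pos]
      rw [G.fin s t hM] at h0
      linarith
  · intro h2
    rw [G.fin s t (by omega), h2]; simp

/-- the reflection in `g` -/
noncomputable def rf (g : ι → ℝ) : Module.End ℝ (ι → ℝ) :=
  LinearMap.id - (2:ℝ) • (G.B g).smulRight g

theorem rf_apply (g v : ι → ℝ) : G.rf g v = v - (2 * G.B v g) • g := by
  simp [rf, G.B_comm v g, smul_smul]

theorem rf_self {g : ι → ℝ} (h : G.B g g = 1) : G.rf g g = -g := by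
  rw [rf_apply, h]; module

theorem rf_rf {g : ι → ℝ} (h : G.B g g = 1) (v : ι → ℝ) : G.rf g (G.rf g v) = v := by
  rw [rf_apply, rf_apply]
  simp only [map_sub, map_smul, LinearMap.sub_apply, LinearMap.smul_apply, h, smul_eq_mul]
  module

theorem B_rf {g : ι → ℝ} (h : G.B g g = 1) (u v : ι → ℝ) :
    G.B (G.rf g u) (G.rf g v) = G.B u v := by
  rw [rf_apply, rf_apply]
  simp only [map_sub, map_smul, LinearMap.sub_apply, LinearMap.smul_apply, h, smul_eq_mul,
    G.B_comm g v]
  ring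

/-- The sequence of coefficients in rank two. -/
def us (c : ℝ) : ℕ → ℝ
  | 0 => 0
  | 1 => 1
  | (n+2) => c * us c (n+1) - us c n

theorem us_two (c : ℝ) (n : ℕ) : us c (n+2) = c * us c (n+1) - us c n := by rw [us]

theorem us_cos (θ : ℝ) (n : ℕ) : us (2 * Real.cos θ) n * Real.sin θ = Real.sin (n * θ) := by
  induction n using Nat.twoStepInduction with
  | zero => simp [us]
  | one => simp [us]
  | more n h1 h2 =>
    rw [us_two, sub_mul, h1, mul_assoc, h2]
    have e1 : ((n + 2 : ℕ) : ℝ) * θ = ((n+1 : ℕ) : ℝ) * θ + θ := by push_cast; ring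
    have e2 : ((n : ℕ) : ℝ) * θ = ((n+1 : ℕ) : ℝ) * θ - θ := by push_cast; ring
    rw [e1, e2, Real.sin_add, Real.sin_sub]; ring

theorem us_hyp {c : ℝ} (hc : 2 ≤ c) (n : ℕ) : us c n + 1 ≤ us c (n+1) ∧ 0 ≤ us c n := by
  induction n with
  | zero => simp [us]
  | succ n ih =>
    rw [us_two]
    constructor <;> nlinarith [ih.1, ih.2]

/-- alternating composition applied to `al s`: word of length `n` ending in `t`. -/
theorem alt_apply (s t : ι) (f : ι → Module.End ℝ (ι → ℝ)) (hf : ∀ i, f i = G.rf (al i))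
    (n : ℕ) :
    (((CoxeterSystem.alternatingWord s t n).map f).prod) (al s) =
      if Even n then us (-2 * G.k s t) (n+1) • al s + us (-2 * G.k s t) n • al t
      else us (-2 * G.k s t) n • al s + us (-2 * G.k s t) (n+1) • al t := by
  induction n with
  | zero => simp [CoxeterSystem.alternatingWord, us]
  | succ n ih =>
    rw [CoxeterSystem.alternatingWord_succ', List.map_cons, List.prod_cons, Module.End.mul_apply,
      ih, hf]
    by_cases hn : Even n
    · have hn' : ¬ Even (n+1) := by simpa [Nat.even_add_one] using hn
      simp only [hn, hn', if_true, if_false, rf_apply, us_two]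
      simp only [map_add, map_smul, LinearMap.add_apply, LinearMap.smul_apply, B_al, G.k_self,
        smul_eq_mul]
      module
    · have hn' : Even (n+1) := by simpa [Nat.even_add_one] using hn
      simp only [hn, hn', if_true, if_false, rf_apply, us_two]
      simp only [map_add, map_smul, LinearMap.add_apply, LinearMap.smul_apply, B_al, G.k_self,
        smul_eq_mul, G.symm t s]
      module

theorem us_one_or {s t : ι} (h : s ≠ t) (n : ℕ) (hn : M s t = 0 ∨ n ≤ M s t) :
    us (-2 * G.k s t) n = 0 ∨ 1 ≤ us (-2 * G.k s t) n := by
  by_cases hM : M s t = 0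
  · have hk := G.inf s t hM
    rcases n with _ | n
    · left; simp [us]
    · right
      have := us_hyp (c := -2 * G.k s t) (by linarith) n
      linarith
  · have hn : n ≤ M s t := by tauto
    have h1 : M s t ≠ 1 := M.off_diagonal s t h
    have hm2 : (2:ℝ) ≤ M s t := by exact_mod_cast (by omega : 2 ≤ M s t)
    set m := M s t with hm
    have hc : -2 * G.k s t = 2 * Real.cos (Real.pi / m) := by rw [G.fin s t hM]; ring
    rw [hc]
    have key := us_cos (Real.pi / m) n
    have hpi := Real.pi_pos
    have hsin : 0 < Real.sin (Real.pi / m) := by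
      apply Real.sin_pos_of_pos_of_lt_pi
      · positivity
      · apply div_lt_self hpi; linarith
    have hlt : Real.pi / m ≤ Real.pi / 2 := div_le_div_of_nonneg_left hpi.le (by norm_num) hm2
    have hmm : (m:ℝ) * (Real.pi / m) = Real.pi := by field_simp
    rcases Nat.eq_zero_or_pos n with h0 | h0
    · left; simp [h0, us]
    rcases hn.eq_or_lt with h3 | h3
    · left
      rw [h3, hmm, Real.sin_pi] at key
      rw [h3]
      exact (mul_eq_zero.mp key).resolve_right hsin.ne'
    · right
      have hge : Real.sin (Real.pi / m) ≤ Real.sin (n * (Real.pi / m)) := by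
        have hpos : 0 < Real.pi / m := by positivity
        have n1 : (1:ℝ) ≤ n := by exact_mod_cast h0
        have n2 : (n:ℝ) + 1 ≤ m := by exact_mod_cast h3
        have b1 : Real.pi / m ≤ n * (Real.pi / m) := by nlinarith
        have b2 : n * (Real.pi / m) ≤ Real.pi - Real.pi / m := by nlinarith
        rcases le_total (n * (Real.pi / m)) (Real.pi / 2) with h4 | h4
        · exact Real.sin_le_sin_of_le_of_le_pi_div_two (by linarith) h4 b1
        · rw [← Real.sin_pi_sub (n * (Real.pi / m))]
          exact Real.sin_le_sin_of_le_of_le_pi_div_two (by linarith) (by linarith) (by linarith)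
      rw [← key] at hge
      by_contra hcon
      push Not at hcon
      nlinarith

theorem braid_aux {s t : ι} (h : s ≠ t) (hM : M s t ≠ 0) :
    ((G.rf (al s) * G.rf (al t)) ^ (M s t)) (al s) = al s := by
  have hA := G.alt_apply s t (fun i => G.rf (al i)) (fun i => rfl) (2 * M s t)
  have hprod : ∀ n : ℕ, ((CoxeterSystem.alternatingWord s t (2 * n)).map
      (fun i => G.rf (al i))).prod = (G.rf (al s) * G.rf (al t)) ^ n := by
    intro n
    induction n with
    | zero => simp [CoxeterSystem.alternatingWord]
    | succ n ih =>
      rw [show 2 * (n+1) = (2 * n + 1) + 1 by ring, CoxeterSystem.alternatingWord_succ',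
        CoxeterSystem.alternatingWord_succ']
      have e1 : ¬ Even (2*n+1) := by simp
      have e2 : Even (2*n) := by simp
      simp only [e1, e2, if_true, if_false, List.map_cons, List.prod_cons, ih]
      rw [pow_succ', mul_assoc]
  rw [hprod] at hA
  rw [hA]
  have h1 : M s t ≠ 1 := M.off_diagonal s t h
  have hm2 : (2:ℝ) ≤ M s t := by exact_mod_cast (by omega : 2 ≤ M s t)
  set m := M s t with hm
  have hc : -2 * G.k s t = 2 * Real.cos (Real.pi / m) := by rw [G.fin s t hM]; ring
  have hpi := Real.pi_pos
  have hsin : 0 < Real.sin (Real.pi / m) := by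
    apply Real.sin_pos_of_pos_of_lt_pi
    · positivity
    · apply div_lt_self hpi; linarith
  have hmm : (m:ℝ) * (Real.pi / m) = Real.pi := by field_simp
  have k1 := us_cos (Real.pi / m) (2 * m)
  have k2 := us_cos (Real.pi / m) (2 * m + 1)
  have a1 : ((2 * m : ℕ) : ℝ) * (Real.pi / m) = 2 * Real.pi := by
    push_cast; rw [mul_assoc, hmm]
  have a2 : ((2 * m + 1 : ℕ) : ℝ) * (Real.pi / m) = Real.pi / m + 2 * Real.pi := by
    push_cast; rw [add_mul, mul_assoc, hmm]; ring
  rw [a1, Real.sin_two_pi] at k1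
  rw [a2, Real.sin_add_two_pi] at k2
  have r1 := (mul_eq_zero.mp k1).resolve_right hsin.ne'
  have r2 : us (2 * Real.cos (Real.pi / m)) (2 * m + 1) = 1 :=
    mul_right_cancel₀ hsin.ne' (by rw [k2, one_mul])
  simp [hc, r1, r2]

theorem braid (s t : ι) : (G.rf (al s) * G.rf (al t)) ^ (M s t) = 1 := by
  have hss : ∀ s, G.B (al s) (al s) = 1 := fun s => by rw [B_al, k_self]
  have hsq : ∀ s : ι, G.rf (al s) * G.rf (al s) = 1 := by
    intro s; exact LinearMap.ext fun v => G.rf_rf (hss s) v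
  by_cases hM : M s t = 0
  · simp [hM]
  by_cases h : s = t
  · subst h; simp [hsq]
  have f1 := G.braid_aux h hM
  have f2 := G.braid_aux (Ne.symm h) (by rwa [M.symmetric])
  rw [M.symmetric t s] at f2
  have hinv : ∀ n : ℕ, (G.rf (al s) * G.rf (al t)) ^ n * (G.rf (al t) * G.rf (al s)) ^ n = 1 := by
    intro n
    have hc : Commute (G.rf (al s) * G.rf (al t)) (G.rf (al t) * G.rf (al s)) := by
      have e1 : G.rf (al s) * G.rf (al t) * (G.rf (al t) * G.rf (al s)) = 1 := by
        rw [mul_assoc, ← mul_assoc (G.rf (al t)), hsq, one_mul, hsq]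
      have e2 : G.rf (al t) * G.rf (al s) * (G.rf (al s) * G.rf (al t)) = 1 := by
        rw [mul_assoc, ← mul_assoc (G.rf (al s)), hsq, one_mul, hsq]
      exact e1.trans e2.symm
    rw [← hc.mul_pow, mul_assoc, ← mul_assoc (G.rf (al t)), hsq, one_mul, hsq, one_pow]
  have f3 : ((G.rf (al s) * G.rf (al t)) ^ (M s t)) (al t) = al t := by
    have := LinearMap.congr_fun (hinv (M s t)) (al t)
    rw [Module.End.mul_apply, f2] at this
    exact this
  have hk := G.k_lt_one h hM
  have hk0 := G.k_le_zero h
  have hdet : 1 - G.k s t ^ 2 ≠ 0 := by nlinarith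
  refine LinearMap.ext fun v => ?_
  set a := (G.B v (al s) - G.k s t * G.B v (al t)) / (1 - G.k s t ^ 2) with ha
  set b := (G.B v (al t) - G.k s t * G.B v (al s)) / (1 - G.k s t ^ 2) with hb
  set p := v - a • al s - b • al t with hp
  have hfix : ∀ i, G.B p (al i) = 0 → G.rf (al i) p = p := by
    intro i hi; rw [rf_apply, hi]; simp
  have p1 : G.rf (al s) p = p := by
    apply hfix
    simp only [hp, map_sub, map_smul, LinearMap.sub_apply, LinearMap.smul_apply, B_al, k_self,
      smul_eq_mul, G.symm t s, ha, hb]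
    field_simp; ring
  have p2 : G.rf (al t) p = p := by
    apply hfix
    simp only [hp, map_sub, map_smul, LinearMap.sub_apply, LinearMap.smul_apply, B_al, k_self,
      smul_eq_mul, G.symm t s, ha, hb]
    field_simp; ring
  have p3 : ∀ n : ℕ, ((G.rf (al s) * G.rf (al t)) ^ n) p = p := by
    intro n
    induction n with
    | zero => simp
    | succ n ih => rw [pow_succ, Module.End.mul_apply, Module.End.mul_apply, p2, p1, ih]
  have hv : v = p + a • al s + b • al t := by rw [hp]; module
  conv_lhs => rw [hv]
  rw [map_add, map_add, map_smul, map_smul, f1, f3, p3]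
  exact hv.symm

/-- the geometric representation -/
noncomputable def ρ : W →* Module.End ℝ (ι → ℝ) :=
  cs.lift ⟨fun i => G.rf (al i), fun s t => G.braid s t⟩

theorem ρ_simple (s : ι) : G.ρ (cs.simple s) = G.rf (al s) := by
  exact cs.lift_apply_simple _ s

end Geo
end TR

namespace TR
variable {ι W : Type*} [Fintype ι] [DecidableEq ι] [Group W] {M : CoxeterMatrix ι}

/-- coefficients are zero or at least one -/
def Str (v : ι → ℝ) : Prop := ∀ s, v s = 0 ∨ 1 ≤ v s

theorem Str.nonneg {v : ι → ℝ} (h : Str v) (s : ι) : 0 ≤ v s := by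
  rcases h s with h | h <;> linarith

theorem str_al (s : ι) : Str (al s) := by
  intro t; by_cases h : t = s
  · right; simp [h]
  · left; exact al_ne h

theorem Str.comb {u v : ι → ℝ} (hu : Str u) (hv : Str v) {a b : ℝ} (ha : a = 0 ∨ 1 ≤ a)
    (hb : b = 0 ∨ 1 ≤ b) : Str (a • u + b • v) := by
  intro s
  simp only [Pi.add_apply, Pi.smul_apply, smul_eq_mul]
  rcases hu s with h1 | h1 <;> rcases hv s with h2 | h2 <;> rcases ha with h3 | h3 <;>
    rcases hb with h4 | h4 <;> try simp only [h1, h2, h3, h4, mul_zero, zero_mul, add_zero, zero_add]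
  all_goals first | (left; norm_num; done) | (right; nlinarith)

namespace Geo
open CoxeterSystem
variable {cs : CoxeterSystem M W} (G : Geo cs)

theorem strip (cs : CoxeterSystem M W) (N : ℕ) : ∀ (w : W) (s t : ι), cs.length w = N →
    ∃ (n : ℕ) (v : W), w = v * cs.wordProd (alternatingWord s t n) ∧ cs.length w = cs.length v + n ∧
      ¬ cs.IsRightDescent v (if Even n then t else s) := by
  induction N with
  | zero =>
    intro w s t hw
    refine ⟨0, w, by simp [alternatingWord], by simp, ?_⟩
    simp only [IsRightDescent, hw]; omega
  | succ N ih =>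
    intro w s t hw
    by_cases hd : cs.IsRightDescent w t
    · have h1 := (cs.isRightDescent_iff).mp hd
      obtain ⟨n, v, hv, hl, hnd⟩ := ih (w * cs.simple t) t s (by omega)
      refine ⟨n+1, v, ?_, by omega, ?_⟩
      · rw [alternatingWord_succ, wordProd_concat, ← mul_assoc, ← hv]
        simp [mul_assoc]
      · by_cases hn : Even n
        · have hn' : ¬ Even (n+1) := by simpa [Nat.even_add_one] using hn
          simpa [hn, hn'] using hnd
        · have hn' : Even (n+1) := by simpa [Nat.even_add_one] using hn
          simpa [hn, hn'] using hnd
    · exact ⟨0, w, by simp [alternatingWord], by simp, by simpa using hd⟩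

theorem alt_prefix (s t : ι) (m d : ℕ) : ∃ u : List ι, u.length = d ∧
    alternatingWord s t (m + d) = u ++ alternatingWord s t m := by
  induction d with
  | zero => exact ⟨[], rfl, rfl⟩
  | succ d ih =>
    obtain ⟨u, hu, he⟩ := ih
    refine ⟨(if Even (m+d) then t else s) :: u, by simp [hu], ?_⟩
    rw [← add_assoc, alternatingWord_succ', he]; rfl

theorem ρ_wordProd (l : List ι) : G.ρ (cs.wordProd l) = (l.map (fun i => G.rf (al i))).prod := by
  induction l with
  | nil => simp
  | cons a l ih => simp [wordProd_cons, ih, ρ_simple]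

theorem str_of_not_descent (N : ℕ) : ∀ (w : W) (s : ι), cs.length w = N →
    ¬ cs.IsRightDescent w s → Str (G.ρ w (al s)) := by
  induction N using Nat.strong_induction_on with
  | _ N ih =>
    intro w s hN hs
    by_cases hw : w = 1
    · subst hw; simpa using str_al s
    obtain ⟨t, ht⟩ := cs.exists_rightDescent_of_ne_one hw
    have hst : s ≠ t := by rintro rfl; exact hs ht
    obtain ⟨n, v, hv, hl, hnd⟩ := strip cs N w s t hN
    have hn0 : n ≠ 0 := by
      rintro rfl
      simp [alternatingWord] at hv hnd
      subst hv; exact hnd ht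
    obtain ⟨n', rfl⟩ := Nat.exists_eq_succ_of_ne_zero hn0
    have hother : ¬ cs.IsRightDescent v (if Even n' then t else s) := by
      rw [Nat.succ_eq_add_one, alternatingWord_succ', wordProd_cons] at hv
      intro hd
      have h1 := (cs.isRightDescent_iff).mp hd
      have h2 := cs.length_mul_le (v * cs.simple (if Even n' then t else s))
        (cs.wordProd (alternatingWord s t n'))
      have h3 := cs.length_wordProd_le (alternatingWord s t n')
      rw [length_alternatingWord] at h3
      rw [mul_assoc, ← hv] at h2
      omega
    have hboth : ¬ cs.IsRightDescent v s ∧ ¬ cs.IsRightDescent v t := by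
      by_cases hn : Even n'
      · have hn' : ¬ Even (n'+1) := by simpa [Nat.even_add_one] using hn
        simp only [Nat.succ_eq_add_one, hn', if_false] at hnd
        simp only [hn, if_true] at hother
        exact ⟨hnd, hother⟩
      · have hn' : Even (n'+1) := by simpa [Nat.even_add_one] using hn
        simp only [Nat.succ_eq_add_one, hn', if_true] at hnd
        simp only [hn, if_false] at hother
        exact ⟨hother, hnd⟩
    have hm : M s t = 0 ∨ n' + 1 + 1 ≤ M s t := by
      by_contra hcon
      push Not at hcon
      obtain ⟨hm0, hm1⟩ := hcon
      obtain ⟨d, hd⟩ : ∃ d, n' + 1 = M s t + d := ⟨n' + 1 - M s t, by omega⟩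
      obtain ⟨u, hu, he⟩ := alt_prefix s t (M s t) d
      rw [Nat.succ_eq_add_one, hd, he, wordProd_append] at hv
      have e1 := cs.prod_alternatingWord_eq_prod_alternatingWord_sub s t (M s t) (by omega)
      rw [show M s t * 2 - M s t = M s t by omega] at e1
      rw [e1] at hv
      obtain ⟨m', hm'⟩ := Nat.exists_eq_succ_of_ne_zero hm0
      have e2 : w * cs.simple s = v * (cs.wordProd u * cs.wordProd (alternatingWord s t m')) := by
        rw [hv, hm', Nat.succ_eq_add_one, alternatingWord_succ, wordProd_concat]
        simp [mul_assoc]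
      apply hs
      rw [IsRightDescent, e2]
      have h2 := cs.length_mul_le v (cs.wordProd u * cs.wordProd (alternatingWord s t m'))
      have h3 := cs.length_mul_le (cs.wordProd u) (cs.wordProd (alternatingWord s t m'))
      have h4 := cs.length_wordProd_le (alternatingWord s t m')
      have h5 := cs.length_wordProd_le u
      rw [length_alternatingWord] at h4
      omega
    have s1 := ih (cs.length v) (by omega) v s rfl hboth.1
    have s2 := ih (cs.length v) (by omega) v t rfl hboth.2
    have key := G.alt_apply s t (fun i => G.rf (al i)) (fun i => rfl) (n'+1)
    rw [hv, map_mul, Module.End.mul_apply, ρ_wordProd, Nat.succ_eq_add_one, key]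
    have c1 := G.us_one_or hst (n'+1) (by omega)
    have c2 := G.us_one_or hst (n'+1+1) (by omega)
    split_ifs <;> rw [map_add, map_smul, map_smul]
    · exact s1.comb s2 c2 c1
    · exact s1.comb s2 c1 c2

/-- roots -/
def Root (v : ι → ℝ) : Prop := ∃ (w : W) (s : ι), v = G.ρ w (al s)

theorem root_al (s : ι) : G.Root (al s) := ⟨1, s, by simp⟩

theorem Root.act {v : ι → ℝ} (h : G.Root v) (w : W) : G.Root (G.ρ w v) := by
  obtain ⟨w', s, rfl⟩ := h
  exact ⟨w * w', s, by rw [map_mul]; rfl⟩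

theorem B_ρ (w : W) (u v : ι → ℝ) : G.B (G.ρ w u) (G.ρ w v) = G.B u v := by
  induction w using cs.simple_induction_left with
  | one => simp
  | mul_simple_left w s ih =>
    rw [map_mul, Module.End.mul_apply, Module.End.mul_apply, ρ_simple, B_rf _ (by simp [k_self]), ih]

theorem ρ_inv_ρ (w : W) (v : ι → ℝ) : G.ρ w⁻¹ (G.ρ w v) = v := by
  rw [← Module.End.mul_apply, ← map_mul]; simp

theorem ρ_ρ_inv (w : W) (v : ι → ℝ) : G.ρ w (G.ρ w⁻¹ v) = v := by
  rw [← Module.End.mul_apply, ← map_mul]; simp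

theorem Root.norm {v : ι → ℝ} (h : G.Root v) : G.B v v = 1 := by
  obtain ⟨w, s, rfl⟩ := h
  rw [B_ρ]; simp [k_self]

theorem ρ_simple_self (s : ι) : G.ρ (cs.simple s) (al s) = - al s := by
  rw [ρ_simple, rf_self _ (by simp [k_self])]

theorem Root.neg {v : ι → ℝ} (h : G.Root v) : G.Root (-v) := by
  obtain ⟨w, s, rfl⟩ := h
  exact ⟨w * cs.simple s, s, by rw [map_mul, Module.End.mul_apply, ρ_simple_self, map_neg]⟩

theorem Root.ne_zero {v : ι → ℝ} (h : G.Root v) : v ≠ 0 := by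
  rintro rfl
  have := h.norm
  simp at this

theorem Root.exists_refl {v : ι → ℝ} (h : G.Root v) : ∃ g : W, G.ρ g = G.rf v ∧ g * g = 1 := by
  obtain ⟨w, s, rfl⟩ := h
  refine ⟨w * cs.simple s * w⁻¹, LinearMap.ext fun v => ?_, by simp [mul_assoc]⟩
  rw [map_mul, map_mul, Module.End.mul_apply, Module.End.mul_apply, ρ_simple, rf_apply, rf_apply,
    map_sub, map_smul, ρ_ρ_inv]
  congr 3
  rw [← G.B_ρ w, ρ_ρ_inv]

theorem Root.rf {u v : ι → ℝ} (hu : G.Root u) (hv : G.Root v) : G.Root (G.rf u v) := by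
  obtain ⟨g, hg, -⟩ := hu.exists_refl
  rw [← hg]; exact hv.act G g

theorem not_descent_mul {w : W} {s : ι} (h : cs.IsRightDescent w s) :
    ¬ cs.IsRightDescent (w * cs.simple s) s := by
  rw [IsRightDescent] at *
  rw [mul_assoc, cs.simple_mul_simple_self, mul_one]; omega

theorem neg_of_descent {w : W} {s : ι} (h : cs.IsRightDescent w s) : Str (-(G.ρ w (al s))) := by
  have := G.str_of_not_descent _ (w * cs.simple s) s rfl (not_descent_mul h)
  rwa [map_mul, Module.End.mul_apply, ρ_simple_self, map_neg] at this

theorem Root.str {v : ι → ℝ} (h : G.Root v) : Str v ∨ Str (-v) := by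
  obtain ⟨w, s, rfl⟩ := h
  by_cases hd : cs.IsRightDescent w s
  · right; exact G.neg_of_descent hd
  · left; exact G.str_of_not_descent _ w s rfl hd

/-- positive roots -/
def PR (v : ι → ℝ) : Prop := G.Root v ∧ Str v

theorem pr_al (s : ι) : G.PR (al s) := ⟨G.root_al s, str_al s⟩

variable {G}
theorem Root.pr {v : ι → ℝ} (h : G.Root v) : G.PR v ∨ G.PR (-v) := by
  rcases h.str with h1 | h1
  · exact Or.inl ⟨h, h1⟩
  · exact Or.inr ⟨h.neg, h1⟩

theorem PR.root {v : ι → ℝ} (h : G.PR v) : G.Root v := h.1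

theorem PR.nonneg {v : ι → ℝ} (h : G.PR v) (s : ι) : 0 ≤ v s := h.2.nonneg s

theorem PR.exists_pos {v : ι → ℝ} (h : G.PR v) : ∃ s, 1 ≤ v s := by
  by_contra hcon
  push Not at hcon
  apply h.1.ne_zero
  ext s
  rcases h.2 s with h1 | h1
  · exact h1
  · linarith [hcon s]

theorem PR.ht_ge {v : ι → ℝ} (h : G.PR v) : 1 ≤ ht v := by
  obtain ⟨s, hs⟩ := h.exists_pos
  rw [ht_apply]
  exact hs.trans (Finset.single_le_sum (f := v) (fun i _ => h.nonneg i) (Finset.mem_univ s))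

theorem PR.not_neg {v : ι → ℝ} (h : G.PR v) : ¬ G.PR (-v) := by
  intro h2
  have h3 := h.ht_ge
  have h4 := h2.ht_ge
  rw [map_neg] at h4; linarith

theorem Root.pr_of_pos {v : ι → ℝ} (h : G.Root v) {s : ι} (hs : 0 < v s) : G.PR v := by
  refine h.pr.resolve_right fun h2 => ?_
  have := h2.nonneg s
  simp at this; linarith

/-- a positive root supported on one simple root is that root -/
theorem PR.eq_al {v : ι → ℝ} (h : G.PR v) {s : ι} (hs : ∀ t, t ≠ s → v t = 0) : v = al s := by
  have e : v = v s • al s := by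
    ext t
    by_cases ht : t = s
    · subst ht; simp
    · simp [hs t ht, al_ne ht]
  have hn := h.1.norm
  rw [e] at hn
  simp [k_self] at hn
  have h0 := h.nonneg s
  have : v s = 1 := by nlinarith
  rw [e, this, one_smul]

theorem rf_al_apply_ne (v : ι → ℝ) {s t : ι} (h : t ≠ s) : G.rf (al s) v t = v t := by
  simp [rf_apply, al_ne h]

theorem PR.simple {v : ι → ℝ} (h : G.PR v) {s : ι} (hs : v ≠ al s) : G.PR (G.rf (al s) v) := by
  have : ∃ t, t ≠ s ∧ v t ≠ 0 := by
    by_contra hcon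
    push Not at hcon
    exact hs (h.eq_al hcon)
  obtain ⟨t, hts, hv⟩ := this
  apply ((G.root_al s).rf G h.1).pr_of_pos (s := t)
  rw [rf_al_apply_ne _ hts]
  exact lt_of_le_of_ne (h.nonneg t) (Ne.symm hv)

/-- inversion set -/
def Inv (G : Geo cs) (w : W) : Set (ι → ℝ) := {v | G.PR v ∧ G.PR (-(G.ρ w v))}

theorem rf_al_rf (s : ι) (v : ι → ℝ) : G.rf (al s) (G.rf (al s) v) = v :=
  G.rf_rf (by simp [k_self]) v

theorem inv_mul_simple (w : W) (s : ι) :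
    G.Inv (w * cs.simple s) ⊆ insert (al s) (G.rf (al s) '' G.Inv w) := by
  rintro v ⟨hv, hn⟩
  by_cases h : v = al s
  · exact Or.inl h
  · right
    refine ⟨G.rf (al s) v, ⟨hv.simple h, ?_⟩, rf_al_rf s v⟩
    rwa [map_mul, Module.End.mul_apply, ρ_simple] at hn

theorem inv_finite (w : W) : (G.Inv w).Finite := by
  induction w using cs.simple_induction_right with
  | one =>
    convert Set.finite_empty (α := ι → ℝ)
    ext v
    simp only [Inv, map_one, Module.End.one_apply, Set.mem_setOf_eq, Set.mem_empty_iff_false,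
      iff_false, not_and]
    exact fun h => h.not_neg
  | mul_simple_right w s ih =>
    exact ((ih.image _).insert _).subset (inv_mul_simple w s)

theorem length_le_inv (N : ℕ) : ∀ w : W, cs.length w = N → cs.length w ≤ (G.Inv w).ncard := by
  induction N with
  | zero => intro w hw; omega
  | succ N ih =>
    intro w hw
    have hne : w ≠ 1 := by rintro rfl; simp at hw
    obtain ⟨s, hs⟩ := cs.exists_rightDescent_of_ne_one hne
    have h1 := (cs.isRightDescent_iff).mp hs
    have h2 := ih (w * cs.simple s) (by omega)
    have hnd := not_descent_mul hs
    set w' := w * cs.simple s with hw'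
    have e : w = w' * cs.simple s := by simp [hw', mul_assoc]
    have hpos : G.PR (G.ρ w' (al s)) := ⟨(G.root_al s).act G w', G.str_of_not_descent _ w' s rfl hnd⟩
    have hsub : insert (al s) (G.rf (al s) '' G.Inv w') ⊆ G.Inv w := by
      rintro v (rfl | ⟨u, ⟨hu1, hu2⟩, rfl⟩)
      · refine ⟨G.pr_al s, ?_⟩
        rw [e, map_mul, Module.End.mul_apply, ρ_simple_self, map_neg, neg_neg]; exact hpos
      · have hne : u ≠ al s := by
          rintro rfl; exact hpos.not_neg hu2
        refine ⟨hu1.simple hne, ?_⟩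
        rw [e, map_mul, Module.End.mul_apply, ρ_simple, rf_al_rf]; exact hu2
    have hni : al s ∉ G.rf (al s) '' G.Inv w' := by
      rintro ⟨u, ⟨hu1, hu2⟩, hu3⟩
      have : u = - al s := by
        rw [← rf_al_rf (G := G) s u, hu3, rf_self]; simp [k_self]
      rw [this] at hu1
      exact (G.pr_al s).not_neg hu1
    have hc := Set.ncard_le_ncard hsub (inv_finite w)
    rw [Set.ncard_insert_of_notMem hni ((inv_finite w').image _),
      Set.ncard_image_of_injective _ (fun a b hab => by
        rw [← rf_al_rf (G := G) s a, hab, rf_al_rf])] at hc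
    omega

theorem length_le_ncard (w : W) : cs.length w ≤ (G.Inv w).ncard := length_le_inv _ w rfl

theorem faithful {w : W} (h : G.ρ w = 1) : w = 1 := by
  have : G.Inv w = ∅ := by
    ext v
    simp only [Inv, h, Module.End.one_apply, Set.mem_setOf_eq, Set.mem_empty_iff_false,
      iff_false, not_and]
    exact fun h => h.not_neg
  have h2 := length_le_ncard (G := G) w
  rw [this, Set.ncard_empty] at h2
  exact cs.length_eq_zero_iff.mp (by omega)

theorem ρ_inj {w w' : W} (h : G.ρ w = G.ρ w') : w = w' := by
  have : G.ρ (w * w'⁻¹) = 1 := by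
    rw [map_mul, h, ← map_mul]; simp
  exact mul_inv_eq_one.mp (faithful this)

theorem finite_length_le (cs : CoxeterSystem M W) (n : ℕ) : {w : W | cs.length w ≤ n}.Finite := by
  refine ((List.finite_length_le ι n).image cs.wordProd).subset ?_
  intro w hw
  obtain ⟨l, hl, rfl⟩ := cs.exists_isReduced w
  exact ⟨l, by simpa [hl.eq] using hw, rfl⟩

theorem rf_inj {u v : ι → ℝ} (hu : G.Root u) (hv : G.Root v) (h : G.rf u = G.rf v) :
    u = v ∨ u = -v := by
  have h1 := LinearMap.congr_fun h u
  rw [rf_self _ hu.norm, rf_apply] at h1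
  have h2 : u = (G.B u v) • v := by
    have : (2:ℝ) • u = (2:ℝ) • ((G.B u v) • v) := by
      rw [smul_smul]
      have : (2 * G.B u v) • v = u - -u := by rw [h1]; module
      rw [this]; module
    exact smul_right_injective _ (two_ne_zero) this
  have h3 := hu.norm
  rw [h2] at h3
  simp only [map_smul, LinearMap.smul_apply, hv.norm, smul_eq_mul] at h3
  have h4 : G.B u v = 1 ∨ G.B u v = -1 := by
    have : (G.B u v - 1) * (G.B u v + 1) = 0 := by linarith
    rcases mul_eq_zero.mp this with h | h
    · left; linarith
    · right; linarith
  rcases h4 with h4 | h4 <;> rw [h4] at h2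
  · left; simpa using h2
  · right; simpa using h2

end Geo
end TR

namespace TR
variable {ι W : Type*} [Fintype ι] [DecidableEq ι] [Group W] {M : CoxeterMatrix ι}

/-- support contained in K -/
def Sup (K : Set ι) (v : ι → ℝ) : Prop := ∀ s, s ∉ K → v s = 0

theorem Sup.add {K : Set ι} {u v : ι → ℝ} (hu : Sup K u) (hv : Sup K v) : Sup K (u + v) :=
  fun s hs => by simp [hu s hs, hv s hs]

theorem Sup.smul {K : Set ι} {u : ι → ℝ} (hu : Sup K u) (c : ℝ) : Sup K (c • u) :=
  fun s hs => by simp [hu s hs]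

theorem Sup.neg {K : Set ι} {u : ι → ℝ} (hu : Sup K u) : Sup K (-u) :=
  fun s hs => by simp [hu s hs]

theorem sup_al {K : Set ι} {s : ι} (h : s ∈ K) : Sup K (al s) :=
  fun t ht => al_ne (by rintro rfl; exact ht h)

theorem Sup.mono {K L : Set ι} (h : K ⊆ L) {u : ι → ℝ} (hu : Sup K u) : Sup L u :=
  fun s hs => hu s (fun h' => hs (h h'))

theorem sup_univ (u : ι → ℝ) : Sup Set.univ u := fun s hs => absurd trivial hs

/-- standard parabolic subgroup -/
def WP (cs : CoxeterSystem M W) (K : Set ι) : Subgroup W := Subgroup.closure (cs.simple '' K)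

theorem simple_mem_WP (cs : CoxeterSystem M W) {K : Set ι} {s : ι} (h : s ∈ K) :
    cs.simple s ∈ WP cs K := Subgroup.subset_closure ⟨s, h, rfl⟩

theorem WP_mono (cs : CoxeterSystem M W) {K L : Set ι} (h : K ⊆ L) : WP cs K ≤ WP cs L :=
  Subgroup.closure_mono (Set.image_mono h)

namespace Geo
variable {cs : CoxeterSystem M W} {G : Geo cs}

theorem Sup.rf_al {K : Set ι} {s : ι} (h : s ∈ K) {v : ι → ℝ} (hv : Sup K v) :
    Sup K (G.rf (al s) v) := by
  intro t ht
  rw [rf_al_apply_ne _ (by rintro rfl; exact ht h), hv t ht]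

theorem ρ_sub_sup {K : Set ι} {w : W} (hw : w ∈ WP cs K) : ∀ v, Sup K (G.ρ w v - v) := by
  induction hw using Subgroup.closure_induction with
  | mem x hx =>
    obtain ⟨s, hs, rfl⟩ := hx
    intro v t ht
    rw [ρ_simple, Pi.sub_apply, rf_al_apply_ne _ (by rintro rfl; exact ht hs), sub_self]
  | one => intro v t ht; simp
  | mul x y _ _ hx hy =>
    intro v t ht
    have h1 := hx (G.ρ y v) t ht
    have h2 := hy v t ht
    rw [map_mul, Module.End.mul_apply]
    simp only [Pi.sub_apply] at *
    linarith
  | inv x _ hx =>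
    intro v t ht
    have h1 := hx (G.ρ x⁻¹ v) t ht
    rw [ρ_ρ_inv] at h1
    simp only [Pi.sub_apply] at *
    linarith

theorem ρ_apply_not_mem {K : Set ι} {w : W} (hw : w ∈ WP cs K) (v : ι → ℝ) {t : ι} (ht : t ∉ K) :
    G.ρ w v t = v t := by
  have := ρ_sub_sup (G := G) hw v t ht
  simp only [Pi.sub_apply] at this
  linarith

theorem Sup.ρ {K : Set ι} {w : W} (hw : w ∈ WP cs K) {v : ι → ℝ} (hv : Sup K v) :
    Sup K (G.ρ w v) := fun t ht => by rw [ρ_apply_not_mem hw v ht, hv t ht]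

theorem inv_sup {K : Set ι} {w : W} (hw : w ∈ WP cs K) {v : ι → ℝ} (hv : v ∈ G.Inv w) :
    Sup K v := by
  intro t ht
  have h1 := ρ_apply_not_mem (G := G) hw v ht
  have h2 := hv.1.nonneg t
  have h3 := hv.2.nonneg t
  simp only [Pi.neg_apply] at h3
  linarith

theorem descent_mem (G : Geo cs) {K : Set ι} {w : W} (hw : w ∈ WP cs K) {s : ι}
    (hs : cs.IsRightDescent w s) : s ∈ K := by
  by_contra h
  have : al s ∈ G.Inv w := ⟨G.pr_al s, ((G.root_al s).act G w).neg, G.neg_of_descent hs⟩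
  have := inv_sup hw this s h
  simp at this

theorem WP_induction (G : Geo cs) {K : Set ι} {P : W → Prop} (one : P 1)
    (step : ∀ w ∈ WP cs K, ∀ s ∈ K, G.PR (G.ρ w (al s)) → Sup K (G.ρ w (al s)) → P w →
      P (w * cs.simple s)) :
    ∀ w ∈ WP cs K, P w := by
  have : ∀ N : ℕ, ∀ w ∈ WP cs K, cs.length w = N → P w := by
    intro N
    induction N with
    | zero =>
      intro w _ hl
      rw [cs.length_eq_zero_iff.mp hl]; exact one
    | succ N ih =>
      intro w hw hl
      have hne : w ≠ 1 := by rintro rfl; simp at hl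
      obtain ⟨s, hs⟩ := cs.exists_rightDescent_of_ne_one hne
      have hsK := descent_mem G hw hs
      have h1 := (cs.isRightDescent_iff).mp hs
      have hw' : w * cs.simple s ∈ WP cs K := mul_mem hw (simple_mem_WP cs hsK)
      have := step (w * cs.simple s) hw' s hsK
        ⟨(G.root_al s).act G _, G.str_of_not_descent _ _ s rfl (not_descent_mul hs)⟩
        (Sup.ρ hw' (sup_al hsK)) (ih _ hw' (by omega))
      simpa [mul_assoc] using this
  intro w hw
  exact this _ w hw rfl

/-- positive roots supported in K -/
def PK (G : Geo cs) (K : Set ι) : Set (ι → ℝ) := {v | G.PR v ∧ Sup K v}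

theorem WP_finite {K : Set ι} (h : (G.PK K).Finite) : (WP cs K : Set W).Finite := by
  refine (finite_length_le cs (G.PK K).ncard).subset ?_
  intro w hw
  refine (length_le_ncard (G := G) w).trans (Set.ncard_le_ncard ?_ h)
  exact fun v hv => ⟨hv.1, inv_sup hw hv⟩

/-- interior of the Tits cone -/
def U (G : Geo cs) : Set ((ι → ℝ) →ₗ[ℝ] ℝ) := {x | {v | G.PR v ∧ x v ≤ 0}.Finite}

theorem U_add {x y : (ι → ℝ) →ₗ[ℝ] ℝ} (hx : x ∈ G.U) (hy : y ∈ G.U) : x + y ∈ G.U := by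
  refine (Set.Finite.union hx hy).subset ?_
  rintro v ⟨h1, h2⟩
  by_cases h : x v ≤ 0
  · exact Or.inl ⟨h1, h⟩
  · refine Or.inr ⟨h1, ?_⟩
    simp only [LinearMap.add_apply] at h2
    linarith

theorem U_smul {x : (ι → ℝ) →ₗ[ℝ] ℝ} (hx : x ∈ G.U) {c : ℝ} (hc : 0 < c) : c • x ∈ G.U := by
  refine hx.subset ?_
  rintro v ⟨h1, h2⟩
  refine ⟨h1, ?_⟩
  simp only [LinearMap.smul_apply, smul_eq_mul] at h2
  by_contra h
  push Not at h
  nlinarith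

theorem U_add_smul {x y : (ι → ℝ) →ₗ[ℝ] ℝ} (hx : x ∈ G.U) (hy : y ∈ G.U) {c : ℝ} (hc : 0 ≤ c) :
    x + c • y ∈ G.U := by
  rcases hc.eq_or_lt with h | h
  · subst h; simpa using hx
  · exact U_add hx (U_smul hy h)

theorem U_act {x : (ι → ℝ) →ₗ[ℝ] ℝ} (hx : x ∈ G.U) (w : W) : x ∘ₗ G.ρ w ∈ G.U := by
  refine (Set.Finite.union (inv_finite (G := G) w) (hx.image (G.ρ w⁻¹))).subset ?_
  rintro v ⟨h1, h2⟩
  rcases (h1.1.act G w).pr with h | h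
  · exact Or.inr ⟨G.ρ w v, ⟨h, h2⟩, G.ρ_inv_ρ w v⟩
  · exact Or.inl ⟨h1, h⟩

theorem U_rf {x : (ι → ℝ) →ₗ[ℝ] ℝ} (hx : x ∈ G.U) {g : ι → ℝ} (hg : G.Root g) :
    x ∘ₗ G.rf g ∈ G.U := by
  obtain ⟨w, hw, -⟩ := hg.exists_refl
  rw [← hw]; exact U_act hx w

theorem ht_mem_U : ht ∈ G.U := by
  refine Set.Finite.subset (Set.finite_empty (α := ι → ℝ)) fun v => ?_
  simp only [Set.mem_setOf_eq, imp_false, Set.mem_empty_iff_false, iff_false, not_and, not_le]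
  intro h; linarith [h.ht_ge]

theorem ht_add_proj_mem_U (s : ι) {n : ℝ} (hn : 0 ≤ n) :
    ht + n • (LinearMap.proj s : (ι → ℝ) →ₗ[ℝ] ℝ) ∈ G.U := by
  refine Set.Finite.subset (Set.finite_empty (α := ι → ℝ)) fun v => ?_
  simp only [Set.mem_setOf_eq, imp_false, Set.mem_empty_iff_false, iff_false, not_and, not_le]
  intro h
  have := h.ht_ge
  have h2 := h.nonneg s
  simp only [LinearMap.add_apply, LinearMap.smul_apply, LinearMap.proj_apply, smul_eq_mul]
  nlinarith

/-- projecting to a wall -/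
noncomputable def wall (G : Geo cs) (g : ι → ℝ) (x : (ι → ℝ) →ₗ[ℝ] ℝ) : (ι → ℝ) →ₗ[ℝ] ℝ :=
  x + x ∘ₗ G.rf g

theorem wall_mem {x : (ι → ℝ) →ₗ[ℝ] ℝ} (hx : x ∈ G.U) {g : ι → ℝ} (hg : G.Root g) :
    G.wall g x ∈ G.U := U_add hx (U_rf hx hg)

theorem wall_apply (g : ι → ℝ) (x : (ι → ℝ) →ₗ[ℝ] ℝ) (v : ι → ℝ) :
    G.wall g x v = 2 * x v - 2 * G.B v g * x g := by
  simp only [wall, LinearMap.add_apply, LinearMap.comp_apply, rf_apply, map_sub, map_smul,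
    smul_eq_mul]; ring

theorem wall_self {g : ι → ℝ} (hg : G.Root g) (x : (ι → ℝ) →ₗ[ℝ] ℝ) : G.wall g x g = 0 := by
  rw [wall_apply, hg.norm]; ring

theorem zero_roots_finite {x : (ι → ℝ) →ₗ[ℝ] ℝ} (hx : x ∈ G.U) :
    {v | G.Root v ∧ x v = 0}.Finite := by
  refine (Set.Finite.union hx (hx.image (fun v => -v))).subset ?_
  rintro v ⟨h1, h2⟩
  rcases h1.pr with h | h
  · exact Or.inl ⟨h, h2.le⟩
  · exact Or.inr ⟨-v, ⟨h, by simp [h2]⟩, by simp⟩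

theorem stab_finite {x : (ι → ℝ) →ₗ[ℝ] ℝ} (hx : x ∈ G.U) : {w : W | x ∘ₗ G.ρ w = x}.Finite := by
  set Z := {v | G.PR v ∧ x v ≤ 0} with hZ
  refine (finite_length_le cs (Z.ncard + Z.ncard)).subset ?_
  intro w hw
  have hwx : ∀ v, x (G.ρ w v) = x v := fun v => LinearMap.congr_fun hw v
  refine (length_le_ncard (G := G) w).trans ?_
  have hfin : ((fun v => G.ρ w⁻¹ (-v)) '' Z).Finite := Set.Finite.image _ hx
  have hsub : G.Inv w ⊆ Z ∪ (fun v => G.ρ w⁻¹ (-v)) '' Z := by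
    rintro v ⟨h1, h2⟩
    by_cases h : x v ≤ 0
    · exact Or.inl ⟨h1, h⟩
    · refine Or.inr ⟨-(G.ρ w v), ⟨h2, ?_⟩, by simp [ρ_inv_ρ]⟩
      rw [map_neg, hwx]; linarith
  calc (G.Inv w).ncard ≤ _ := Set.ncard_le_ncard hsub (Set.Finite.union hx hfin)
    _ ≤ _ := Set.ncard_union_le _ _
    _ ≤ _ := Nat.add_le_add_left (Set.ncard_image_le hx) _

theorem move (y : (ι → ℝ) →ₗ[ℝ] ℝ) (K : Set ι) (h : {v | v ∈ G.PK K ∧ y v < 0}.Finite) :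
    ∃ w ∈ WP cs K, ∀ q ∈ K, 0 ≤ y (G.ρ w (al q)) := by
  have : ∀ N : ℕ, ∀ y : (ι → ℝ) →ₗ[ℝ] ℝ, {v | v ∈ G.PK K ∧ y v < 0}.Finite →
      {v | v ∈ G.PK K ∧ y v < 0}.ncard = N → ∃ w ∈ WP cs K, ∀ q ∈ K, 0 ≤ y (G.ρ w (al q)) := by
    intro N
    induction N using Nat.strong_induction_on with
    | _ N ih =>
      intro y hy hN
      by_cases hd : ∀ q ∈ K, 0 ≤ y (al q)
      · exact ⟨1, one_mem _, by simpa using hd⟩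
      push Not at hd
      obtain ⟨s, hs, hneg⟩ := hd
      have hmem : al s ∈ {v | v ∈ G.PK K ∧ y v < 0} := ⟨⟨G.pr_al s, sup_al hs⟩, hneg⟩
      have hsub : {v | v ∈ G.PK K ∧ (y ∘ₗ G.ρ (cs.simple s)) v < 0} ⊆
          G.rf (al s) '' ({v | v ∈ G.PK K ∧ y v < 0} \ {al s}) := by
        rintro v ⟨⟨h1, h2⟩, h3⟩
        rw [LinearMap.comp_apply, ρ_simple] at h3
        have hne : v ≠ al s := by
          rintro rfl
          rw [rf_self _ (by simp [k_self]), map_neg] at h3; linarith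
        refine ⟨G.rf (al s) v, ⟨⟨⟨h1.simple hne, Sup.rf_al hs h2⟩, h3⟩, ?_⟩, rf_al_rf s v⟩
        intro he
        have he' : G.rf (al s) v = al s := he
        have : v = - al s := by
          rw [← rf_al_rf (G := G) s v, he', rf_self]; simp [k_self]
        rw [this] at h1
        exact (G.pr_al s).not_neg h1
      have hfin : (G.rf (al s) '' ({v | v ∈ G.PK K ∧ y v < 0} \ {al s})).Finite :=
        (hy.subset Set.diff_subset).image _
      have hcard : {v | v ∈ G.PK K ∧ (y ∘ₗ G.ρ (cs.simple s)) v < 0}.ncard < N := by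
        calc _ ≤ _ := Set.ncard_le_ncard hsub hfin
          _ ≤ _ := Set.ncard_image_le (hy.subset Set.diff_subset)
          _ < _ := Set.ncard_diff_singleton_lt_of_mem hmem hy
          _ = N := hN
      obtain ⟨w, hw, hq⟩ := ih _ hcard _ (hfin.subset hsub) rfl
      refine ⟨cs.simple s * w, mul_mem (simple_mem_WP cs hs) hw, fun q hqK => ?_⟩
      rw [map_mul]; exact hq q hqK
  exact this _ y h rfl

theorem nonneg_of_simple {x : (ι → ℝ) →ₗ[ℝ] ℝ} {K : Set ι} (h : ∀ q ∈ K, 0 ≤ x (al q))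
    {v : ι → ℝ} (hv : ∀ s, 0 ≤ v s) (hK : Sup K v) : 0 ≤ x v := by
  rw [sum_al v, map_sum]
  refine Finset.sum_nonneg fun s _ => ?_
  rw [map_smul, smul_eq_mul]
  by_cases hs : s ∈ K
  · exact mul_nonneg (hv s) (h s hs)
  · simp [hK s hs]

theorem exists_dom {x : (ι → ℝ) →ₗ[ℝ] ℝ} (hx : x ∈ G.U) :
    ∃ w : W, ∀ v, (∀ s, 0 ≤ v s) → 0 ≤ x (G.ρ w v) := by
  obtain ⟨w, -, hw⟩ := move (G := G) x Set.univ (Set.Finite.subset hx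
    (by rintro v ⟨⟨h1, -⟩, h2⟩; exact ⟨h1, h2.le⟩))
  exact ⟨w, fun v hv => nonneg_of_simple (x := x ∘ₗ G.ρ w) hw hv (sup_univ v)⟩

theorem hyp_family {g d : ι → ℝ} (hg : G.Root g) (hd : G.Root d) (n : ℕ) :
    G.Root (us (-2 * G.B g d) (2*n+1) • g + us (-2 * G.B g d) (2*n) • d) ∧
    G.Root (us (-2 * G.B g d) (2*n+1) • g + us (-2 * G.B g d) (2*n+2) • d) := by
  have step1 : ∀ n, G.Root (us (-2 * G.B g d) (2*n+1) • g + us (-2 * G.B g d) (2*n) • d) →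
      G.Root (us (-2 * G.B g d) (2*n+1) • g + us (-2 * G.B g d) (2*n+2) • d) := by
    intro n h
    convert hd.rf G h using 1
    rw [rf_apply, us_two]
    simp only [map_add, map_smul, LinearMap.add_apply, LinearMap.smul_apply, hd.norm, smul_eq_mul]
    module
  induction n with
  | zero =>
    have h0 : G.Root (us (-2 * G.B g d) (2*0+1) • g + us (-2 * G.B g d) (2*0) • d) := by
      simpa [us] using hg
    exact ⟨h0, step1 0 h0⟩
  | succ n ih =>
    have h1 : G.Root (us (-2 * G.B g d) (2*(n+1)+1) • g + us (-2 * G.B g d) (2*(n+1)) • d) := by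
      convert hg.rf G ih.2 using 1
      rw [rf_apply, show 2 * (n+1) + 1 = (2*n+1) + 2 by ring, us_two]
      simp only [map_add, map_smul, LinearMap.add_apply, LinearMap.smul_apply, hg.norm,
        smul_eq_mul, G.B_comm d g]
      rw [show 2 * n + 1 + 1 = 2 * n + 2 by ring, show 2 * (n+1) = 2 * n + 2 by ring]
      module
    exact ⟨h1, step1 _ h1⟩

theorem us_strictMono {c : ℝ} (hc : 2 ≤ c) : StrictMono (us c) :=
  strictMono_nat_of_lt_succ fun n => by linarith [(us_hyp hc n).1]

theorem no_common_zero {g d : ι → ℝ} (hg : G.Root g) (hd : G.Root d) (hB : G.B g d ≤ -1)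
    (hne : g + d ≠ 0) {x : (ι → ℝ) →ₗ[ℝ] ℝ} (hx : x ∈ G.U) (h1 : x g = 0) (h2 : x d = 0) :
    False := by
  have hc : 2 ≤ -2 * G.B g d := by linarith
  set c := -2 * G.B g d with hcdef
  have hli : ∀ a b : ℝ, a • g + b • d = 0 → a = 0 := by
    intro a b hab
    by_contra ha
    have h3 : g = (-b/a) • d := by
      have : a • g = (-b) • d := by
        rw [eq_comm, ← sub_eq_zero] ; rw [← neg_eq_zero, ← hab]; module
      calc g = a⁻¹ • (a • g) := by rw [smul_smul, inv_mul_cancel₀ ha, one_smul]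
        _ = _ := by rw [this, smul_smul]; congr 1; field_simp
    have h4 := hg.norm
    have h5 := hB
    rw [h3] at h4 h5
    simp only [map_smul, LinearMap.smul_apply, smul_eq_mul, hd.norm] at h4 h5
    have h6 : -b/a = -1 := by nlinarith
    apply hne
    rw [h3, h6]; module
  have hinj : Function.Injective (fun n : ℕ => us c (2*n+1) • g + us c (2*n) • d) := by
    intro n m hnm
    have : (us c (2*n+1) - us c (2*m+1)) • g + (us c (2*n) - us c (2*m)) • d = 0 := by
      have h := sub_eq_zero.mpr hnm
      simp only at h
      rw [← h]; module
    have h := hli _ _ this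
    have := (us_strictMono hc).injective (sub_eq_zero.mp h)
    omega
  refine Set.infinite_of_injective_forall_mem hinj (s := {v | G.Root v ∧ x v = 0}) ?_
    (zero_roots_finite hx)
  intro n
  exact ⟨(hyp_family hg hd n).1, by simp [h1, h2]⟩

theorem ell_aux (g d : ι → ℝ) (k : ℕ) : ∀ (w : W) (τ : ℝ), τ ≤ 2 →
    (G.ρ w g + G.ρ w⁻¹ g = τ • g) → (G.ρ w d + G.ρ w⁻¹ d = τ • d) → 2 ≤ (2 - τ) * 2 ^ k →
    ∃ x ∈ G.U, x g = 0 ∧ x d = 0 := by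
  induction k with
  | zero =>
    intro w τ _ h1 h2 h3
    refine ⟨(ht ∘ₗ G.ρ w + ht ∘ₗ G.ρ w⁻¹) + (-τ) • ht, U_add_smul
      (U_add (U_act ht_mem_U w) (U_act ht_mem_U w⁻¹)) ht_mem_U (by simp at h3; linarith), ?_, ?_⟩
    · simp only [LinearMap.add_apply, LinearMap.comp_apply, LinearMap.smul_apply]
      rw [← map_add, h1, map_smul]; simp
    · simp only [LinearMap.add_apply, LinearMap.comp_apply, LinearMap.smul_apply]
      rw [← map_add, h2, map_smul]; simp
  | succ k ih =>
    intro w τ hτ h1 h2 h3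
    by_cases h0 : τ ≤ 0
    · refine ⟨(ht ∘ₗ G.ρ w + ht ∘ₗ G.ρ w⁻¹) + (-τ) • ht, U_add_smul
        (U_add (U_act ht_mem_U w) (U_act ht_mem_U w⁻¹)) ht_mem_U (by linarith), ?_, ?_⟩
      · simp only [LinearMap.add_apply, LinearMap.comp_apply, LinearMap.smul_apply]
        rw [← map_add, h1, map_smul]; simp
      · simp only [LinearMap.add_apply, LinearMap.comp_apply, LinearMap.smul_apply]
        rw [← map_add, h2, map_smul]; simp
    push Not at h0
    have sq : ∀ v, G.ρ w v + G.ρ w⁻¹ v = τ • v →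
        G.ρ (w*w) v + G.ρ (w*w)⁻¹ v = (τ^2-2) • v := by
      intro v hv
      have e1 := congrArg (G.ρ w) hv
      have e2 := congrArg (G.ρ w⁻¹) hv
      rw [map_add, map_smul, ρ_ρ_inv] at e1
      rw [map_add, map_smul, ρ_inv_ρ] at e2
      rw [mul_inv_rev, map_mul, map_mul, Module.End.mul_apply, Module.End.mul_apply]
      have e3 : G.ρ w (G.ρ w v) = τ • G.ρ w v - v := by rw [← e1]; module
      have e4 : G.ρ w⁻¹ (G.ρ w⁻¹ v) = τ • G.ρ w⁻¹ v - v := by rw [← e2]; module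
      rw [e3, e4]
      have : τ • G.ρ w v - v + (τ • G.ρ w⁻¹ v - v) = τ • (G.ρ w v + G.ρ w⁻¹ v) - (2:ℝ) • v := by
        module
      rw [this, hv]; module
    refine ih (w*w) (τ^2-2) (by nlinarith) (sq g h1) (sq d h2) ?_
    have : (2 - τ) * 2 ≤ 2 - (τ^2-2) := by nlinarith
    have hp : (0:ℝ) < 2^k := by positivity
    calc (2:ℝ) ≤ (2 - τ) * 2 ^ (k+1) := h3
      _ = ((2-τ)*2) * 2^k := by ring
      _ ≤ _ := by gcongr

theorem ell {g d : ι → ℝ} (hg : G.Root g) (hd : G.Root d) (hB : |G.B g d| < 1) :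
    ∃ x ∈ G.U, x g = 0 ∧ x d = 0 := by
  obtain ⟨a, ha, ha2⟩ := hg.exists_refl
  obtain ⟨b, hb, hb2⟩ := hd.exists_refl
  have hai : a⁻¹ = a := inv_eq_of_mul_eq_one_left ha2
  have hbi : b⁻¹ = b := inv_eq_of_mul_eq_one_left hb2
  have hB2 : G.B g d ^ 2 < 1 := by rw [← sq_abs]; nlinarith [abs_nonneg (G.B g d)]
  set τ := 4 * G.B g d ^ 2 - 2 with hτ
  have hε : 0 < 2 - τ := by linarith
  obtain ⟨k, hk⟩ := pow_unbounded_of_one_lt (2 / (2-τ)) (by norm_num : (1:ℝ) < 2)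
  refine ell_aux g d k (a*b) τ (by linarith) ?_ ?_ ?_
  · rw [mul_inv_rev, hai, hbi, map_mul, map_mul, Module.End.mul_apply, Module.End.mul_apply, ha, hb,
      rf_self _ hg.norm]
    simp only [rf_apply, map_sub, map_smul, map_neg, LinearMap.sub_apply, LinearMap.smul_apply,
      LinearMap.neg_apply, hg.norm, hd.norm, smul_eq_mul, G.B_comm d g, hτ]
    module
  · rw [mul_inv_rev, hai, hbi, map_mul, map_mul, Module.End.mul_apply, Module.End.mul_apply, ha, hb,
      rf_self _ hd.norm]
    simp only [rf_apply, map_sub, map_smul, map_neg, LinearMap.sub_apply, LinearMap.smul_apply,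
      LinearMap.neg_apply, hg.norm, hd.norm, smul_eq_mul, G.B_comm d g, hτ]
    module
  · rw [div_lt_iff₀ hε] at hk
    linarith [mul_comm (2-τ) (2^k)]

/-- zero set of a dominant functional -/
theorem dom_zero {x : (ι → ℝ) →ₗ[ℝ] ℝ} (hd : ∀ v, (∀ s, 0 ≤ v s) → 0 ≤ x v) {v : ι → ℝ}
    (hv : ∀ s, 0 ≤ v s) (h : x v = 0) : Sup {s | x (al s) = 0} v := by
  intro s hs
  rw [sum_al v, map_sum] at h
  have h0 : ∀ s, 0 ≤ x (v s • al s) := fun s => by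
    rw [map_smul]; exact mul_nonneg (hv s) (hd _ (fun t => (str_al s).nonneg t))
  have := (Finset.sum_eq_zero_iff_of_nonneg (fun s _ => h0 s)).mp h s (Finset.mem_univ s)
  rw [map_smul, smul_eq_mul] at this
  exact (mul_eq_zero.mp this).resolve_right hs

theorem PK_zero_finite {x : (ι → ℝ) →ₗ[ℝ] ℝ} (hx : x ∈ G.U) :
    (G.PK {s | x (al s) = 0}).Finite := by
  refine (zero_roots_finite hx).subset ?_
  rintro v ⟨h1, h2⟩
  refine ⟨h1.1, ?_⟩
  rw [sum_al v, map_sum]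
  refine Finset.sum_eq_zero fun s _ => ?_
  rw [map_smul, smul_eq_mul]
  by_cases hs : x (al s) = 0
  · simp [hs]
  · simp [h2 s hs]

/-- the finite set of possible values of the form on elliptic pairs -/
def FV (G : Geo cs) : Set ℝ :=
  ⋃ J : Set ι, {r | (G.PK J).Finite ∧ ∃ u v, G.Root u ∧ Sup J u ∧ G.Root v ∧ Sup J v ∧ r = G.B u v}

theorem FV_finite : (G.FV).Finite := by
  refine Set.finite_iUnion fun J => ?_
  by_cases h : (G.PK J).Finite
  · have hR : {u | G.Root u ∧ Sup J u}.Finite := by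
      refine (h.union (h.image (fun v => -v))).subset ?_
      rintro u ⟨h1, h2⟩
      rcases h1.pr with h3 | h3
      · exact Or.inl ⟨h3, h2⟩
      · exact Or.inr ⟨-u, ⟨h3, h2.neg⟩, by simp⟩
    refine (Set.Finite.image2 (fun u v => G.B u v) hR hR).subset ?_
    rintro r ⟨-, u, v, h1, h2, h3, h4, rfl⟩
    exact ⟨u, ⟨h1, h2⟩, v, ⟨h3, h4⟩, rfl⟩
  · convert Set.finite_empty (α := ℝ)
    ext r; simp [h]

theorem mem_FV {x : (ι → ℝ) →ₗ[ℝ] ℝ} (hx : x ∈ G.U) {u v : ι → ℝ} (hu : G.Root u) (hv : G.Root v)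
    (hxu : x u = 0) (hxv : x v = 0) : G.B u v ∈ G.FV := by
  obtain ⟨w, hw⟩ := exists_dom hx
  refine Set.mem_iUnion.mpr ⟨{s | (x ∘ₗ G.ρ w) (al s) = 0}, PK_zero_finite (U_act hx w),
    G.ρ w⁻¹ u, G.ρ w⁻¹ v, hu.act G _, ?_, hv.act G _, ?_, (G.B_ρ _ _ _).symm⟩
  · have h0 : (x ∘ₗ G.ρ w) (G.ρ w⁻¹ u) = 0 := by rw [LinearMap.comp_apply, ρ_ρ_inv, hxu]
    rcases (hu.act G w⁻¹).pr with h | h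
    · exact dom_zero hw h.nonneg h0
    · have h5 := (dom_zero hw h.nonneg (by rw [map_neg, h0, neg_zero])).neg
      rw [neg_neg] at h5
      exact h5
  · have h0 : (x ∘ₗ G.ρ w) (G.ρ w⁻¹ v) = 0 := by rw [LinearMap.comp_apply, ρ_ρ_inv, hxv]
    rcases (hv.act G w⁻¹).pr with h | h
    · exact dom_zero hw h.nonneg h0
    · have h5 := (dom_zero hw h.nonneg (by rw [map_neg, h0, neg_zero])).neg
      rw [neg_neg] at h5
      exact h5

theorem ell_mem_FV {u v : ι → ℝ} (hu : G.Root u) (hv : G.Root v) (h : |G.B u v| < 1) :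
    G.B u v ∈ G.FV := by
  obtain ⟨x, hx, h1, h2⟩ := ell hu hv h
  exact mem_FV hx hu hv h1 h2

theorem exists_eps (G : Geo cs) : ∃ ε : ℝ, 0 < ε ∧ ∀ u v, G.Root u → G.Root v → 0 < G.B u v →
    ε ≤ G.B u v := by
  have hfin : (insert 1 (G.FV ∩ Set.Ioi 0)).Finite :=
    (FV_finite.subset Set.inter_subset_left).insert 1
  obtain ⟨ε, hε, hmin⟩ := Set.exists_min_image _ id hfin ⟨1, Or.inl rfl⟩
  refine ⟨ε, ?_, fun u v hu hv hp => ?_⟩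
  · rcases hε with rfl | h
    · norm_num
    · exact h.2
  · by_cases h1 : G.B u v < 1
    · exact hmin _ (Or.inr ⟨ell_mem_FV hu hv (by rw [abs_of_pos hp]; exact h1), hp⟩)
    · exact (hmin 1 (Or.inl rfl)).trans (not_lt.mp h1)

theorem PR.exists_desc {v : ι → ℝ} (h : G.PR v) : ∃ s, 0 < v s ∧ 0 < G.B v (al s) := by
  by_contra hcon
  push Not at hcon
  have h1 := h.1.norm
  rw [B_expand_right] at h1
  have : ∑ t, v t * G.B v (al t) ≤ 0 := by
    refine Finset.sum_nonpos fun t _ => ?_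
    rcases (h.nonneg t).eq_or_lt with h2 | h2
    · simp [← h2]
    · exact mul_nonpos_of_nonneg_of_nonpos h2.le (hcon t h2)
  linarith

theorem ht_rf_al (v : ι → ℝ) (s : ι) : ht (G.rf (al s) v) = ht v - 2 * G.B v (al s) := by
  rw [rf_apply, map_sub, map_smul]; simp

theorem ht_finite (G : Geo cs) (h : ℝ) : {v | G.PR v ∧ ht v ≤ h}.Finite := by
  obtain ⟨ε, hε, hmin⟩ := G.exists_eps
  have key : ∀ n : ℕ, {v | G.PR v ∧ ht v ≤ 1 + 2 * ε * n}.Finite := by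
    intro n
    induction n with
    | zero =>
      refine (Set.finite_range (al : ι → ι → ℝ)).subset ?_
      rintro v ⟨h1, h2⟩
      obtain ⟨s, hs1, hs2⟩ := h1.exists_desc
      by_cases he : v = al s
      · exact ⟨s, he.symm⟩
      · have h3 := (h1.simple he).ht_ge
        rw [ht_rf_al] at h3
        simp at h2
        linarith
    | succ n ih =>
      refine ((Set.finite_range (al : ι → ι → ℝ)).union
        (Set.finite_iUnion fun s => ih.image (G.rf (al s)))).subset ?_
      rintro v ⟨h1, h2⟩
      obtain ⟨s, hs1, hs2⟩ := h1.exists_desc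
      by_cases he : v = al s
      · exact Or.inl ⟨s, he.symm⟩
      · refine Or.inr (Set.mem_iUnion.mpr ⟨s, G.rf (al s) v, ⟨h1.simple he, ?_⟩, rf_al_rf s v⟩)
        rw [ht_rf_al]
        have := hmin v (al s) h1.1 (G.root_al s) hs2
        push_cast at h2
        linarith
  obtain ⟨n, hn⟩ := exists_nat_gt (h / (2 * ε))
  refine (key n).subset ?_
  rintro v ⟨h1, h2⟩
  refine ⟨h1, ?_⟩
  rw [div_lt_iff₀ (by linarith)] at hn
  linarith

theorem PR_induction {P : (ι → ℝ) → Prop} (base : ∀ s, P (al s))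
    (step : ∀ v s, G.PR v → v ≠ al s → 0 < v s → 0 < G.B v (al s) → G.PR (G.rf (al s) v) →
      P (G.rf (al s) v) → P v) : ∀ v, G.PR v → P v := by
  have : ∀ N : ℕ, ∀ v, G.PR v → {u | G.PR u ∧ ht u ≤ ht v}.ncard = N → P v := by
    intro N
    induction N using Nat.strong_induction_on with
    | _ N ih =>
      intro v hv hN
      obtain ⟨s, hs1, hs2⟩ := hv.exists_desc
      by_cases he : v = al s
      · rw [he]; exact base s
      · have h1 := hv.simple he
        have hlt : ht (G.rf (al s) v) < ht v := by rw [ht_rf_al]; linarith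
        refine step v s hv he hs1 hs2 h1 (ih _ ?_ _ h1 rfl)
        rw [← hN]
        refine Set.ncard_lt_ncard ⟨fun u hu => ⟨hu.1, hu.2.trans hlt.le⟩, fun hsub => ?_⟩
          (G.ht_finite _)
        have := (hsub (show v ∈ {u | G.PR u ∧ ht u ≤ ht v} from ⟨hv, le_rfl⟩)).2
        linarith
  exact fun v hv => this _ v hv rfl

theorem PK_orbit {K : Set ι} {v : ι → ℝ} (hv : v ∈ G.PK K) :
    ∃ w ∈ WP cs K, ∃ s ∈ K, v = G.ρ w (al s) := by
  refine PR_induction (G := G) (P := fun v => Sup K v → ∃ w ∈ WP cs K, ∃ s ∈ K, v = G.ρ w (al s))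
    ?_ ?_ v hv.1 hv.2
  · intro s hs
    have : s ∈ K := by
      by_contra h
      have := hs s h; simp at this
    exact ⟨1, one_mem _, s, this, by simp⟩
  · intro v s hv hne hs hB hp ih hK
    have hsK : s ∈ K := by
      by_contra h
      rw [hK s h] at hs; exact lt_irrefl _ hs
    obtain ⟨w, hw, t, ht, he⟩ := ih (Sup.rf_al hsK hK)
    refine ⟨cs.simple s * w, mul_mem (simple_mem_WP cs hsK) hw, t, ht, ?_⟩
    rw [map_mul, Module.End.mul_apply, ← he, ρ_simple, rf_al_rf]

theorem PK_finite {K : Set ι} (h : (WP cs K : Set W).Finite) : (G.PK K).Finite := by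
  refine (Set.Finite.image2 (fun w s => G.ρ w (al s)) h (Set.toFinite K)).subset ?_
  intro v hv
  obtain ⟨w, hw, s, hs, rfl⟩ := PK_orbit hv
  exact ⟨w, hw, s, hs, rfl⟩

end Geo
end TR

namespace TR
variable {ι W : Type*} [Fintype ι] [DecidableEq ι] [Group W] {M : CoxeterMatrix ι}
namespace Geo
variable {cs : CoxeterSystem M W} {G : Geo cs}

theorem exists_fixed (G : Geo cs) (H : Subgroup W) (hH : (H : Set W).Finite) :
    ∃ x ∈ G.U, ∀ w ∈ H, x ∘ₗ G.ρ w = x := by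
  classical
  have : Fintype H := hH.fintype
  refine ⟨∑ h : H, ht ∘ₗ G.ρ h, ?_, ?_⟩
  · refine Finset.sum_induction_nonempty _ (fun x => x ∈ G.U) (fun a b ha hb => U_add ha hb)
      ⟨1, Finset.mem_univ _⟩ (fun h _ => U_act ht_mem_U _)
  · intro w hw
    have : (∑ h : H, ht ∘ₗ G.ρ h) ∘ₗ G.ρ w = ∑ h : H, ht ∘ₗ G.ρ ((h * ⟨w, hw⟩ : H) : W) := by
      refine LinearMap.ext fun v => ?_
      simp [map_mul]
    rw [this]
    exact Fintype.sum_equiv (Equiv.mulRight (⟨w, hw⟩ : H)) _ _ (fun h => rfl)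

theorem fixed_zero {x : (ι → ℝ) →ₗ[ℝ] ℝ} {g : ι → ℝ} (hg : G.Root g)
    (h : x ∘ₗ G.rf g = x) : x g = 0 := by
  have := LinearMap.congr_fun h g
  rw [LinearMap.comp_apply, rf_self _ hg.norm, map_neg] at this
  linarith

theorem fin_order_bound (G : Geo cs) : ∃ n : ℕ, ∀ g : W, IsOfFinOrder g →
    ∃ w : W, cs.length (w⁻¹ * g * w) ≤ n := by
  classical
  refine ⟨∑ J : Set ι, (G.PK J).ncard, fun g hg => ?_⟩
  have hfin : ((Subgroup.zpowers g : Subgroup W) : Set W).Finite := 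
    finite_zpowers.mpr hg
  obtain ⟨x, hx, hfix⟩ := G.exists_fixed _ hfin
  have hxg := hfix g (Subgroup.mem_zpowers g)
  obtain ⟨w, hw⟩ := exists_dom hx
  refine ⟨w, ?_⟩
  set J := {s | (x ∘ₗ G.ρ w) (al s) = 0} with hJ
  have hJf : (G.PK J).Finite := PK_zero_finite (U_act hx w)
  have h2 : (G.PK J).ncard ≤ ∑ J : Set ι, (G.PK J).ncard :=
    Finset.single_le_sum (f := fun J : Set ι => (G.PK J).ncard) (fun _ _ => Nat.zero_le _)
      (Finset.mem_univ J)
  refine (length_le_ncard (G := G) _).trans ((Set.ncard_le_ncard ?_ hJf).trans h2)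
  rintro v ⟨h3, h4⟩
  refine ⟨h3, dom_zero hw h3.nonneg (le_antisymm ?_ (hw v h3.nonneg))⟩
  have h5 := hw _ h4.nonneg
  rw [map_neg, map_neg] at h5
  have e : G.ρ w (G.ρ (w⁻¹ * g * w) v) = G.ρ g (G.ρ w v) := by
    rw [← Module.End.mul_apply, ← map_mul, ← Module.End.mul_apply, ← map_mul]
    congr 2; group
  rw [e] at h5
  have h6 := LinearMap.congr_fun hxg (G.ρ w v)
  rw [LinearMap.comp_apply] at h6 ⊢
  linarith

theorem PK_finite_of_pd {K : Set ι} (h : ∀ v, Sup K v → v ≠ 0 → 0 < G.B v v) :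
    (G.PK K).Finite := by
  have hnn : ∀ v, Sup K v → 0 ≤ G.B v v := by
    intro v hv
    by_cases h0 : v = 0
    · simp [h0]
    · exact (h v hv h0).le
  have hF : (insert 1 (insert (-1) G.FV)).Finite := (FV_finite.insert _).insert _
  have hval : ∀ u ∈ G.PK K, ∀ s : K, G.B u (al s) ∈ insert (1:ℝ) (insert (-1) G.FV) := by
    rintro u ⟨hu, hK⟩ s
    have h1 := hnn (u + al (s : ι)) (hK.add (sup_al s.2))
    have h2 := hnn (u + (-1:ℝ) • al (s : ι)) (hK.add ((sup_al s.2).smul _))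
    simp only [map_add, map_smul, LinearMap.add_apply, LinearMap.smul_apply, hu.1.norm, B_al,
      k_self, smul_eq_mul, G.B_comm (al ↑s) u] at h1 h2
    by_cases e1 : G.B u (al s) = 1
    · exact Or.inl e1
    by_cases e2 : G.B u (al s) = -1
    · exact Or.inr (Or.inl e2)
    · refine Or.inr (Or.inr (ell_mem_FV hu.1 (G.root_al s) (abs_lt.mpr ⟨?_, ?_⟩)))
      · exact lt_of_le_of_ne (by linarith) (Ne.symm e2)
      · exact lt_of_le_of_ne (by linarith) e1
  have hpi : (Set.pi Set.univ (fun _ : K => insert (1:ℝ) (insert (-1) G.FV))).Finite :=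
    Set.Finite.pi fun _ => hF
  refine Set.Finite.of_finite_image (f := fun (u : ι → ℝ) (s : K) => G.B u (al s)) ?_ ?_
  · refine hpi.subset ?_
    rintro _ ⟨u, hu, rfl⟩ s _
    exact hval u hu s
  · intro u hu v hv huv
    by_contra hne
    have hK : Sup K (u + (-1:ℝ) • v) := hu.2.add (hv.2.smul _)
    have hne' : u + (-1:ℝ) • v ≠ 0 := by
      intro h0; apply hne
      have : u - v = 0 := by rw [← h0]; module
      exact sub_eq_zero.mp this
    have hp := h _ hK hne'
    rw [B_expand_right] at hp
    have : ∑ t, (u + (-1:ℝ) • v) t * G.B (u + (-1:ℝ) • v) (al t) = 0 := by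
      refine Finset.sum_eq_zero fun t _ => ?_
      by_cases ht : t ∈ K
      · have := congrFun huv ⟨t, ht⟩
        simp only at this
        simp only [map_add, map_smul, LinearMap.add_apply, LinearMap.smul_apply, this, smul_eq_mul]
        ring
      · rw [hK t ht, zero_mul]
    linarith

theorem pf {K : Set ι} {p : ι → ℝ} (hp : ∀ i ∈ K, 0 < p i) (hpK : Sup K p)
    (h1 : ∀ i ∈ K, 0 ≤ G.B p (al i))
    (h2 : ∀ K' ⊆ K, K'.Nonempty → (∀ i ∈ K', ∀ j ∈ K \ K', G.k i j = 0) →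
      ∃ i ∈ K', 0 < G.B p (al i)) :
    ∀ v, Sup K v → v ≠ 0 → 0 < G.B v v := by
  intro y hy hne
  set z : ι → ℝ := fun i => y i / p i with hz
  have hyz : ∀ i, y i = z i * p i := by
    intro i
    by_cases hi : i ∈ K
    · simp only [hz]; rw [div_mul_cancel₀]; exact (hp i hi).ne'
    · simp [hz, hy i hi, hpK i hi]
  have hp0 : ∀ i, 0 ≤ p i := fun i => by
    by_cases hi : i ∈ K
    · exact (hp i hi).le
    · rw [hpK i hi]
  have id1 : G.B y y = ∑ i, G.B p (al i) * p i * z i ^ 2 +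
      (1/2) * ∑ i, ∑ j, (-(G.k i j)) * p i * p j * (z i - z j) ^ 2 := by
    have e1 : ∑ i, G.B p (al i) * p i * z i ^ 2 = ∑ i, ∑ j, G.k i j * p i * p j * z i ^ 2 := by
      refine Finset.sum_congr rfl fun i _ => ?_
      rw [B_al_right, Finset.sum_mul, Finset.sum_mul]
      refine Finset.sum_congr rfl fun j _ => ?_
      rw [G.symm j i]; ring
    have e2 : ∑ i, ∑ j, G.k i j * p i * p j * z j ^ 2 = ∑ i, ∑ j, G.k i j * p i * p j * z i ^ 2 := by
      rw [Finset.sum_comm]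
      refine Finset.sum_congr rfl fun i _ => Finset.sum_congr rfl fun j _ => ?_
      rw [G.symm]; ring
    have e3 : ∑ i, ∑ j, (-(G.k i j)) * p i * p j * (z i - z j) ^ 2 =
        2 * G.B y y - ∑ i, ∑ j, G.k i j * p i * p j * z i ^ 2
          - ∑ i, ∑ j, G.k i j * p i * p j * z j ^ 2 := by
      rw [B_sum, Finset.mul_sum, ← Finset.sum_sub_distrib, ← Finset.sum_sub_distrib]
      refine Finset.sum_congr rfl fun i _ => ?_
      rw [Finset.mul_sum, ← Finset.sum_sub_distrib, ← Finset.sum_sub_distrib]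
      refine Finset.sum_congr rfl fun j _ => ?_
      rw [hyz i, hyz j]; ring
    rw [e1, e3, e2]; ring
  have t1 : ∀ i, 0 ≤ G.B p (al i) * p i * z i ^ 2 := fun i => by
    by_cases hi : i ∈ K
    · have := h1 i hi; have := hp i hi; positivity
    · rw [hpK i hi]; simp
  have t2 : ∀ i j, 0 ≤ (-(G.k i j)) * p i * p j * (z i - z j) ^ 2 := fun i j => by
    by_cases hij : i = j
    · subst hij; simp
    · have := G.k_le_zero hij
      have h3 : 0 ≤ -(G.k i j) := by linarith
      have := hp0 i; have := hp0 j; positivity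
  have t3 : ∀ i, 0 ≤ ∑ j, (-(G.k i j)) * p i * p j * (z i - z j) ^ 2 := fun i =>
    Finset.sum_nonneg fun j _ => t2 i j
  have s1 : 0 ≤ ∑ i, G.B p (al i) * p i * z i ^ 2 := Finset.sum_nonneg fun i _ => t1 i
  have s2 : 0 ≤ ∑ i, ∑ j, (-(G.k i j)) * p i * p j * (z i - z j) ^ 2 :=
    Finset.sum_nonneg fun i _ => t3 i
  rcases (show 0 ≤ G.B y y by rw [id1]; linarith).eq_or_lt with h0 | h0
  swap
  · exact h0
  exfalso
  rw [id1] at h0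
  have z1 := (Finset.sum_eq_zero_iff_of_nonneg (fun i _ => t1 i)).mp (by linarith : ∑ i, G.B p (al i) * p i * z i ^ 2 = 0)
  have z2 := (Finset.sum_eq_zero_iff_of_nonneg (fun i _ => t3 i)).mp (by linarith : ∑ i, ∑ j, (-(G.k i j)) * p i * p j * (z i - z j) ^ 2 = 0)
  obtain ⟨i0, hi0⟩ : ∃ i, y i ≠ 0 := by
    by_contra hcon; push Not at hcon; exact hne (funext hcon)
  have hi0K : i0 ∈ K := by
    by_contra h; exact hi0 (hy i0 h)
  have hz0 : z i0 ≠ 0 := by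
    intro h; apply hi0; rw [hyz, h, zero_mul]
  obtain ⟨i, ⟨hiK, hiz⟩, hpos⟩ := h2 {i | i ∈ K ∧ z i = z i0} (fun i hi => hi.1) ⟨i0, hi0K, rfl⟩ (by
    rintro i ⟨hi, hiz⟩ j ⟨hj, hjz⟩
    have hjz : z j ≠ z i0 := fun h => hjz ⟨hj, h⟩
    have := (Finset.sum_eq_zero_iff_of_nonneg (fun j _ => t2 i j)).mp (z2 i (Finset.mem_univ i)) j
      (Finset.mem_univ j)
    have hd : z i - z j ≠ 0 := by rw [hiz]; exact sub_ne_zero.mpr (Ne.symm hjz)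
    have hpi := (hp i hi).ne'
    have hpj := (hp j hj).ne'
    simpa [hpi, hpj, hd] using this)
  have := z1 i (Finset.mem_univ i)
  have hpi := (hp i hiK).ne'
  rw [← hiz] at hz0
  simp [hpi, hz0] at this
  linarith

theorem anti_cone {K : Set ι} {d : ι → ℝ} (hd : ∀ s ∈ K, G.B d (al s) ≤ 0) :
    ∀ w ∈ WP cs K, ∀ t, 0 ≤ (G.ρ w d - d) t := by
  refine WP_induction G (P := fun w => ∀ t, 0 ≤ (G.ρ w d - d) t) (by simp) ?_
  intro w hw s hs hp hK ih t
  have h1 := ih t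
  have h2 := hp.nonneg t
  have h3 := hd s hs
  rw [map_mul, Module.End.mul_apply, ρ_simple, rf_apply, map_sub, map_smul]
  simp only [Pi.sub_apply, Pi.smul_apply, smul_eq_mul] at *
  nlinarith

theorem dom_cone {K : Set ι} {d : ι → ℝ} (hd : ∀ s ∈ K, 0 ≤ G.B d (al s)) :
    ∀ w ∈ WP cs K, ∀ t, 0 ≤ (d - G.ρ w d) t := by
  intro w hw t
  have := anti_cone (d := -d) (fun s hs => by
    rw [map_neg, LinearMap.neg_apply]; linarith [hd s hs]) w hw t
  rw [map_neg] at this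
  simp only [Pi.sub_apply, Pi.neg_apply] at *
  linarith

theorem dom_unique {K : Set ι} {d : ι → ℝ} {w : W} (hw : w ∈ WP cs K)
    (hd : ∀ s ∈ K, 0 ≤ G.B d (al s)) (hd' : ∀ s ∈ K, 0 ≤ G.B (G.ρ w d) (al s)) : G.ρ w d = d := by
  ext t
  have h1 := dom_cone hd w hw t
  have h2 := dom_cone hd' w⁻¹ (inv_mem hw) t
  rw [ρ_inv_ρ] at h2
  simp only [Pi.sub_apply] at *
  linarith

theorem ad {K : Set ι} {g d : ι → ℝ} (hg : G.PR g) (hd : G.PR d) (hB : G.B g d ≤ -1) :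
    ∃ w ∈ WP cs K, G.PR (G.ρ w g) ∧ G.PR (G.ρ w d) ∧
      ∀ s ∈ K, G.B (G.ρ w g + G.ρ w d) (al s) ≤ 0 := by
  set T : Set ((ι → ℝ) × (ι → ℝ)) := {p | (∃ w ∈ WP cs K, p = (G.ρ w g, G.ρ w d)) ∧ G.PR p.1 ∧
    G.PR p.2 ∧ ht p.1 + ht p.2 ≤ ht g + ht d} with hT
  have hfin : T.Finite := by
    refine ((G.ht_finite (ht g + ht d)).prod (G.ht_finite (ht g + ht d))).subset ?_
    rintro p ⟨-, h1, h2, h3⟩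
    have := h1.ht_ge; have := h2.ht_ge
    exact ⟨⟨h1, by linarith⟩, ⟨h2, by linarith⟩⟩
  obtain ⟨p, ⟨⟨w, hw, rfl⟩, h1, h2, h3⟩, hmin⟩ := Set.exists_min_image T
    (fun p => ht p.1 + ht p.2) hfin ⟨(g, d), ⟨1, one_mem _, by simp⟩, hg, hd, le_rfl⟩
  simp only at h1 h2 h3 hmin
  refine ⟨w, hw, h1, h2, fun s hs => ?_⟩
  by_contra hcon
  push Not at hcon
  have hB' : G.B (G.ρ w g) (G.ρ w d) ≤ -1 := by rw [B_ρ]; exact hB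
  rw [map_add, LinearMap.add_apply] at hcon
  have n1 : G.ρ w g ≠ al s := by
    intro h; rw [h] at hcon hB'; simp [k_self] at hcon; rw [G.B_comm] at hB'; linarith
  have n2 : G.ρ w d ≠ al s := by
    intro h; rw [h] at hcon hB'; simp [k_self] at hcon; linarith
  have e : ∀ u, G.ρ (cs.simple s * w) u = G.rf (al s) (G.ρ w u) := fun u => by
    rw [map_mul, Module.End.mul_apply, ρ_simple]
  have hm := hmin (G.ρ (cs.simple s * w) g, G.ρ (cs.simple s * w) d)
    ⟨⟨_, mul_mem (simple_mem_WP cs hs) hw, rfl⟩, by show G.PR (G.ρ (cs.simple s * w) g); rw [e]; exact h1.simple n1,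
      by show G.PR (G.ρ (cs.simple s * w) d); rw [e]; exact h2.simple n2, by simp only [e, ht_rf_al]; linarith⟩
  simp only [e, ht_rf_al] at hm
  linarith

/-- strictly positive on the cone U -/
def Q (G : Geo cs) : Set (ι → ℝ) := {y | ∀ x ∈ G.U, 0 < x y}

theorem Q_act {y : ι → ℝ} (hy : y ∈ G.Q) (w : W) : G.ρ w y ∈ G.Q :=
  fun x hx => hy (x ∘ₗ G.ρ w) (U_act hx w)

theorem Q_nonneg {y : ι → ℝ} (hy : y ∈ G.Q) (s : ι) : 0 ≤ y s := by
  by_contra h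
  push Not at h
  have h1 := hy _ ht_mem_U
  have h2 := hy _ (ht_add_proj_mem_U (G := G) s (n := ht y / (- y s)) (by
    apply div_nonneg h1.le; linarith))
  simp only [LinearMap.add_apply, LinearMap.smul_apply, LinearMap.proj_apply, smul_eq_mul] at h2
  have : ht y / -y s * y s = - ht y := by
    have hne : y s ≠ 0 := h.ne
    field_simp
  linarith

theorem hyp_sum_ne {g d : ι → ℝ} (hg : G.Root g) (hd : G.Root d) (hB : G.B g d ≤ -1)
    (hne : g + d ≠ 0) {x : (ι → ℝ) →ₗ[ℝ] ℝ} (hx : x ∈ G.U) : x (g + d) ≠ 0 := by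
  intro h
  rw [map_add] at h
  have hy : G.wall g x + G.wall d x + (-2 * G.B g d - 2) • x ∈ G.U :=
    U_add_smul (U_add (wall_mem hx hg) (wall_mem hx hd)) hx (by linarith)
  have hd' : x d = - x g := by linarith
  refine no_common_zero hg hd hB hne hy ?_ ?_
  · simp only [LinearMap.add_apply, LinearMap.smul_apply, wall_apply, hg.norm, smul_eq_mul, hd']
    ring
  · simp only [LinearMap.add_apply, LinearMap.smul_apply, wall_apply, hd.norm, smul_eq_mul, hd',
      G.B_comm d g]
    ring

theorem sign_const {y : ι → ℝ} (h : ∀ x ∈ G.U, x y ≠ 0) : y ∈ G.Q ∨ -y ∈ G.Q := by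
  by_contra hcon
  push Not at hcon
  obtain ⟨h1, h2⟩ := hcon
  simp only [Q, Set.mem_setOf_eq, not_forall, not_lt] at h1 h2
  obtain ⟨x, hx, hx'⟩ := h1
  obtain ⟨z, hz, hz'⟩ := h2
  have e1 := lt_of_le_of_ne hx' (h x hx)
  rw [map_neg] at hz'
  have e2 := lt_of_le_of_ne (by linarith : 0 ≤ z y) (Ne.symm (h z hz))
  refine h _ (U_add (U_smul hx e2) (U_smul hz (by linarith : 0 < - x y))) ?_
  simp only [LinearMap.add_apply, LinearMap.smul_apply, smul_eq_mul]; ring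

theorem hyp_Q {g d : ι → ℝ} (hg : G.Root g) (hd : G.Root d) (hB : G.B g d ≤ -1)
    (hne : g + d ≠ 0) : g + d ∈ G.Q ∨ -(g + d) ∈ G.Q :=
  sign_const fun _ hx => hyp_sum_ne hg hd hB hne hx

theorem pp {g d y : ι → ℝ} (hg : G.Root g) (hd : G.Root d) (hB : G.B g d ≤ -1)
    (hQ : g + d ∈ G.Q) (hy : y ∈ G.Q) : G.B (g + d) y ≤ 0 := by
  have hx1 : G.wall d ht ∈ G.U := wall_mem ht_mem_U hd
  have hx2 : G.wall g ht ∈ G.U := wall_mem ht_mem_U hg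
  have p1 := hQ _ hx1
  have p2 := hQ _ hx2
  rw [map_add, wall_self hd] at p1
  rw [map_add, wall_self hg] at p2
  set x := G.wall d ht + G.wall g ht with hx
  have hxU : x ∈ G.U := U_add hx1 hx2
  have q1 : 0 < x g := by rw [hx, LinearMap.add_apply, wall_self hg]; linarith
  have q2 : 0 < x d := by rw [hx, LinearMap.add_apply, wall_self hd]; linarith
  obtain ⟨w, hw⟩ := exists_dom hxU
  have hpos : ∀ u, G.Root u → 0 < x u → G.PR (G.ρ w⁻¹ u) := by
    intro u hu hxu
    refine (hu.act G w⁻¹).pr.resolve_right fun h => ?_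
    have := hw _ h.nonneg
    rw [map_neg, ρ_ρ_inv, map_neg] at this
    linarith
  obtain ⟨w', -, -, -, ha⟩ := ad (K := Set.univ) (hpos g hg q1) (hpos d hd q2)
    (by rw [B_ρ]; exact hB)
  rw [← map_add, ← map_add] at ha
  rw [← G.B_ρ w⁻¹, ← G.B_ρ w', B_expand_right]
  refine Finset.sum_nonpos fun t _ => ?_
  exact mul_nonpos_of_nonneg_of_nonpos (Q_nonneg (Q_act (Q_act hy _) _) t) (ha t trivial)

end Geo
end TR

namespace TR
variable {ι W : Type*} [Fintype ι] [DecidableEq ι] [Group W] {M : CoxeterMatrix ι}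
namespace Geo
variable {cs : CoxeterSystem M W} {G : Geo cs}

theorem rf_conj (G : Geo cs) (w : W) (v : ι → ℝ) (g : W) (hg : G.ρ g = G.rf v) :
    G.ρ (w * g * w⁻¹) = G.rf (G.ρ w v) := by
  refine LinearMap.ext fun u => ?_
  rw [map_mul, map_mul, Module.End.mul_apply, Module.End.mul_apply, hg, rf_apply, rf_apply,
    map_sub, map_smul, ρ_ρ_inv]
  congr 3
  rw [← G.B_ρ w, ρ_ρ_inv]

end Geo

/-- irreducible (connected) subset of the index set -/
def Irr (M : CoxeterMatrix ι) (K : Set ι) : Prop :=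
  K.Nonempty ∧ ∀ K1 ⊆ K, K1.Nonempty → (∀ i ∈ K1, ∀ j ∈ K, j ∉ K1 → M i j = 2) → K ⊆ K1

open Geo

/-- a linear map realising an automorphism -/
structure Pm {cs : CoxeterSystem M W} (G : Geo cs) (a : MulAut W)
    (φ : (ι → ℝ) →ₗ[ℝ] (ι → ℝ)) : Prop where
  root : ∀ s, G.Root (φ (al s))
  refl : ∀ s, G.ρ (a (cs.simple s)) = G.rf (φ (al s))

/-- isometric on a subset -/
def Iso {cs : CoxeterSystem M W} (D G : Geo cs) (φ : (ι → ℝ) →ₗ[ℝ] (ι → ℝ)) (K : Set ι) : Prop :=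
  ∀ s ∈ K, ∀ t ∈ K, G.B (φ (al s)) (φ (al t)) = D.k s t

def Can {cs : CoxeterSystem M W} (D G : Geo cs) (φ : (ι → ℝ) →ₗ[ℝ] (ι → ℝ)) (K : Set ι) (ε : ℝ) :
    Prop := ∀ x ∈ G.U, {g | g ∈ D.PK K ∧ ε * x (φ g) < 0}.Finite

variable {cs : CoxeterSystem M W} {D G : Geo cs} {a : MulAut W} {φ : (ι → ℝ) →ₗ[ℝ] (ι → ℝ)}
  {K : Set ι}

theorem rf_neg_root (G : Geo cs) (v : ι → ℝ) : G.rf (-v) = G.rf v := by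
  refine LinearMap.ext fun u => ?_
  rw [rf_apply, rf_apply, map_neg, smul_neg, mul_neg, neg_smul, neg_neg]

theorem Pm.neg (P : Pm G a φ) : Pm G a (-φ) where
  root s := (P.root s).neg
  refl s := by rw [LinearMap.neg_apply, rf_neg_root]; exact P.refl s

theorem Iso.neg (h : Iso D G φ K) : Iso D G (-φ) K := by
  intro s hs t ht
  simpa using h s hs t ht

theorem Iso.mono {L : Set ι} (h : Iso D G φ L) (hKL : K ⊆ L) : Iso D G φ K :=
  fun s hs t ht => h s (hKL hs) t (hKL ht)

theorem Sup.sum_apply {v : ι → ℝ} (f : ι → ℝ) : ∑ s, v s * f s = ∑ s, v s * f s := rfl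

theorem Iso.eq_al (h : Iso D G φ K) {u : ι → ℝ} (hu : Sup K u) {t : ι} (ht : t ∈ K) :
    G.B (φ u) (φ (al t)) = D.B u (al t) := by
  conv_lhs => rw [sum_al u]
  rw [map_sum, map_sum, LinearMap.sum_apply, B_al_right]
  refine Finset.sum_congr rfl fun s _ => ?_
  by_cases hs : s ∈ K
  · simp [h s hs t ht]
  · simp [hu s hs]

theorem Iso.eq (h : Iso D G φ K) {u v : ι → ℝ} (hu : Sup K u) (hv : Sup K v) :
    G.B (φ u) (φ v) = D.B u v := by
  conv_lhs => rw [sum_al v]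
  rw [map_sum, map_sum, D.B_expand_right]
  refine Finset.sum_congr rfl fun s _ => ?_
  by_cases hs : s ∈ K
  · rw [map_smul, map_smul, smul_eq_mul, h.eq_al hu hs]
  · simp [hv s hs]

theorem Pm.act (P : Pm G a φ) (h : Iso D G φ K) {w : W} (hw : w ∈ WP cs K) :
    ∀ {v : ι → ℝ}, Sup K v → φ (D.ρ w v) = G.ρ (a w) (φ v) := by
  refine WP_induction D (P := fun w => ∀ {v : ι → ℝ}, Sup K v → φ (D.ρ w v) = G.ρ (a w) (φ v))
    ?_ ?_ w hw
  · intro v _; simp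
  · intro w hw s hs _ _ ih v hv
    rw [map_mul, map_mul, map_mul, Module.End.mul_apply, Module.End.mul_apply, ρ_simple, P.refl,
      ih (Geo.Sup.rf_al hs hv), rf_apply, rf_apply, map_sub, map_smul, h.eq_al hv hs]

theorem Pm.refl_PK (P : Pm G a φ) (h : Iso D G φ K) {v : ι → ℝ} (hv : v ∈ D.PK K) :
    ∃ r ∈ WP cs K, D.ρ r = D.rf v ∧ G.ρ (a r) = G.rf (φ v) := by
  obtain ⟨w, hw, s, hs, rfl⟩ := PK_orbit hv
  refine ⟨w * cs.simple s * w⁻¹, mul_mem (mul_mem hw (simple_mem_WP cs hs)) (inv_mem hw),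
    rf_conj D w _ _ (D.ρ_simple s), ?_⟩
  rw [P.act h hw (sup_al hs), map_mul a, map_mul a, map_inv a]
  exact rf_conj G _ _ _ (P.refl s)

theorem Pm.root_PK (P : Pm G a φ) (h : Iso D G φ K) {v : ι → ℝ} (hv : v ∈ D.PK K) :
    G.Root (φ v) := by
  obtain ⟨w, hw, s, hs, rfl⟩ := PK_orbit hv
  rw [P.act h hw (sup_al hs)]
  exact (P.root s).act G _

theorem Pm.inj (P : Pm G a φ) (h : Iso D G φ K) {u v : ι → ℝ} (hu : u ∈ D.PK K) (hv : v ∈ D.PK K)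
    (he : φ u = φ v ∨ φ u = - φ v) : u = v := by
  obtain ⟨r, _, h1, h2⟩ := P.refl_PK h hu
  obtain ⟨r', _, h1', h2'⟩ := P.refl_PK h hv
  have e : G.rf (φ u) = G.rf (φ v) := by
    rcases he with he | he
    · rw [he]
    · rw [he, rf_neg_root]
  rw [← h2, ← h2'] at e
  have e2 : r = r' := a.injective (ρ_inj e)
  rw [e2, h1'] at h1
  rcases rf_inj hv.1.root hu.1.root h1 with h3 | h3
  · exact h3.symm
  · rw [h3] at hv
    exact (hu.1.not_neg hv.1).elim

theorem Pm.sum_ne (P : Pm G a φ) (h : Iso D G φ K) {u v : ι → ℝ} (hu : u ∈ D.PK K)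
    (hv : v ∈ D.PK K) (hB : D.B u v ≤ -1) : φ u + φ v ≠ 0 := by
  intro h0
  have := P.inj h hu hv (Or.inr (eq_neg_of_add_eq_zero_left h0))
  rw [this, hv.1.root.norm] at hB
  linarith

theorem Pm.hypQ (P : Pm G a φ) (h : Iso D G φ K) {u v : ι → ℝ} (hu : u ∈ D.PK K)
    (hv : v ∈ D.PK K) (hB : D.B u v ≤ -1) : φ u + φ v ∈ G.Q ∨ -(φ u + φ v) ∈ G.Q :=
  hyp_Q (P.root_PK h hu) (P.root_PK h hv) (by rw [h.eq hu.2 hv.2]; exact hB) (P.sum_ne h hu hv hB)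

/-- positivity spreads along noncommuting edges -/
theorem B_al_neg {y : ι → ℝ} (hy : ∀ s, 0 ≤ y s) {s t : ι} (hs : y s = 0) (ht : 0 < y t)
    (hM : M t s ≠ 2) : D.B y (al s) < 0 := by
  have hne : t ≠ s := by rintro rfl; linarith
  rw [B_al_right]
  refine Finset.sum_neg' (fun i _ => ?_) ⟨t, Finset.mem_univ _, ?_⟩
  · by_cases hi : i = s
    · rw [hi, hs, zero_mul]
    · exact mul_nonpos_of_nonneg_of_nonpos (hy i) (D.k_le_zero hi)
  · refine mul_neg_of_pos_of_neg ht (lt_of_le_of_ne (D.k_le_zero hne) ?_)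
    rw [Ne, D.k_eq_zero_iff hne]
    exact hM

theorem full_of_perp (hI : Irr M K) {y : ι → ℝ} (hy : ∀ s, 0 ≤ y s) (hK : Sup K y)
    (hB : ∀ s ∈ K, 0 ≤ D.B y (al s)) {t : ι} (ht : 0 < y t) {s : ι} (hs : s ∈ K) : 0 < y s := by
  have htK : t ∈ K := by
    by_contra h; rw [hK t h] at ht; linarith
  refine (hI.2 {s | s ∈ K ∧ 0 < y s} (fun s h => h.1) ⟨t, htK, ht⟩ ?_ hs).2
  rintro i ⟨hi, hyi⟩ j hj hj'
  by_contra hM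
  have hj0 : y j = 0 := le_antisymm (not_lt.mp fun h => hj' ⟨hj, h⟩) (hy j)
  have := B_al_neg (D := D) hy hj0 hyi hM
  linarith [hB j hj]

theorem anti_perp (hI : Irr M K) {z z' : ι → ℝ} (hz : ∀ s, 0 ≤ z s) (hzK : Sup K z)
    (hz1 : ∀ s ∈ K, D.B z (al s) ≤ 0) {t : ι} (ht : 0 < z t)
    (hz' : Sup K z') (hz'1 : ∀ s ∈ K, D.B z' (al s) ≤ 0)
    (hpos : ∀ w ∈ WP cs K, 0 ≤ D.B (D.ρ w z) z') : ∀ s ∈ K, D.B z' (al s) = 0 := by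
  have hnn : ∀ w ∈ WP cs K, ∀ s, 0 ≤ D.ρ w z s := fun w hw s => by
    have := anti_cone hz1 w hw s
    rw [Pi.sub_apply] at this
    linarith [hz s]
  have key : ∀ w ∈ WP cs K, ∀ s ∈ K, 0 < D.ρ w z s → D.B z' (al s) = 0 := by
    intro w hw s hs hp
    refine le_antisymm (hz'1 s hs) ?_
    by_contra hc
    push Not at hc
    have h1 := hpos w hw
    rw [B_comm, B_expand_right] at h1
    have : ∑ t, D.ρ w z t * D.B z' (al t) < 0 := by
      refine Finset.sum_neg' (fun i _ => ?_) ⟨s, Finset.mem_univ _, mul_neg_of_pos_of_neg hp hc⟩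
      by_cases hi : i ∈ K
      · exact mul_nonpos_of_nonneg_of_nonpos (hnn w hw i) (hz'1 i hi)
      · rw [Sup.ρ hw hzK i hi, zero_mul]
    linarith
  have htK : t ∈ K := by
    by_contra h; rw [hzK t h] at ht; linarith
  have hall := hI.2 {s | s ∈ K ∧ ∃ w ∈ WP cs K, 0 < D.ρ w z s} (fun s h => h.1)
    ⟨t, htK, 1, one_mem _, by simpa using ht⟩ (by
      rintro i ⟨hi, w, hw, hwi⟩ j hj hj'
      by_contra hM
      apply hj'
      have hj0 : D.ρ w z j = 0 := le_antisymm (not_lt.mp fun h => hj' ⟨hj, w, hw, h⟩) (hnn w hw j)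
      have hneg := B_al_neg (D := D) (hnn w hw) hj0 hwi hM
      refine ⟨hj, cs.simple j * w, mul_mem (simple_mem_WP cs hj) hw, ?_⟩
      rw [map_mul, Module.End.mul_apply, ρ_simple, rf_apply, Pi.sub_apply, hj0, Pi.smul_apply,
        al_self, smul_eq_mul]
      linarith)
  intro s hs
  obtain ⟨_, w, hw, h⟩ := hall hs
  exact key w hw s hs h

/-- all hyperbolic pairs have the same sign -/
theorem Pm.hyp_same (P : Pm G a φ) (h : Iso D G φ K) (hI : Irr M K) {u v u' v' : ι → ℝ}
    (hu : u ∈ D.PK K) (hv : v ∈ D.PK K) (hB : D.B u v ≤ -1)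
    (hu' : u' ∈ D.PK K) (hv' : v' ∈ D.PK K) (hB' : D.B u' v' ≤ -1)
    (hQ : φ u + φ v ∈ G.Q) (hQ' : -(φ u' + φ v') ∈ G.Q) : False := by
  obtain ⟨w, hw, p1, p2, p3⟩ := ad (K := K) hu.1 hv.1 hB
  obtain ⟨w', hw', p1', p2', p3'⟩ := ad (K := K) hu'.1 hv'.1 hB'
  have m1 : D.ρ w u ∈ D.PK K := ⟨p1, Sup.ρ hw hu.2⟩
  have m2 : D.ρ w v ∈ D.PK K := ⟨p2, Sup.ρ hw hv.2⟩
  have m1' : D.ρ w' u' ∈ D.PK K := ⟨p1', Sup.ρ hw' hu'.2⟩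
  have m2' : D.ρ w' v' ∈ D.PK K := ⟨p2', Sup.ρ hw' hv'.2⟩
  set g := D.ρ w u with hg
  set d := D.ρ w v with hd
  set g' := D.ρ w' u' with hg'
  set d' := D.ρ w' v' with hd'
  have q1 : φ (g + d) ∈ G.Q := by
    rw [hg, hd, ← map_add, P.act h hw (hu.2.add hv.2), map_add]
    exact Q_act hQ _
  have q1' : -φ (g' + d') ∈ G.Q := by
    rw [hg', hd', ← map_add, P.act h hw' (hu'.2.add hv'.2), ← map_neg, map_add φ]
    exact Q_act hQ' _
  have b1 : D.B g d ≤ -1 := by rw [hg, hd, B_ρ]; exact hB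
  have b1' : D.B g' d' ≤ -1 := by rw [hg', hd', B_ρ]; exact hB'
  have sz : Sup K (g + d) := m1.2.add m2.2
  have sz' : Sup K (g' + d') := m1'.2.add m2'.2
  have nz : ∀ s, 0 ≤ (g + d) s := fun s => add_nonneg (p1.nonneg s) (p2.nonneg s)
  have nz' : ∀ s, 0 ≤ (g' + d') s := fun s => add_nonneg (p1'.nonneg s) (p2'.nonneg s)
  obtain ⟨t, ht⟩ := p1.exists_pos
  obtain ⟨t', ht'⟩ := p1'.exists_pos
  have tz : 0 < (g + d) t := by rw [Pi.add_apply]; linarith [p2.nonneg t]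
  have tz' : 0 < (g' + d') t' := by rw [Pi.add_apply]; linarith [p2'.nonneg t']
  -- positivity of the form
  have main : ∀ w ∈ WP cs K, 0 ≤ D.B (D.ρ w (g + d)) (g' + d') := by
    intro x hx
    have qx : φ (D.ρ x (g + d)) ∈ G.Q := by rw [P.act h hx sz]; exact Q_act q1 _
    have e : φ (D.ρ x (g + d)) = G.ρ (a x) (φ g) + G.ρ (a x) (φ d) := by
      rw [P.act h hx sz, map_add, map_add]
    have h3 := pp (G := G) (g := G.ρ (a x) (φ g)) (d := G.ρ (a x) (φ d)) (y := -φ (g' + d'))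
      ((P.root_PK h m1).act G _) ((P.root_PK h m2).act G _)
      (by rw [B_ρ, h.eq m1.2 m2.2]; exact b1) (by rw [← e]; exact qx) q1'
    rw [← e, map_neg, h.eq (Sup.ρ hx sz) sz'] at h3
    linarith
  have main' : ∀ w ∈ WP cs K, 0 ≤ D.B (D.ρ w (g' + d')) (g + d) := by
    intro x hx
    have := main x⁻¹ (inv_mem hx)
    rw [← D.B_ρ x, ρ_ρ_inv, B_comm] at this
    exact this
  have r' := anti_perp hI nz sz p3 tz sz' p3' main
  have r := anti_perp hI nz' sz' p3' tz' sz p3 main'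
  have f := fun s (hs : s ∈ K) => full_of_perp (D := D) hI nz sz (fun s hs => (r s hs).ge) tz hs
  obtain ⟨i, hi, hmin⟩ := Set.exists_min_image K (fun s => (g' + d') s / (g + d) s)
    (Set.toFinite K) hI.1
  set c := (g' + d') i / (g + d) i with hc
  have hc0 : 0 ≤ c := div_nonneg (nz' i) (nz i)
  set y := (g' + d') - c • (g + d) with hy
  have yK : Sup K y := by
    have := sz'.add ((sz.smul c).neg)
    rw [hy, sub_eq_add_neg]; exact this
  have yi : y i = 0 := by
    have := f i hi
    simp only [hy, Pi.sub_apply, Pi.smul_apply, smul_eq_mul, hc]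
    field_simp
    ring
  have yn : ∀ s, 0 ≤ y s := by
    intro s
    by_cases hs : s ∈ K
    · have h1 := hmin s hs
      have h2 := f s hs
      rw [le_div_iff₀ h2] at h1
      simp only [hy, Pi.sub_apply, Pi.smul_apply, smul_eq_mul]
      linarith
    · rw [yK s hs]
  have yB : ∀ s ∈ K, 0 ≤ D.B y (al s) := by
    intro s hs
    simp only [hy, map_sub, map_smul, LinearMap.sub_apply, LinearMap.smul_apply, r s hs, r' s hs]
    simp
  have y0 : y = 0 := by
    by_contra hne
    obtain ⟨s, hs⟩ := Function.ne_iff.mp hne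
    have : 0 < y s := lt_of_le_of_ne (yn s) (Ne.symm hs)
    have := full_of_perp (D := D) hI yn yK yB this hi
    linarith
  have ez : g' + d' = c • (g + d) := sub_eq_zero.mp y0
  have e1 := q1 _ ht_mem_U
  have e2 := q1' _ ht_mem_U
  rw [ez, map_smul, map_neg, map_smul, smul_eq_mul] at e2
  nlinarith [mul_nonneg hc0 e1.le]

theorem Pm.can_pos (P : Pm G a φ) (h : Iso D G φ K)
    (hQ : ∀ u ∈ D.PK K, ∀ v ∈ D.PK K, D.B u v ≤ -1 → φ u + φ v ∈ G.Q) : Can D G φ K 1 := by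
  intro x hx
  set N := {g | g ∈ D.PK K ∧ G.PR (-(φ g))} with hN
  have injN : Set.InjOn (fun g => φ g) (D.PK K) := fun u hu v hv e => P.inj h hu hv (Or.inl e)
  suffices hNf : N.Finite by
    have h1 : {g | g ∈ D.PK K ∧ (G.PR (φ g) ∧ x (φ g) ≤ 0)}.Finite := by
      refine Set.Finite.of_finite_image (f := fun g => φ g) (Set.Finite.subset hx ?_)
        (injN.mono fun g hg => hg.1)
      rintro _ ⟨g, hg, rfl⟩
      exact hg.2
    refine (h1.union hNf).subset ?_
    rintro g ⟨hg, hlt⟩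
    rw [one_mul] at hlt
    rcases (P.root_PK h hg).pr with h2 | h2
    · exact Or.inl ⟨hg, h2, hlt.le⟩
    · exact Or.inr ⟨hg, h2⟩
  by_contra hinf
  have hinf : N.Infinite := hinf
  have neg_ht : ∀ g ∈ N, ht (φ g) < 0 := fun g hg => by
    have := hg.2.ht_ge
    rw [map_neg] at this
    linarith
  have ha : ∀ g ∈ N, ∀ d ∈ N, -1 < D.B g d := by
    intro g hg d hd
    by_contra hc
    have := hQ g hg.1 d hd.1 (not_lt.mp hc) _ ht_mem_U
    rw [map_add] at this
    linarith [neg_ht g hg, neg_ht d hd]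
  have hb : ∀ g ∈ N, {d | d ∈ N ∧ 1 ≤ D.B g d}.Finite := by
    intro g hg
    obtain ⟨w, hw, s, hs, e⟩ := PK_orbit hg.1
    have f1 : {d | d ∈ D.Inv w⁻¹}.Finite := inv_finite _
    have f2 : {d | d ∈ N ∧ ht (-(φ d)) ≤ ht (-(φ g))}.Finite := by
      refine Set.Finite.of_finite_image (f := fun d => -φ d)
        (Set.Finite.subset (ht_finite G (ht (-(φ g)))) ?_) ?_
      · rintro _ ⟨d, hd, rfl⟩
        exact ⟨hd.1.2, hd.2⟩
      · intro u hu v hv e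
        exact injN hu.1.1 hv.1.1 (neg_injective e)
    refine ((f1.union f2)).subset ?_
    rintro d ⟨hd, hB⟩
    by_cases hdg : d = g
    · rw [hdg]; exact Or.inr ⟨hg, le_refl _⟩
    rcases (hd.1.1.root.act D w⁻¹).pr with h1 | h1
    · right
      refine ⟨hd, ?_⟩
      have hne : D.ρ w⁻¹ d ≠ al s := by
        intro h2; apply hdg; rw [e, ← h2, ρ_ρ_inv]
      have h3 := h1.simple hne
      have sd : Sup K (D.ρ w⁻¹ d) := Sup.ρ (inv_mem hw) hd.1.2
      have m3 : D.rf (al s) (D.ρ w⁻¹ d) ∈ D.PK K := ⟨h3, Geo.Sup.rf_al hs sd⟩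
      have mal : al s ∈ D.PK K := ⟨D.pr_al s, sup_al hs⟩
      have h4 : D.B (D.rf (al s) (D.ρ w⁻¹ d)) (al s) ≤ -1 := by
        have h5 : D.B (D.ρ w⁻¹ d) (al s) = D.B g d := by
          rw [e, ← D.B_ρ w, ρ_ρ_inv, B_comm]
        have h6 := D.B_rf (g := al s) (by simp [k_self]) (D.ρ w⁻¹ d) (al s)
        rw [rf_self _ (by simp [k_self]), map_neg] at h6
        linarith
      have q := hQ _ m3 _ mal h4
      have q2 := Q_act q (a (w * cs.simple s))
      have hws : w * cs.simple s ∈ WP cs K := mul_mem hw (simple_mem_WP cs hs)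
      rw [← map_add, ← P.act h hws (m3.2.add mal.2), map_add, map_mul, Module.End.mul_apply,
        Module.End.mul_apply, ρ_simple, rf_al_rf, ρ_ρ_inv, rf_self _ (by simp [k_self]), map_neg,
        ← e] at q2
      have := q2 _ ht_mem_U
      simp only [map_add, map_neg] at this ⊢
      linarith
    · exact Or.inl ⟨hd.1.1, h1⟩
  have hb' : ∀ g ∈ N, {d | d ∈ N ∧ ¬ |D.B g d| < 1}.Finite := by
    intro g hg
    refine (hb g hg).subset ?_
    rintro d ⟨hd, h1⟩
    refine ⟨hd, ?_⟩
    by_contra h2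
    exact h1 (abs_lt.mpr ⟨ha g hg d hd, not_le.mp h2⟩)
  obtain ⟨b, hbN, hspan, hli⟩ := exists_linearIndependent ℝ N
  have hbf : b.Finite := hli.setFinite
  set N2 := {d | d ∈ N ∧ ∀ t ∈ b, |D.B t d| < 1} with hN2
  have hN2inf : N2.Infinite := by
    intro hf
    apply hinf
    have : (⋃ t ∈ b, {d | d ∈ N ∧ ¬ |D.B t d| < 1}).Finite :=
      hbf.biUnion fun t ht => hb' t (hbN ht)
    refine (hf.union this).subset ?_
    intro d hd
    by_cases hc : ∀ t ∈ b, |D.B t d| < 1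
    · exact Or.inl ⟨hd, hc⟩
    · push Not at hc
      obtain ⟨t, ht, h1⟩ := hc
      exact Or.inr (Set.mem_biUnion ht ⟨hd, not_lt.mpr h1⟩)
  have : Finite b := hbf
  have hpi : (Set.pi Set.univ (fun _ : b => D.FV)).Finite := Set.Finite.pi fun _ => FV_finite
  obtain ⟨y, hyinf⟩ : ∃ y, {d | d ∈ N2 ∧ (fun t : b => D.B t d) = y}.Infinite := by
    by_contra hc
    push Not at hc
    apply hN2inf
    have := hpi.biUnion fun y _ => hc y
    refine this.subset fun d hd => Set.mem_biUnion (x := fun t : b => D.B t d) ?_ ⟨hd, rfl⟩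
    intro t _
    exact ell_mem_FV (hbN t.2).1.1.root hd.1.1.1.root (hd.2 t t.2)
  obtain ⟨d, hd⟩ := hyinf.nonempty
  obtain ⟨d', hd', hd'2⟩ := (hyinf.diff (hb' d hd.1.1)).nonempty
  have hlt : |D.B d d'| < 1 := by
    by_contra hc
    exact hd'2 ⟨hd'.1.1, hc⟩
  have hperp : ∀ t ∈ b, D.B t (d - d') = 0 := by
    intro t ht
    have e1 := congrFun hd.2 ⟨t, ht⟩
    have e2 := congrFun hd'.2 ⟨t, ht⟩
    simp only at e1 e2
    rw [map_sub, e1, e2, sub_self]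
  have hker : N ⊆ (LinearMap.ker (D.B.flip (d - d')) : Set (ι → ℝ)) := by
    have : Submodule.span ℝ b ≤ LinearMap.ker (D.B.flip (d - d')) := by
      rw [Submodule.span_le]
      intro t ht
      simpa using hperp t ht
    rw [hspan] at this
    exact (Submodule.subset_span).trans this
  have h0 : D.B d (d - d') = 0 := by simpa using hker hd.1.1
  rw [map_sub, hd.1.1.1.1.root.norm] at h0
  have : D.B d d' = 1 := by linarith
  rw [this] at hlt
  norm_num at hlt

theorem Pm.exists_can (P : Pm G a φ) (h : Iso D G φ K) (hI : Irr M K) :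
    ∃ ε : ℝ, (ε = 1 ∨ ε = -1) ∧ Can D G φ K ε := by
  by_cases hneg : ∃ u ∈ D.PK K, ∃ v ∈ D.PK K, D.B u v ≤ -1 ∧ -(φ u + φ v) ∈ G.Q
  · obtain ⟨u, hu, v, hv, hB, hQ⟩ := hneg
    refine ⟨-1, Or.inr rfl, ?_⟩
    have := P.neg.can_pos h.neg (fun u' hu' v' hv' hB' => by
      rcases P.hypQ h hu' hv' hB' with h1 | h1
      · exact (P.hyp_same h hI hu' hv' hB' hu hv hB h1 hQ).elim
      · simpa [neg_add, add_comm] using h1)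
    intro x hx
    simpa using this x hx
  · push Not at hneg
    refine ⟨1, Or.inl rfl, P.can_pos h fun u hu v hv hB => ?_⟩
    rcases P.hypQ h hu hv hB with h1 | h1
    · exact h1
    · exact (hneg u hu v hv hB h1).elim

end TR

namespace TR
open Geo
variable {ι W : Type*} [Fintype ι] [DecidableEq ι] [Group W] {M : CoxeterMatrix ι}
variable {cs : CoxeterSystem M W} {D G : Geo cs} {a : MulAut W} {φ : (ι → ℝ) →ₗ[ℝ] (ι → ℝ)}

def FinT (M : CoxeterMatrix ι) (X : Set ι) : Prop := ∀ s ∈ X, ∀ t ∈ X, M s t ≠ 0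

def Sph (cs : CoxeterSystem M W) (X : Set ι) : Prop := (WP cs X : Set W).Finite

/-- the vertices outside `J ∪ J⊥` -/
def MX (M : CoxeterMatrix ι) (J : Set ι) : Set ι := {m | m ∉ J ∧ ∃ j ∈ J, M j m ≠ 2}

def Twist (cs : CoxeterSystem M W) : Prop := ∀ J : Set ι, Irr M J → Sph cs J → ∀ p ∈ MX M J,
  ∀ q ∈ MX M J, Relation.ReflTransGen (fun x y => x ∈ MX M J ∧ y ∈ MX M J ∧ M x y ≠ 0) p q

structure Ctx (D G : Geo cs) (a : MulAut W) (φ : (ι → ℝ) →ₗ[ℝ] (ι → ℝ)) : Prop where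
  P : Pm G a φ
  fin : ∀ s t, M s t ≠ 0 → G.B (φ (al s)) (φ (al t)) = D.k s t

theorem Ctx.iso (C : Ctx D G a φ) {X : Set ι} (hX : FinT M X) : Iso D G φ X :=
  fun s hs t ht => C.fin s t (hX s hs t ht)

theorem PR.sum_ne_zero {u v : ι → ℝ} (hu : D.PR u) (hv : D.PR v) : u + v ≠ 0 := by
  intro h
  rw [eq_neg_of_add_eq_zero_left h] at hu
  exact hv.not_neg hu

/-- two reflections generating an infinite dihedral group have no common fixed point in `U` -/
theorem nz_gen (a : MulAut W) {u v u' v' : ι → ℝ} {r r' : W} (hu : D.PR u) (hv : D.PR v)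
    (hB : D.B u v ≤ -1) (h1 : D.ρ r = D.rf u) (h2 : D.ρ r' = D.rf v)
    (h3 : G.ρ (a r) = G.rf u') (h4 : G.ρ (a r') = G.rf v')
    {x : (ι → ℝ) →ₗ[ℝ] ℝ} (hx : x ∈ G.U) (hxu : x u' = 0) (hxv : x v' = 0) : False := by
  have hfix : ∀ w ∈ Subgroup.closure {r, r'}, x ∘ₗ G.ρ (a w) = x := by
    intro w hw
    induction hw using Subgroup.closure_induction with
    | mem w hw =>
      rcases hw with rfl | rfl
      · rw [h3]; refine LinearMap.ext fun y => ?_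
        rw [LinearMap.comp_apply, rf_apply]; simp [hxu]
      · rw [h4]; refine LinearMap.ext fun y => ?_
        rw [LinearMap.comp_apply, rf_apply]; simp [hxv]
    | one => refine LinearMap.ext fun y => ?_; simp
    | mul p q _ _ hp hq =>
      refine LinearMap.ext fun y => ?_
      have e1 := LinearMap.congr_fun hp (G.ρ (a q) y)
      have e2 := LinearMap.congr_fun hq y
      simp only [LinearMap.comp_apply, map_mul, Module.End.mul_apply] at *
      rw [e1, e2]
    | inv p _ hp =>
      refine LinearMap.ext fun y => ?_
      have e1 := LinearMap.congr_fun hp (G.ρ (a p)⁻¹ y)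
      simp only [LinearMap.comp_apply, map_inv, ρ_ρ_inv] at *
      exact e1.symm
  have hfin : ((Subgroup.closure {r, r'} : Subgroup W) : Set W).Finite := by
    refine Set.Finite.of_finite_image (f := fun w => a w) ((stab_finite hx).subset ?_)
      a.injective.injOn
    rintro _ ⟨w, hw, rfl⟩
    exact hfix w hw
  obtain ⟨y, hy, hyf⟩ := D.exists_fixed _ hfin
  have e1 : y u = 0 := fixed_zero hu.root (by
    rw [← h1]; exact hyf r (Subgroup.subset_closure (by simp)))
  have e2 : y v = 0 := fixed_zero hv.root (by
    rw [← h2]; exact hyf r' (Subgroup.subset_closure (by simp)))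
  exact no_common_zero hu.root hv.root hB (PR.sum_ne_zero hu hv) hy e1 e2

theorem not_sph {Y : Set ι} {u v : ι → ℝ} (hu : u ∈ D.PK Y) (hv : v ∈ D.PK Y)
    (hB : D.B u v ≤ -1) : ¬ Sph cs Y := by
  intro hs
  obtain ⟨y, hy, hyf⟩ := D.exists_fixed _ hs
  have key : ∀ u ∈ D.PK Y, y u = 0 := by
    intro u hu
    obtain ⟨w, hw, s, hs, e⟩ := PK_orbit hu
    refine fixed_zero hu.1.root ?_
    rw [e, ← rf_conj D w _ _ (D.ρ_simple s)]
    exact hyf _ (mul_mem (mul_mem hw (simple_mem_WP cs hs)) (inv_mem hw))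
  exact no_common_zero hu.1.root hv.1.root hB (PR.sum_ne_zero hu.1 hv.1) hy (key u hu) (key v hv)

theorem al_PK {X : Set ι} {s : ι} (hs : s ∈ X) : al s ∈ D.PK X := ⟨D.pr_al s, sup_al hs⟩

theorem sph_fin (D : Geo cs) {X : Set ι} (h : Sph cs X) : FinT M X := by
  intro s hs t ht h0
  exact not_sph (D := D) (al_PK hs) (al_PK ht) (by simpa using D.inf s t h0) h

theorem Sph.mono {X Y : Set ι} (h : Sph cs Y) (hXY : X ⊆ Y) : Sph cs X :=
  Set.Finite.subset h (WP_mono cs hXY)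

theorem M_ne {s t : ι} (h : M s t ≠ 1) : s ≠ t := by
  rintro rfl; exact h (M.diagonal s)

theorem FinT.mono {X Y : Set ι} (h : FinT M Y) (hXY : X ⊆ Y) : FinT M X :=
  fun s hs t ht => h s (hXY hs) t (hXY ht)

theorem Irr.insert {X : Set ι} (h : Irr M X) {c : ι} (hc : c ∈ MX M X) : Irr M (insert c X) := by
  obtain ⟨hcX, j, hj, hjc⟩ := hc
  refine ⟨⟨c, Set.mem_insert _ _⟩, fun K1 hK1 hne hperp => ?_⟩
  by_cases hX : (K1 ∩ X).Nonempty
  · have h1 : X ⊆ K1 ∩ X := h.2 _ Set.inter_subset_right hX (fun i hi k hk hk' =>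
      hperp i hi.1 k (Or.inr hk) fun h' => hk' ⟨h', hk⟩)
    have h2 : X ⊆ K1 := fun i hi => (h1 hi).1
    refine Set.insert_subset ?_ h2
    by_contra hc
    exact hjc (hperp j (h2 hj) c (Or.inl rfl) hc)
  · exfalso
    have hjK : j ∉ K1 := fun h' => hX ⟨j, h', hj⟩
    obtain ⟨i, hi⟩ := hne
    rcases hK1 hi with rfl | hiX
    · exact hjc (by rw [M.symmetric]; exact hperp _ hi j (Or.inr hj) hjK)
    · exact hX ⟨i, hi, hiX⟩

/-- existence of noncommuting neighbours -/
theorem Irr.exists_nbr {Y X : Set ι} (h : Irr M Y) (hX : X.Nonempty) (hXY : X ⊆ Y)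
    (hne : ¬ Y ⊆ X) : ∃ c ∈ Y, c ∈ MX M X := by
  by_contra hc
  push Not at hc
  refine hne (h.2 X hXY hX fun i hi j hj hj' => ?_)
  by_contra hM
  exact hc j hj ⟨hj', i, hi, hM⟩

theorem PR.ge_one {v : ι → ℝ} (hv : D.PR v) {s : ι} (h : 0 < v s) : 1 ≤ v s := by
  rcases hv.2 s with h1 | h1
  · linarith
  · exact h1

theorem inf_hyp {g : ι → ℝ} (hg : D.PR g) {v z : ι} (hv : g v = 0) (hM : M z v = 0)
    (hz : 0 < g z) : D.B g (al v) ≤ -1 := by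
  have h1 := TR.PR.ge_one hg hz
  have h2 := D.inf z v hM
  rw [B_al_right]
  have : ∑ s, g s * D.k s v ≤ ∑ s, if s = z then g z * D.k z v else 0 := by
    refine Finset.sum_le_sum fun s _ => ?_
    by_cases hs : s = z
    · simp [hs]
    · rw [if_neg hs]
      by_cases hsv : s = v
      · rw [hsv, hv, zero_mul]
      · exact mul_nonpos_of_nonneg_of_nonpos (hg.nonneg s) (D.k_le_zero hsv)
  rw [Finset.sum_ite_eq' Finset.univ z] at this
  simp only [Finset.mem_univ, if_true] at this
  nlinarith

/-- positive roots with support exactly `X` -/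
def Full (D : Geo cs) (X : Set ι) (g : ι → ℝ) : Prop := g ∈ D.PK X ∧ ∀ s ∈ X, 0 < g s

theorem Full.B_neg {X : Set ι} {g : ι → ℝ} (hg : Full D X g) {c : ι} (hc : c ∈ MX M X) :
    D.B g (al c) < 0 := by
  obtain ⟨hcX, j, hj, hM⟩ := hc
  exact B_al_neg hg.1.1.nonneg (hg.1.2 c hcX) (hg.2 j hj) hM

theorem Full.B_perp {X : Set ι} {g : ι → ℝ} (hg : Full D X g) {c : ι} (hcX : c ∉ X)
    (hc : c ∉ MX M X) : D.B g (al c) = 0 := by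
  rw [B_al_right]
  refine Finset.sum_eq_zero fun s _ => ?_
  by_cases hs : s ∈ X
  · have : s ≠ c := by rintro rfl; exact hcX hs
    rw [(D.k_eq_zero_iff this).mpr, mul_zero]
    by_contra hM
    exact hc ⟨hcX, s, hs, hM⟩
  · rw [hg.1.2 s hs, zero_mul]

/-- raising a full root by a simple reflection -/
theorem Full.raise {X : Set ι} {g : ι → ℝ} (hg : Full D X g) {c : ι} (hB : D.B g (al c) < 0) :
    Full D (insert c X) (D.rf (al c) g) := by
  have hne : g ≠ al c := by
    intro h; rw [h] at hB; simp [k_self] at hB; linarith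
  refine ⟨⟨hg.1.1.simple hne, Geo.Sup.rf_al (Set.mem_insert c X) (hg.1.2.mono (Set.subset_insert _ _))⟩, ?_⟩
  intro s hs
  by_cases hsc : s = c
  · rw [hsc, rf_apply, Pi.sub_apply, Pi.smul_apply, al_self, smul_eq_mul]
    linarith [hg.1.1.nonneg c]
  · rw [rf_al_apply_ne _ hsc]
    exact hg.2 s (hs.resolve_left hsc)

theorem dom_exists {X : Set ι} (hI : Irr M X) (hS : Sph cs X) {s : ι} (hs : s ∈ X) :
    ∃ θ, Full D X θ ∧ (∀ t ∈ X, 0 ≤ D.B θ (al t)) ∧ ∃ w ∈ WP cs X, θ = D.ρ w (al s) := by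
  have hf : {v | v ∈ D.PK X ∧ ∃ w ∈ WP cs X, v = D.ρ w (al s)}.Finite :=
    (PK_finite hS).subset fun v hv => hv.1
  obtain ⟨θ, ⟨h1, w, hw, h2⟩, hmax⟩ := Set.exists_max_image _ (fun v => ht v) hf
    ⟨al s, al_PK hs, 1, one_mem _, by simp⟩
  have hdom : ∀ t ∈ X, 0 ≤ D.B θ (al t) := by
    intro t ht'
    by_contra hc
    push Not at hc
    have hne : θ ≠ al t := by
      intro h; rw [h] at hc; simp [k_self] at hc; linarith
    have := hmax (D.rf (al t) θ) ⟨⟨h1.1.simple hne, Geo.Sup.rf_al ht' h1.2⟩,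
      cs.simple t * w, mul_mem (simple_mem_WP cs ht') hw, by
        rw [map_mul, Module.End.mul_apply, ← h2, ρ_simple]⟩
    simp only [ht_rf_al] at this
    linarith
  obtain ⟨i, hi⟩ := h1.1.exists_pos
  exact ⟨θ, ⟨h1, fun t ht => full_of_perp (D := D) hI h1.1.nonneg h1.2 hdom
    (lt_of_lt_of_le one_pos hi) ht⟩, hdom, w, hw, h2⟩

theorem Ctx.nz (C : Ctx D G a φ) {X : Set ι} (hX : FinT M X) {g : ι → ℝ} (hg : g ∈ D.PK X) {v : ι}
    (hB : D.B g (al v) ≤ -1) {x : (ι → ℝ) →ₗ[ℝ] ℝ} (hx : x ∈ G.U) (hxv : x (φ (al v)) = 0) :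
    x (φ g) ≠ 0 := by
  intro h
  obtain ⟨r, _, h1, h2⟩ := C.P.refl_PK (C.iso hX) hg
  exact nz_gen a hg.1 (D.pr_al v) hB h1 (D.ρ_simple v) h2 (C.P.refl v) hx h hxv

theorem Ctx.const (C : Ctx D G a φ) {X : Set ι} (hX : FinT M X) {g : ι → ℝ} (hg : g ∈ D.PK X)
    {v : ι} (hB : D.B g (al v) ≤ -1) {x y : (ι → ℝ) →ₗ[ℝ] ℝ} (hx : x ∈ G.U)
    (hxv : x (φ (al v)) = 0) (hy : y ∈ G.U) (hyv : y (φ (al v)) = 0) {ε : ℝ}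
    (h : 0 < ε * x (φ g)) : 0 < ε * y (φ g) := by
  by_contra hc
  have hne := C.nz hX hg hB hy hyv
  have hε : ε ≠ 0 := by rintro rfl; simp at h
  have hlt : ε * y (φ g) < 0 := lt_of_le_of_ne (not_lt.mp hc) (mul_ne_zero hε hne)
  have hz : (-(ε * y (φ g))) • x + (ε * x (φ g)) • y ∈ G.U :=
    U_add (U_smul hx (by linarith)) (U_smul hy h)
  refine C.nz hX hg hB hz ?_ ?_
  · simp [hxv, hyv]
  · simp; ring

theorem Ctx.F1 (C : Ctx D G a φ) (v : ι) : ∃ x ∈ G.U, x (φ (al v)) = 0 :=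
  ⟨_, wall_mem ht_mem_U (C.P.root v), wall_self (C.P.root v) _⟩

theorem Ctx.F2 (C : Ctx D G a φ) {c v : ι} (hM : M c v ≠ 0) :
    ∃ x ∈ G.U, x (φ (al c)) = 0 ∧ x (φ (al v)) = 0 := by
  by_cases h : c = v
  · obtain ⟨x, hx, h1⟩ := C.F1 v
    exact ⟨x, hx, by rw [h]; exact h1, h1⟩
  · refine ell (C.P.root c) (C.P.root v) ?_
    rw [C.fin c v hM, abs_lt]
    exact ⟨D.k_lt_one h hM, by linarith [D.k_le_zero h]⟩

theorem Ctx.FL (C : Ctx D G a φ) {L : Set ι} (hL : Sph cs L) {v : ι} (hv : ∀ l ∈ L, M l v = 2) :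
    ∃ x ∈ G.U, x (φ (al v)) = 0 ∧ ∀ l ∈ L, x (φ (al l)) = 0 := by
  have hfin : (((WP cs L).map a.toMonoidHom : Subgroup W) : Set W).Finite := by
    rw [Subgroup.coe_map]; exact Set.Finite.image _ hL
  obtain ⟨x, hx, hf⟩ := G.exists_fixed _ hfin
  refine ⟨_, wall_mem hx (C.P.root v), wall_self (C.P.root v) _, fun l hl => ?_⟩
  have h1 : x (φ (al l)) = 0 := fixed_zero (C.P.root l) (by
    rw [← C.P.refl]
    exact hf _ ⟨_, simple_mem_WP cs hl, rfl⟩)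
  have hne : l ≠ v := M_ne (by rw [hv l hl]; norm_num)
  rw [wall_apply, h1, C.fin l v (by rw [hv l hl]; norm_num), (D.k_eq_zero_iff hne).mpr (hv l hl)]
  simp

def One (D G : Geo cs) (φ : (ι → ℝ) →ₗ[ℝ] (ι → ℝ)) (X : Set ι) (ε : ℝ) : Prop :=
  ∀ g, Full D X g → ∀ v, D.B g (al v) ≤ -1 → ∀ x ∈ G.U, x (φ (al v)) = 0 → 0 < ε * x (φ g)

def Good (D G : Geo cs) (φ : (ι → ℝ) →ₗ[ℝ] (ι → ℝ)) (X : Set ι) (ε : ℝ) : Prop :=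
  ∀ Y, X ⊆ Y → Irr M Y → FinT M Y → One D G φ Y ε ∧ (¬ Sph cs Y → Can D G φ Y ε)

theorem Good.mono {X Y : Set ι} {ε : ℝ} (h : Good D G φ X ε) (hXY : X ⊆ Y) : Good D G φ Y ε :=
  fun Z hZ => h Z (hXY.trans hZ)

def NW (cs : CoxeterSystem M W) (X : Set ι) : Prop :=
  ∃ Y, X ⊆ Y ∧ Irr M Y ∧ Sph cs Y ∧ MX M Y = ∅

theorem NW.mono {X Y : Set ι} (h : NW cs Y) (hXY : X ⊆ Y) : NW cs X := by
  obtain ⟨Z, h1, h2⟩ := h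
  exact ⟨Z, hXY.trans h1, h2⟩

theorem NW.good {X : Set ι} (h : NW cs X) (hX : X.Nonempty) (ε : ℝ) : Good D G φ X ε := by
  obtain ⟨Z, hXZ, hZ, hS, hM⟩ := h
  intro Y hY hI hF
  have hsub : Y ⊆ Z := by
    by_contra hne
    have : ¬ Y ⊆ Y ∩ Z := fun h => hne fun i hi => (h hi).2
    obtain ⟨c, hc, hc1, j, hj, hc2⟩ := hI.exists_nbr (X := Y ∩ Z) (hX.mono (Set.subset_inter hY hXZ))
      Set.inter_subset_left this
    have : c ∈ MX M Z := ⟨fun h => hc1 ⟨hc, h⟩, j, hj.2, hc2⟩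
    rw [hM] at this
    exact this
  refine ⟨fun g hg v hv => ?_, fun h => (h (hS.mono hsub)).elim⟩
  exfalso
  by_cases hvZ : v ∈ Z
  · exact not_sph ⟨hg.1.1, hg.1.2.mono hsub⟩ (al_PK hvZ) hv hS
  · have : D.B g (al v) = 0 := hg.B_perp (fun h => hvZ (hsub h)) (fun ⟨_, j, hj, h2⟩ => by
      have : v ∈ MX M Z := ⟨hvZ, j, hsub hj, h2⟩
      rw [hM] at this
      exact this)
    linarith

theorem Ctx.can_unique (C : Ctx D G a φ) {Y : Set ι} (hF : FinT M Y) (hS : ¬ Sph cs Y)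
    {ε ε' : ℝ} (h1 : Can D G φ Y ε) (h2 : Can D G φ Y ε') (he : ε * ε' < 0) : False := by
  apply hS
  refine WP_finite (G := D) ?_
  have h3 : {g | g ∈ D.PK Y ∧ ht (φ g) = 0}.Finite := by
    refine Set.Finite.of_finite_image (f := fun g => φ g)
      ((zero_roots_finite (G := G) ht_mem_U).subset ?_) ?_
    · rintro _ ⟨g, hg, rfl⟩
      exact ⟨C.P.root_PK (C.iso hF) hg.1, hg.2⟩
    · exact fun u hu v hv e => C.P.inj (C.iso hF) hu.1 hv.1 (Or.inl e)
  refine (((h1 _ ht_mem_U).union (h2 _ ht_mem_U)).union h3).subset fun g hg => ?_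
  by_cases e1 : ε * ht (φ g) < 0
  · exact Or.inl (Or.inl ⟨hg, e1⟩)
  by_cases e2 : ε' * ht (φ g) < 0
  · exact Or.inl (Or.inr ⟨hg, e2⟩)
  refine Or.inr ⟨hg, ?_⟩
  by_contra h0
  have := mul_nonneg (not_lt.mp e1) (not_lt.mp e2)
  have h5 : 0 < ht (φ g) * ht (φ g) := mul_self_pos.mpr h0
  nlinarith

theorem exists_max_fin {X : Set ι} (hI : Irr M X) (hF : FinT M X) :
    ∃ Y, X ⊆ Y ∧ Irr M Y ∧ FinT M Y ∧ ∀ c ∈ MX M Y, ¬ FinT M (insert c Y) := by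
  obtain ⟨Y, hY, hmax⟩ := Set.Finite.exists_maximal
    (s := {Y : Set ι | X ⊆ Y ∧ Irr M Y ∧ FinT M Y}) (Set.toFinite _) ⟨X, subset_rfl, hI, hF⟩
  refine ⟨Y, hY.1, hY.2.1, hY.2.2, fun c hc hf => hc.1 ?_⟩
  exact hmax ⟨hY.1.trans (Set.subset_insert _ _), hY.2.1.insert hc, hf⟩ (Set.subset_insert _ _)
    (Set.mem_insert _ _)

/-- a vertex whose addition is not finite type -/
theorem inf_type {X : Set ι} (hF : FinT M X) {c : ι} (h : ¬ FinT M (insert c X)) :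
    c ∉ X ∧ ∃ z ∈ X, M z c = 0 := by
  refine ⟨fun hc => h (by rwa [Set.insert_eq_of_mem hc]), ?_⟩
  by_contra hc
  push Not at hc
  apply h
  rintro s (rfl | hs) t (rfl | ht)
  · rw [M.diagonal]; norm_num
  · rw [M.symmetric]; exact hc t ht
  · exact hc s hs
  · exact hF s hs t ht

theorem Full.inf_hyp {X : Set ι} {g : ι → ℝ} (hg : Full D X g) {v z : ι} (hv : v ∉ X) (hz : z ∈ X)
    (hM : M z v = 0) : D.B g (al v) ≤ -1 :=
  TR.inf_hyp hg.1.1 (hg.1.2 v hv) hM (hg.2 z hz)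

theorem Ctx.good_unique (C : Ctx D G a φ) {X : Set ι} (hI : Irr M X) (hF : FinT M X)
    (hN : ¬ NW cs X) {ε ε' : ℝ} (h1 : Good D G φ X ε) (h2 : Good D G φ X ε') : ¬ (ε * ε' < 0) := by
  intro he
  obtain ⟨Y, hXY, hYI, hYF, hmax⟩ := exists_max_fin hI hF
  by_cases hS : Sph cs Y
  · have hne : MX M Y ≠ ∅ := fun h => hN ⟨Y, hXY, hYI, hS, h⟩
    obtain ⟨v, hv⟩ := Set.nonempty_iff_ne_empty.mpr hne
    obtain ⟨hvY, z, hz, hM⟩ := inf_type hYF (hmax v hv)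
    obtain ⟨s, hs⟩ := hYI.1
    obtain ⟨θ, hθ, _⟩ := dom_exists (D := D) hYI hS hs
    obtain ⟨x, hx, hx0⟩ := C.F1 v
    have hB := hθ.inf_hyp hvY hz hM
    have e1 := (h1 Y hXY hYI hYF).1 θ hθ v hB x hx hx0
    have e2 := (h2 Y hXY hYI hYF).1 θ hθ v hB x hx hx0
    have := mul_pos e1 e2
    nlinarith [mul_self_nonneg (x (φ θ))]
  · exact C.can_unique hYF hS ((h1 Y hXY hYI hYF).2 hS) ((h2 Y hXY hYI hYF).2 hS) he

theorem good_of {X : Set ι} (hI : Irr M X) {ε : ℝ} (h1 : One D G φ X ε)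
    (h2 : ¬ Sph cs X → Can D G φ X ε)
    (h3 : ∀ c ∈ MX M X, FinT M (insert c X) → Good D G φ (insert c X) ε) : Good D G φ X ε := by
  intro Y hXY hYI hYF
  by_cases h : Y ⊆ X
  · rw [Set.Subset.antisymm h hXY]; exact ⟨h1, h2⟩
  · obtain ⟨c, hcY, hc⟩ := hYI.exists_nbr hI.1 hXY h
    have hsub : insert c X ⊆ Y := Set.insert_subset hcY hXY
    exact h3 c hc (hYF.mono hsub) Y hsub hYI hYF

end TR

namespace TR
open Geo
variable {ι W : Type*} [Fintype ι] [DecidableEq ι] [Group W] {M : CoxeterMatrix ι}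
variable {cs : CoxeterSystem M W} {D G : Geo cs} {a : MulAut W} {φ : (ι → ℝ) →ₗ[ℝ] (ι → ℝ)}

theorem fix_of_perp {K : Set ι} {v : ι → ℝ} (h : ∀ q ∈ K, D.B v (al q) = 0) :
    ∀ w ∈ WP cs K, D.ρ w v = v := by
  refine WP_induction D (by simp) ?_
  intro w hw s hs _ _ ih
  rw [map_mul, Module.End.mul_apply, ρ_simple, rf_apply, h s hs]
  simp [ih]

theorem Ctx.hyp_can (C : Ctx D G a φ) {Y : Set ι} (hF : FinT M Y) {u : ι → ℝ} (hu : u ∈ D.PK Y)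
    {v : ι} (hv : v ∈ Y) (hB : D.B u (al v) ≤ -1) {ε : ℝ} (hε : ε ≠ 0) (hC : Can D G φ Y ε)
    {x : (ι → ℝ) →ₗ[ℝ] ℝ} (hx : x ∈ G.U) (hxv : x (φ (al v)) = 0) : 0 < ε * x (φ u) := by
  have hne := C.nz hF hu hB hx hxv
  by_contra hc
  have hlt : ε * x (φ u) < 0 := lt_of_le_of_ne (not_lt.mp hc) (mul_ne_zero hε hne)
  have hc2 : (2:ℝ) ≤ -2 * D.B u (al v) := by linarith
  have hmono := us_strictMono hc2
  set f : ℕ → (ι → ℝ) := fun n => us (-2 * D.B u (al v)) (2*n+1) • u +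
    us (-2 * D.B u (al v)) (2*n) • al v with hf
  have hht : StrictMono fun n => ht (f n) := by
    intro m n hmn
    have h1 : us (-2 * D.B u (al v)) (2*m+1) < us (-2 * D.B u (al v)) (2*n+1) := hmono (by omega)
    have h2 : us (-2 * D.B u (al v)) (2*m) < us (-2 * D.B u (al v)) (2*n) := hmono (by omega)
    have h3 := hu.1.ht_ge
    simp only [hf, map_add, map_smul, smul_eq_mul, ht_al]
    nlinarith
  have hinj : Function.Injective f := fun m n h => hht.injective (by simp only [h])
  refine Set.infinite_of_injective_forall_mem hinj (fun n => ?_) (hC x hx)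
  have h4 := us_hyp hc2 (2*n)
  have hpos : 0 < us (-2 * D.B u (al v)) (2*n+1) := by linarith [h4.1, h4.2]
  refine ⟨⟨?_, (hu.2.smul _).add ((sup_al hv).smul _)⟩, ?_⟩
  · obtain ⟨s, hs⟩ := hu.1.exists_pos
    refine Root.pr_of_pos (hyp_family hu.1.root (D.root_al v) n).1 (s := s) ?_
    show 0 < (us (-2 * D.B u (al v)) (2*n+1) • u + us (-2 * D.B u (al v)) (2*n) • al v) s
    rw [Pi.add_apply, Pi.smul_apply, Pi.smul_apply, smul_eq_mul, smul_eq_mul]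
    have h5 := mul_nonneg h4.2 ((D.pr_al v).nonneg s)
    have h6 := mul_pos hpos (lt_of_lt_of_le one_pos hs)
    linarith
  · simp only [hf, map_add, map_smul, smul_eq_mul, hxv, mul_zero, add_zero]
    have := mul_pos_of_neg_of_neg hlt (neg_neg_of_pos hpos)
    linarith

/-- minimal sets exist -/
theorem exists_min_set (p : Set ι → Prop) {S : Set ι} (h : p S) :
    ∃ J ⊆ S, p J ∧ ∀ J' ⊆ J, p J' → J ⊆ J' := by
  obtain ⟨J, ⟨h1, h2⟩, h3⟩ := Set.Finite.exists_minimal (s := {J : Set ι | J ⊆ S ∧ p J})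
    (Set.toFinite _) ⟨S, subset_rfl, h⟩
  exact ⟨J, h1, h2, fun J' hJ' hp => h3 ⟨hJ'.trans h1, hp⟩ hJ'⟩

theorem Ctx.inner_step (C : Ctx D G a φ) (hT : Twist cs) {X : Set ι} (hI : Irr M X)
    (hF : FinT M X) {ε : ℝ} (hε : ε ≠ 0)
    (hG : ∀ c ∈ MX M X, FinT M (insert c X) → Good D G φ (insert c X) ε)
    (hC : ¬ Sph cs X → Can D G φ X ε) (hS : Sph cs X → ∃ c ∈ MX M X, FinT M (insert c X))
    {g : ι → ℝ} (hg : Full D X g)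
    (hIH : ∀ g', Full D X g' → ht g < ht g' → ∀ v, D.B g' (al v) ≤ -1 → ∀ x ∈ G.U,
      x (φ (al v)) = 0 → 0 < ε * x (φ g')) :
    ∀ v, D.B g (al v) ≤ -1 → ∀ x ∈ G.U, x (φ (al v)) = 0 → 0 < ε * x (φ g) := by
  classical
  -- step 0
  have step0 : ∀ v, D.B g (al v) ≤ -1 → FinT M (insert v X) → ∀ x ∈ G.U,
      x (φ (al v)) = 0 → 0 < ε * x (φ g) := by
    intro v hB hf x hx hxv
    have hg' : g ∈ D.PK (insert v X) := ⟨hg.1.1, hg.1.2.mono (Set.subset_insert _ _)⟩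
    refine C.hyp_can hf hg' (Set.mem_insert _ _) hB hε ?_ hx hxv
    have hns : ¬ Sph cs (insert v X) := not_sph hg' (al_PK (Set.mem_insert _ _)) hB
    by_cases hv : v ∈ X
    · rw [Set.insert_eq_of_mem hv] at hns ⊢
      exact hC hns
    · have hm : v ∈ MX M X := by
        by_contra h
        have := hg.B_perp hv h
        linarith
      exact ((hG v hm hf) _ subset_rfl (hI.insert hm) hf).2 hns
  -- step 1
  have step1 : ∀ c v, D.B g (al c) < 0 → FinT M (insert c X) → M c v ≠ 0 →
      ¬ FinT M (insert v X) → ∀ x ∈ G.U, x (φ (al v)) = 0 → 0 < ε * x (φ g) := by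
    intro c v hBc hf hM hv x hx hxv
    obtain ⟨hvX, z, hz, hMz⟩ := inf_type hF hv
    have hcv : v ≠ c := by rintro rfl; exact hv hf
    have hr := hg.raise hBc
    have hBv : D.B (D.rf (al c) g) (al v) ≤ -1 :=
      hr.inf_hyp (by rintro (h | h); exacts [hcv h, hvX h]) (Or.inr hz) hMz
    obtain ⟨y, hy, hyc, hyv⟩ := C.F2 hM
    have h1 : 0 < ε * y (φ (D.rf (al c) g)) := by
      by_cases hcX : c ∈ X
      · rw [Set.insert_eq_of_mem hcX] at hr
        exact hIH _ hr (by rw [ht_rf_al]; linarith) v hBv y hy hyv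
      · have hm : c ∈ MX M X := by
          by_contra h
          have := hg.B_perp hcX h
          linarith
        exact ((hG c hm hf) _ subset_rfl (hI.insert hm) hf).1 _ hr v hBv y hy hyv
    have h2 : 0 < ε * y (φ g) := by
      rw [rf_apply, map_sub, map_smul, map_sub, map_smul, hyc, smul_zero, sub_zero] at h1
      exact h1
    exact C.const hF hg.1 (hg.inf_hyp hvX hz hMz) hy hyv hx hxv h2
  intro v hB
  by_cases hvf : FinT M (insert v X)
  · exact step0 v hB hvf
  obtain ⟨hvX, z0, hz0, hMz0⟩ := inf_type hF hvf
  -- the decomposition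
  set YX : Set ι := {z | z ∈ X ∧ 0 ≤ D.B g (al z)} with hYX
  set Q0 : Set ι := {z | ∃ Q ⊆ YX, z ∈ Q ∧ (∀ q ∈ Q, D.B g (al q) = 0) ∧
    ∀ q ∈ Q, ∀ j ∈ YX, j ∉ Q → M q j = 2} with hQ0
  set J0 : Set ι := YX \ Q0 with hJ0
  have Q0Y : Q0 ⊆ YX := by rintro z ⟨Q, hQ, hz, _⟩; exact hQ hz
  have Q0B : ∀ q ∈ Q0, D.B g (al q) = 0 := by rintro z ⟨Q, hQ, hz, h1, _⟩; exact h1 z hz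
  have Q0P : ∀ q ∈ Q0, ∀ j ∈ YX, j ∉ Q0 → M q j = 2 := by
    rintro z ⟨Q, hQ, hz, h1, h2⟩ j hj hj'
    exact h2 z hz j hj fun h => hj' ⟨Q, hQ, h, h1, h2⟩
  have J0X : J0 ⊆ X := fun z hz => hz.1.1
  have J0S : Sph cs J0 := by
    set p : ι → ℝ := fun i => if i ∈ J0 then g i else 0 with hp
    have pB : ∀ i ∈ J0, D.B g (al i) ≤ D.B p (al i) := by
      intro i hi
      rw [B_al_right, B_al_right]
      refine Finset.sum_le_sum fun s _ => ?_
      by_cases hs : s ∈ J0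
      · simp [hp, hs]
      · simp only [hp, hs, if_false, zero_mul]
        refine mul_nonpos_of_nonneg_of_nonpos (hg.1.1.nonneg s) (D.k_le_zero ?_)
        rintro rfl; exact hs hi
    refine WP_finite (G := D) (PK_finite_of_pd (pf (p := p) ?_ ?_ ?_ ?_))
    · intro i hi; simp only [hp, hi, if_true]; exact hg.2 i (J0X hi)
    · intro i hi; simp only [hp, hi, if_false]
    · intro i hi; exact hi.1.2.trans (pB i hi)
    · rintro K' hK' ⟨i0, hi0⟩ hperp
      by_contra hcon
      push Not at hcon
      refine (hK' hi0).2 ⟨K', fun i hi => (hK' hi).1, hi0, fun q hq => ?_, fun q hq j hj hj' => ?_⟩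
      · exact le_antisymm ((pB q (hK' hq)).trans (hcon q hq)) (hK' hq).1.2
      · by_cases hjQ : j ∈ Q0
        · rw [M.symmetric]; exact Q0P j hjQ q (hK' hq).1 (hK' hq).2
        · have hne : q ≠ j := by rintro rfl; exact hj' hq
          exact (D.k_eq_zero_iff hne).mp (hperp q hq j ⟨⟨hj, hjQ⟩, hj'⟩)
  by_cases hvJ : ∃ j ∈ J0, M j v ≠ 2
  · -- case A
    obtain ⟨J, hJ0', ⟨hJp, j1, hj1, hj1v⟩, hJmin⟩ := exists_min_set
      (fun J => (∀ i ∈ J, ∀ j ∈ YX, j ∉ J → M i j = 2) ∧ ∃ j ∈ J, M j v ≠ 2) (S := J0)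
      ⟨fun i hi j hj hj' => by
        rw [M.symmetric]
        refine Q0P j ?_ i hi.1 hi.2
        by_contra h; exact hj' ⟨hj, h⟩, hvJ⟩
    have hJY : J ⊆ YX := fun i hi => (hJ0' hi).1
    have hJI : Irr M J := by
      refine ⟨⟨j1, hj1⟩, fun K1 hK1 hne hperp => ?_⟩
      by_cases h1 : ∃ j ∈ K1, M j v ≠ 2
      · refine hJmin K1 hK1 ⟨fun i hi j hj hj' => ?_, h1⟩
        by_cases hjJ : j ∈ J
        · exact hperp i hi j hjJ hj'
        · exact hJp i (hK1 hi) j hj hjJ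
      · exfalso
        push Not at h1
        have := hJmin (J \ K1) Set.diff_subset ⟨fun i hi j hj hj' => ?_, j1, ⟨hj1, fun h => hj1v (h1 j1 h)⟩, hj1v⟩
        · obtain ⟨k, hk⟩ := hne
          exact (this (hK1 hk)).2 hk
        · by_cases hjJ : j ∈ J
          · have hjK : j ∈ K1 := by by_contra h; exact hj' ⟨hjJ, h⟩
            rw [M.symmetric]; exact hperp j hjK i hi.1 hi.2
          · exact hJp i hi.1 j hj hjJ
    have hJS : Sph cs J := J0S.mono hJ0'
    have hneg : ∀ m ∈ MX M J, D.B g (al m) < 0 := by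
      rintro m ⟨hmJ, j, hj, hM⟩
      by_cases hmX : m ∈ X
      · by_contra h
        exact hM (hJp j hj m ⟨hmX, not_lt.mp h⟩ hmJ)
      · exact hg.B_neg ⟨hmX, j, (hJY hj).1, hM⟩
    have hvM : v ∈ MX M J := ⟨fun h => hvX (hJY h).1, j1, hj1, hj1v⟩
    obtain ⟨n, hnM, hnF⟩ : ∃ n ∈ MX M J, FinT M (insert n X) := by
      by_cases hXJ : X ⊆ J
      · have : X = J := Set.Subset.antisymm hXJ fun i hi => (hJY hi).1
        obtain ⟨c, hc, hcf⟩ := hS (by rw [this]; exact hJS)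
        exact ⟨c, by rw [← this]; exact hc, hcf⟩
      · obtain ⟨n, hnX, hn⟩ := hI.exists_nbr hJI.1 (fun i hi => (hJY hi).1) hXJ
        exact ⟨n, hn, by rwa [Set.insert_eq_of_mem hnX]⟩
    have hpath := hT J hJI hJS n hnM v hvM
    have claim : FinT M (insert v X) ∨ ∀ x ∈ G.U, x (φ (al v)) = 0 → 0 < ε * x (φ g) := by
      clear hB hvf hvX hMz0 hvJ hJmin hj1v hvM
      induction hpath with
      | refl => exact Or.inl hnF
      | @tail b c _ hbc ih =>
        by_cases hcf : FinT M (insert c X)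
        · exact Or.inl hcf
        right
        rcases ih with hb | hb
        · exact step1 b c (hneg b hbc.1) hb hbc.2.2 hcf
        · obtain ⟨hcX, z, hz, hMz⟩ := inf_type hF hcf
          obtain ⟨y, hy, hyb, hyc⟩ := C.F2 hbc.2.2
          intro x hx hxc
          exact C.const hF hg.1 (hg.inf_hyp hcX hz hMz) hy hyc hx hxc (hb y hy hyb)
    exact claim.resolve_left hvf
  · -- case B
    push Not at hvJ
    obtain ⟨x, hx, hxv, hxJ⟩ := C.FL J0S hvJ
    intro x' hx' hxv'
    refine C.const hF hg.1 hB hx hxv hx' hxv' ?_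
    by_contra hcon
    have hlt : ε * x (φ g) < 0 :=
      lt_of_le_of_ne (not_lt.mp hcon) (mul_ne_zero hε (C.nz hF hg.1 hB hx hxv))
    have hQX : Q0 ⊆ X := fun q hq => (Q0Y hq).1
    obtain ⟨w, hw, hwq⟩ := move (G := D) (ε • (x ∘ₗ φ)) Q0 (by
      by_cases hs : Sph cs X
      · exact (PK_finite (G := D) hs).subset fun v hv => ⟨hv.1.1, hv.1.2.mono hQX⟩
      · exact (hC hs x hx).subset fun v hv => ⟨⟨hv.1.1, hv.1.2.mono hQX⟩, hv.2⟩)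
    have hwX : w ∈ WP cs X := WP_mono cs hQX hw
    have hwg : D.ρ w g = g := fix_of_perp Q0B w hw
    have hneg : ∀ t ∈ X, t ∉ YX → 0 < ε * x (φ (D.ρ w (al t))) := by
      intro t ht' htY
      have hBt : D.B g (al t) < 0 := by
        by_contra h; exact htY ⟨ht', not_lt.mp h⟩
      have htQ : t ∉ Q0 := fun h => htY (Q0Y h)
      have hwt : D.PR (D.ρ w (al t)) := Root.pr_of_pos ((D.root_al t).act D w) (s := t) (by
        rw [ρ_apply_not_mem hw _ htQ, al_self]; norm_num)
      set c' := -(2 * D.B g (al t)) with hc'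
      have hc'0 : 0 < c' := by rw [hc']; linarith
      have e : D.ρ w (D.rf (al t) g) = g + c' • D.ρ w (al t) := by
        rw [rf_apply, map_sub, map_smul, hwg, hc', neg_smul, sub_eq_add_neg]
      have hfull : Full D X (g + c' • D.ρ w (al t)) := by
        have hpos : ∀ s ∈ X, 0 < (g + c' • D.ρ w (al t)) s := by
          intro s hs
          rw [Pi.add_apply, Pi.smul_apply, smul_eq_mul]
          have := mul_nonneg hc'0.le (hwt.nonneg s)
          linarith [hg.2 s hs]
        refine ⟨⟨?_, ?_⟩, hpos⟩
        · refine Root.pr_of_pos (s := t) ?_ (hpos t ht')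
          rw [← e]
          exact ((D.root_al t).rf D hg.1.1.root).act D w
        · exact hg.1.2.add ((Sup.ρ hwX (sup_al ht')).smul _)
      have h1 := hIH _ hfull (by
        rw [map_add, map_smul, smul_eq_mul]
        have := mul_pos hc'0 (lt_of_lt_of_le one_pos hwt.ht_ge)
        linarith) v (hfull.inf_hyp hvX hz0 hMz0) x hx hxv
      rw [map_add, map_smul, map_add, map_smul, smul_eq_mul, mul_add] at h1
      have h2 : 0 < c' * (ε * x (φ (D.ρ w (al t)))) := by linarith
      exact (mul_pos_iff_of_pos_left hc'0).mp h2
    have hsum : ε * x (φ g) = ∑ z, g z * (ε * x (φ (D.ρ w (al z)))) := by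
      conv_lhs => rw [← hwg, sum_al g]
      simp only [map_sum, map_smul, smul_eq_mul, Finset.mul_sum]
      exact Finset.sum_congr rfl fun z _ => by ring
    have : 0 ≤ ε * x (φ g) := by
      rw [hsum]
      refine Finset.sum_nonneg fun z _ => ?_
      by_cases hzX : z ∈ X
      · refine mul_nonneg (hg.1.1.nonneg z) ?_
        by_cases hzY : z ∈ YX
        · by_cases hzQ : z ∈ Q0
          · exact hwq z hzQ
          · have : D.ρ w (al z) = al z := fix_of_perp (fun q hq => by
              have hne : z ≠ q := by rintro rfl; exact hzQ hq
              rw [B_al, D.k_eq_zero_iff hne, M.symmetric]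
              exact Q0P q hq z hzY hzQ) w hw
            rw [this, hxJ z ⟨hzY, hzQ⟩, mul_zero]
        · exact (hneg z hzX hzY).le
      · rw [hg.1.2 z hzX, zero_mul]
    linarith

theorem Ctx.inner (C : Ctx D G a φ) (hT : Twist cs) {X : Set ι} (hI : Irr M X)
    (hF : FinT M X) {ε : ℝ} (hε : ε ≠ 0)
    (hG : ∀ c ∈ MX M X, FinT M (insert c X) → Good D G φ (insert c X) ε)
    (hC : ¬ Sph cs X → Can D G φ X ε) (hS : Sph cs X → ∃ c ∈ MX M X, FinT M (insert c X)) :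
    One D G φ X ε := by
  by_contra hcon
  set bad : Set (ι → ℝ) := {g | Full D X g ∧ ∃ v, D.B g (al v) ≤ -1 ∧ ∃ x ∈ G.U,
    x (φ (al v)) = 0 ∧ ¬ 0 < ε * x (φ g)} with hbad
  have hne : bad.Nonempty := by
    unfold One at hcon
    push Not at hcon
    obtain ⟨g, h1, v, h2, x, h3, h4, h5⟩ := hcon
    exact ⟨g, h1, v, h2, x, h3, h4, not_lt.mpr h5⟩
  have hfin : bad.Finite := by
    by_cases hs : Sph cs X
    · exact (PK_finite (G := D) hs).subset fun g hg => hg.1.1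
    · choose y hy hyv using fun v => C.F1 v
      have : (⋃ v : ι, {g | g ∈ D.PK X ∧ ε * y v (φ g) < 0}).Finite :=
        Set.finite_iUnion fun v => hC hs (y v) (hy v)
      refine this.subset ?_
      rintro g ⟨h1, v, h2, x, h3, h4, h5⟩
      refine Set.mem_iUnion.mpr ⟨v, h1.1, ?_⟩
      refine lt_of_le_of_ne (not_lt.mp fun h => h5 ?_)
        (mul_ne_zero hε (C.nz hF h1.1 h2 (hy v) (hyv v)))
      exact C.const hF h1.1 h2 (hy v) (hyv v) h3 h4 h
  obtain ⟨g, ⟨hg, v, hv, x, hx, hxv, hlt⟩, hmax⟩ := Set.exists_max_image bad (fun g => ht g) hfin hne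
  refine hlt (C.inner_step hT hI hF hε hG hC hS hg ?_ v hv x hx hxv)
  intro g' hg' hh v' hv' x' hx' hxv'
  by_contra h
  exact absurd (hmax g' ⟨hg', v', hv', x', hx', hxv', h⟩) (not_le.mpr hh)

end TR

namespace TR
open Geo
variable {ι W : Type*} [Fintype ι] [DecidableEq ι] [Group W] {M : CoxeterMatrix ι}
variable {cs : CoxeterSystem M W} {D G : Geo cs} {a : MulAut W} {φ : (ι → ℝ) →ₗ[ℝ] (ι → ℝ)}

/-- the sign of `g` on all walls in `MX` -/
def Sg (D G : Geo cs) (φ : (ι → ℝ) →ₗ[ℝ] (ι → ℝ)) (X : Set ι) (g : ι → ℝ) (ε : ℝ) : Prop :=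
  ∀ v ∈ MX M X, ∀ x ∈ G.U, x (φ (al v)) = 0 → 0 < ε * x (φ g)

theorem sign_eq {ε ε' y z l : ℝ} (h : ε = 1 ∨ ε = -1) (h' : ε' = 1 ∨ ε' = -1)
    (h1 : 0 < ε * y) (h2 : 0 < ε' * z) (hl : 0 < l) (e : z = l * y) : ε = ε' := by
  subst e
  rcases h with rfl | rfl <;> rcases h' with rfl | rfl
  · rfl
  · exfalso; nlinarith
  · exfalso; nlinarith
  · rfl

theorem pm_of_ne {y : ℝ} (h : y ≠ 0) : ∃ ε : ℝ, (ε = 1 ∨ ε = -1) ∧ 0 < ε * y := by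
  rcases lt_or_gt_of_ne h with h | h
  · exact ⟨-1, Or.inr rfl, by linarith⟩
  · exact ⟨1, Or.inl rfl, by linarith⟩

theorem Ctx.sg_exists (C : Ctx D G a φ) (hT : Twist cs) {X : Set ι} (hI : Irr M X) (hS : Sph cs X)
    (hall : ∀ m ∈ MX M X, ¬ FinT M (insert m X)) (hne : (MX M X).Nonempty) {g : ι → ℝ}
    (hg : Full D X g) : ∃ ε : ℝ, (ε = 1 ∨ ε = -1) ∧ Sg D G φ X g ε := by
  have hF := sph_fin D hS
  have hB : ∀ v ∈ MX M X, D.B g (al v) ≤ -1 := by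
    intro v hv
    obtain ⟨h1, z, hz, hM⟩ := inf_type hF (hall v hv)
    exact hg.inf_hyp h1 hz hM
  obtain ⟨v0, hv0⟩ := hne
  obtain ⟨x0, hx0, hx00⟩ := C.F1 v0
  obtain ⟨ε, hε, hpos⟩ := pm_of_ne (C.nz hF hg.1 (hB v0 hv0) hx0 hx00)
  refine ⟨ε, hε, fun v hv => ?_⟩
  have hp := hT X hI hS v0 hv0 v hv
  clear hv
  induction hp with
  | refl => exact fun x hx hx' => C.const hF hg.1 (hB v0 hv0) hx0 hx00 hx hx' hpos
  | tail _ hst ih =>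
    obtain ⟨y, hy, hy1, hy2⟩ := C.F2 hst.2.2
    exact fun x hx hx' => C.const hF hg.1 (hB _ hst.2.1) hy hy2 hx hx' (ih y hy hy1)

/-- dichotomy for a vertex of a maximal finite-type spherical set -/
theorem twist_dich (hT : Twist cs) {X : Set ι} (hI : Irr M X) (hS : Sph cs X) {t : ι} (ht : t ∈ X)
    (h0 : ∀ v ∈ MX M X, M t v = 0) : ∀ v ∈ MX M X, ∀ z ∈ X, z ≠ t → M z v = 2 := by
  intro v hv z hz hzt
  by_contra hM
  obtain ⟨J, hJX, ⟨hzJ, hJp⟩, hmin⟩ := exists_min_set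
    (fun J : Set ι => z ∈ J ∧ ∀ i ∈ J, ∀ j ∈ X \ {t}, j ∉ J → M i j = 2) (S := X \ {t})
    ⟨⟨hz, hzt⟩, fun i hi j hj hj' => (hj' hj).elim⟩
  have hJI : Irr M J := by
    refine ⟨⟨z, hzJ⟩, fun K1 hK1 hne hperp => ?_⟩
    by_cases hzK : z ∈ K1
    · refine hmin K1 hK1 ⟨hzK, fun i hi j hj hj' => ?_⟩
      by_cases hjJ : j ∈ J
      · exact hperp i hi j hjJ hj'
      · exact hJp i (hK1 hi) j hj hjJ
    · exfalso
      obtain ⟨i, hi⟩ := hne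
      have := hmin (J \ K1) Set.diff_subset ⟨⟨hzJ, hzK⟩, fun p hp j hj hj' => by
        by_cases hjJ : j ∈ J
        · have hjK : j ∈ K1 := by
            by_contra hc
            exact hj' ⟨hjJ, hc⟩
          rw [M.symmetric]
          exact hperp j hjK p hp.1 hp.2
        · exact hJp p hp.1 j hj hjJ⟩
      exact (this (hK1 hi)).2 hi
  have htJ : t ∉ J := fun h => (hJX h).2 rfl
  have hvJ : v ∈ MX M J := ⟨fun h => hv.1 (hJX h).1, z, hzJ, hM⟩
  have htM : t ∈ MX M J := by
    refine ⟨htJ, ?_⟩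
    by_contra hc
    push Not at hc
    refine htJ (hI.2 J (fun i hi => (hJX hi).1) ⟨z, hzJ⟩ (fun i hi j hj hj' => ?_) ht)
    by_cases hjt : j = t
    · rw [hjt]; exact hc i hi
    · exact hJp i hi j ⟨hj, hjt⟩ hj'
  have hp := hT J hJI (hS.mono fun i hi => (hJX hi).1) t htM v hvJ
  have : v = t := by
    clear hvJ hM hv
    induction hp with
    | refl => rfl
    | @tail b c _ hst ih =>
      rw [ih] at hst
      by_contra hne
      obtain ⟨hcJ, j, hj, hjM⟩ := hst.2.1
      by_cases hcX : c ∈ X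
      · exact hjM (hJp j hj c ⟨hcX, hne⟩ hcJ)
      · exact hst.2.2 (h0 c ⟨hcX, j, (hJX hj).1, hjM⟩)
  exact hv.1 (this ▸ ht)

/-- linking the orbits of two noncommuting simple roots by full roots -/
theorem link {X : Set ι} (hI : Irr M X) (hS : Sph cs X) {s0 t0 : ι} (hs0 : s0 ∈ X) (ht0 : t0 ∈ X)
    (hne : s0 ≠ t0) (hM : M s0 t0 ≠ 2) : ∃ g1 g2 : ι → ℝ, Full D X g1 ∧ Full D X g2 ∧
      (∃ w ∈ WP cs X, g1 = D.ρ w (al s0)) ∧ (∃ w ∈ WP cs X, g2 = D.ρ w (al t0)) ∧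
      ∃ l : ℝ, 0 < l ∧ ∃ m : ℝ, ∃ t ∈ X, g2 = l • g1 + m • al t := by
  set P : Set ((ι → ℝ) × ι) := {p | p.1 ∈ D.PK X ∧ (∃ w ∈ WP cs X, p.1 = D.ρ w (al s0)) ∧
    p.2 ∈ X ∧ (∃ w ∈ WP cs X, (al p.2 : ι → ℝ) = D.ρ w (al t0)) ∧ D.B p.1 (al p.2) < 0} with hP
  have hPf : P.Finite := ((PK_finite (G := D) hS).prod (Set.finite_univ (α := ι))).subset
    fun p hp => ⟨hp.1, trivial⟩
  obtain ⟨⟨g, t⟩, ⟨hg, ⟨w, hw, hgw⟩, ht, ⟨w', hw', htw⟩, hB⟩, hmax⟩ :=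
    Set.exists_max_image P (fun p => ht p.1) hPf ⟨(al s0, t0), al_PK hs0, ⟨1, one_mem _, by simp⟩,
      ht0, ⟨1, one_mem _, by simp⟩, by
        simp only [B_al]
        exact lt_of_le_of_ne (D.k_le_zero hne) fun h => hM ((D.k_eq_zero_iff hne).mp h)⟩
  simp only at hg hgw ht htw hB hmax
  have nota : ∀ {v : ι → ℝ} {u : ι}, D.B v (al u) < 0 → v ≠ al u := by
    intro v u h e
    rw [e] at h; simp [k_self] at h; linarith
  have hstep : ∀ u ∈ X, u ≠ t → 0 ≤ D.B g (al u) := by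
    intro u hu hut
    by_contra hc
    push Not at hc
    have := hmax (D.rf (al u) g, t) ⟨⟨hg.1.simple (nota hc), Geo.Sup.rf_al hu hg.2⟩,
      ⟨cs.simple u * w, mul_mem (simple_mem_WP cs hu) hw, by
        rw [map_mul, Module.End.mul_apply, ← hgw, ρ_simple]⟩, ht, ⟨w', hw', htw⟩, by
        simp only [rf_apply, map_sub, map_smul, LinearMap.sub_apply, LinearMap.smul_apply, B_al,
          smul_eq_mul]
        have := mul_nonneg_of_nonpos_of_nonpos hc.le (D.k_le_zero hut)
        linarith⟩
    simp only [ht_rf_al] at this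
    linarith
  set b := - D.B g (al t) with hb
  have hb0 : 0 < b := by linarith
  have hBt : D.B g (al t) = -b := by linarith
  have htg : D.rf (al t) g = g + (2 * b) • al t := by
    rw [rf_apply, hBt]; module
  have htPK : D.rf (al t) g ∈ D.PK X := ⟨hg.1.simple (nota hB), Geo.Sup.rf_al ht hg.2⟩
  have htorb : D.rf (al t) g = D.ρ (cs.simple t * w) (al s0) := by
    rw [map_mul, Module.End.mul_apply, ← hgw, ρ_simple]
  have hthw : cs.simple t * w ∈ WP cs X := mul_mem (simple_mem_WP cs ht) hw
  have hfull : ∀ u ∈ X, u ≠ t → 0 < g u := by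
    by_contra hc
    push Not at hc
    obtain ⟨u0, hu0, hu0t, hu00⟩ := hc
    have hperp : ∀ u ∈ X, u ≠ t → g u = 0 → ∀ s, g s ≠ 0 → M s u = 2 := by
      intro u hu hut hgu s hs
      by_contra hMs
      have h1 := B_al_neg (D := D) hg.1.nonneg hgu (lt_of_le_of_ne (hg.1.nonneg s) (Ne.symm hs)) hMs
      linarith [hstep u hu hut]
    have : ∃ u ∈ X, u ≠ t ∧ g u = 0 ∧ M u t ≠ 2 := by
      by_contra hc
      push Not at hc
      have := hI.2 {u | u ∈ X ∧ u ≠ t ∧ g u = 0} (fun u hu => hu.1)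
        ⟨u0, hu0, hu0t, le_antisymm hu00 (hg.1.nonneg _)⟩ (fun i hi j hj hj' => by
          by_cases hjt : j = t
          · rw [hjt]; exact hc i hi.1 hi.2.1 hi.2.2
          · rw [M.symmetric]
            exact hperp i hi.1 hi.2.1 hi.2.2 j fun h => hj' ⟨hj, hjt, h⟩) ht
      exact this.2.1 rfl
    obtain ⟨u, hu, hut, hgu, hMu⟩ := this
    have hBu : D.B g (al u) = 0 := by
      rw [B_al_right]
      refine Finset.sum_eq_zero fun s _ => ?_
      by_cases hs : g s = 0
      · rw [hs, zero_mul]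
      · have hsu : s ≠ u := by rintro rfl; exact hs hgu
        rw [(D.k_eq_zero_iff hsu).mpr (hperp u hu hut hgu s hs), mul_zero]
    have hk : D.k u t < 0 := lt_of_le_of_ne (D.k_le_zero hut) fun h => hMu ((D.k_eq_zero_iff hut).mp h)
    have hBtu : D.B (D.rf (al t) g) (al u) = 2 * b * D.k u t := by
      rw [htg]
      simp only [map_add, map_smul, LinearMap.add_apply, LinearMap.smul_apply, B_al, smul_eq_mul, hBu]
      rw [D.symm t u]; ring
    have hBtu0 : D.B (D.rf (al t) g) (al u) < 0 := by
      rw [hBtu]; exact mul_neg_of_pos_of_neg (by linarith) hk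
    have hht : TR.ht (D.rf (al t) g) = TR.ht g + 2 * b := by
      rw [ht_rf_al, hBt]; ring
    have hst := (D.pr_al u).simple (s := t) (fun h => by
      have := congrFun h u
      rw [al_self, al_ne hut] at this
      exact one_ne_zero this)
    have hk2 : D.k u t ≤ -1/2 := by
      have h1 : D.rf (al t) (al u) t = -2 * D.k u t := by
        rw [rf_apply, Pi.sub_apply, Pi.smul_apply, al_self, al_ne (Ne.symm hut), B_al, smul_eq_mul]; ring
      have h2 := TR.PR.ge_one hst (s := t) (by rw [h1]; linarith)
      rw [h1] at h2
      linarith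
    by_cases hk3 : D.k u t < -1/2
    · have := hmax (D.rf (al u) (D.rf (al t) g), t) ⟨⟨htPK.1.simple (nota hBtu0),
        Geo.Sup.rf_al hu htPK.2⟩,
        ⟨cs.simple u * (cs.simple t * w), mul_mem (simple_mem_WP cs hu) hthw, by
          rw [map_mul, Module.End.mul_apply, ← htorb, ρ_simple]⟩, ht, ⟨w', hw', htw⟩, by
          show D.B (D.rf (al u) (D.rf (al t) g)) (al t) < 0
          rw [rf_apply, hBtu, htg]
          simp only [map_sub, map_add, map_smul, LinearMap.sub_apply, LinearMap.add_apply,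
            LinearMap.smul_apply, B_al, smul_eq_mul, hBt, k_self]
          have : 1 < 4 * (D.k u t * D.k u t) := by nlinarith
          nlinarith⟩
      simp only at this
      rw [ht_rf_al, hBtu, hht] at this
      nlinarith
    · have hk4 : D.k u t = -1/2 := le_antisymm hk2 (not_lt.mp hk3)
      have hor : D.rf (al u) (D.rf (al t) (al u)) = al t := by
        simp only [rf_apply, map_sub, map_smul, LinearMap.sub_apply, LinearMap.smul_apply, B_al,
          smul_eq_mul, k_self, D.symm t u, hk4]
        module
      have hor2 : (al t : ι → ℝ) = D.ρ (cs.simple u * cs.simple t) (al u) := by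
        rw [map_mul, Module.End.mul_apply, ρ_simple, ρ_simple, hor]
      have hmemut : cs.simple u * cs.simple t ∈ WP cs X :=
        mul_mem (simple_mem_WP cs hu) (simple_mem_WP cs ht)
      have := hmax (D.rf (al t) g, u) ⟨htPK, ⟨_, hthw, htorb⟩, hu,
        ⟨(cs.simple u * cs.simple t)⁻¹ * w', mul_mem (inv_mem hmemut) hw', by
          show (al u : ι → ℝ) = _
          rw [map_mul, Module.End.mul_apply, ← htw, hor2, ρ_inv_ρ]⟩, hBtu0⟩
      simp only at this
      rw [hht] at this
      linarith
  have hr : D.rf g (al t) = al t + (2 * b) • g := by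
    rw [rf_apply, D.B_comm, hBt]; module
  refine ⟨D.rf (al t) g, D.rf g (al t), ⟨htPK, ?_⟩, ⟨⟨?_, ?_⟩, ?_⟩, ⟨_, hthw, htorb⟩, ?_, 2 * b,
    by linarith, 1 - 4 * b * b, t, ht, ?_⟩
  · intro s hs
    by_cases hst : s = t
    · rw [hst, htg, Pi.add_apply, Pi.smul_apply, al_self, smul_eq_mul]
      linarith [hg.1.nonneg t]
    · rw [rf_al_apply_ne _ hst]; exact hfull s hs hst
  · refine Root.pr_of_pos (s := t) (hg.1.root.rf D (D.root_al t)) ?_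
    rw [hr, Pi.add_apply, Pi.smul_apply, al_self, smul_eq_mul]
    have := mul_nonneg hb0.le (hg.1.nonneg t)
    linarith
  · rw [hr]; exact (sup_al ht).add (hg.2.smul _)
  · intro s hs
    rw [hr, Pi.add_apply, Pi.smul_apply, smul_eq_mul]
    by_cases hst : s = t
    · rw [hst, al_self]
      have := mul_nonneg hb0.le (hg.1.nonneg t)
      linarith
    · rw [al_ne hst]
      have := mul_pos hb0 (hfull s hs hst)
      linarith
  · refine ⟨w * cs.simple s0 * w⁻¹ * w', mul_mem (mul_mem (mul_mem hw (simple_mem_WP cs hs0))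
      (inv_mem hw)) hw', ?_⟩
    rw [map_mul, Module.End.mul_apply, ← htw, rf_conj D w _ _ (D.ρ_simple s0), ← hgw]
  · rw [hr, htg]; module

theorem Ctx.even (C : Ctx D G a φ) (hT : Twist cs) {X : Set ι} (hI : Irr M X) (hS : Sph cs X)
    (hall : ∀ m ∈ MX M X, ¬ FinT M (insert m X)) (hne : (MX M X).Nonempty) :
    ∃ ε : ℝ, (ε = 1 ∨ ε = -1) ∧ One D G φ X ε := by
  have hF := sph_fin D hS
  have hsg : ∀ {g}, Full D X g → _ := fun {g} hg => C.sg_exists hT hI hS hall hne hg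
  have hcmp : ∀ {g1 g2 : ι → ℝ} {ε : ℝ}, Full D X g2 → (ε = 1 ∨ ε = -1) →
      Sg D G φ X g1 ε → ∀ v ∈ MX M X, ∀ x ∈ G.U, x (φ (al v)) = 0 → ∀ l : ℝ, 0 < l →
      x (φ g2) = l * x (φ g1) → Sg D G φ X g2 ε := by
    intro g1 g2 ε h2 hε hs v hv x hx hx0 l hl e
    obtain ⟨ε', hε', hs'⟩ := hsg h2
    rw [sign_eq hε hε' (hs v hv x hx hx0) (hs' v hv x hx hx0) hl e]
    exact hs'
  have hfin : ∀ ε : ℝ, (∀ g, Full D X g → Sg D G φ X g ε) → One D G φ X ε := by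
    intro ε h g hg v hB x hx hx0
    have hvX : v ∉ X := fun hv => not_sph hg.1 (al_PK hv) hB hS
    have hvM : v ∈ MX M X := by
      by_contra hc
      have := hg.B_perp hvX hc
      linarith
    exact h g hg v hvM x hx hx0
  obtain ⟨s0, hs0⟩ := hI.1
  by_cases hi : ∀ t ∈ X, ∃ v ∈ MX M X, M t v ≠ 0
  · have hcmp2 : ∀ {g1 g2 : ι → ℝ} {ε : ℝ}, Full D X g2 → (ε = 1 ∨ ε = -1) →
        Sg D G φ X g1 ε → ∀ t ∈ X, ∀ l m : ℝ, 0 < l → g2 = l • g1 + m • al t →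
        Sg D G φ X g2 ε := by
      intro g1 g2 ε h2 hε hs t ht l m hl e
      obtain ⟨v, hv, hM⟩ := hi t ht
      obtain ⟨x, hx, hx1, hx2⟩ := C.F2 hM
      refine hcmp h2 hε hs v hv x hx hx2 l hl ?_
      rw [e]; simp [hx1]
    have horb : ∀ s ∈ X, ∃ ε : ℝ, (ε = 1 ∨ ε = -1) ∧ ∀ g, Full D X g →
        (∃ w ∈ WP cs X, g = D.ρ w (al s)) → Sg D G φ X g ε := by
      intro s hs
      obtain ⟨θ, hθ, hdom, w0, hw0, hθw⟩ := dom_exists (D := D) hI hS hs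
      obtain ⟨ε, hε, hsθ⟩ := hsg hθ
      refine ⟨ε, hε, ?_⟩
      by_contra hc
      push Not at hc
      obtain ⟨g, ⟨hg, ⟨w, hw, hgw⟩, hns⟩, hmax⟩ := Set.exists_max_image
        {g | Full D X g ∧ (∃ w ∈ WP cs X, g = D.ρ w (al s)) ∧ ¬ Sg D G φ X g ε}
        (fun g => ht g) ((PK_finite (G := D) hS).subset fun g hg => hg.1.1)
        (by obtain ⟨g, h1, h2, h3⟩ := hc; exact ⟨g, h1, h2, h3⟩)
      by_cases hd : ∀ t ∈ X, 0 ≤ D.B g (al t)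
      · have e : D.ρ (w * w0⁻¹) θ = g := by
          rw [map_mul, Module.End.mul_apply, hθw, ρ_inv_ρ, hgw]
        have := dom_unique (G := D) (mul_mem hw (inv_mem hw0)) hdom (by rw [e]; exact hd)
        rw [e] at this
        exact hns (this ▸ hsθ)
      · push Not at hd
        obtain ⟨t, ht, hB⟩ := hd
        have hr := hg.raise hB
        rw [Set.insert_eq_of_mem ht] at hr
        have : Sg D G φ X (D.rf (al t) g) ε := by
          by_contra hcc
          have := hmax _ ⟨hr, ⟨cs.simple t * w, mul_mem (simple_mem_WP cs ht) hw, by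
            rw [map_mul, Module.End.mul_apply, ← hgw, ρ_simple]⟩, hcc⟩
          simp only [ht_rf_al] at this
          linarith
        refine hns (hcmp2 hg hε this t ht 1 (2 * D.B g (al t)) one_pos ?_)
        rw [rf_apply]; module
    obtain ⟨ε, hε, hs⟩ := horb s0 hs0
    refine ⟨ε, hε, hfin ε ?_⟩
    have hK := hI.2 {s | s ∈ X ∧ ∀ g, Full D X g → (∃ w ∈ WP cs X, g = D.ρ w (al s)) →
      Sg D G φ X g ε} (fun s hs => hs.1) ⟨s0, hs0, hs⟩ (fun i hi' j hj hj' => by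
        by_contra hM
        have hij : i ≠ j := by rintro rfl; exact hj' hi'
        obtain ⟨g1, g2, h1, h2, o1, o2, l, hl, m, t, ht, e⟩ := link (D := D) hI hS hi'.1 hj hij hM
        have hs2 := hcmp2 h2 hε (hi'.2 g1 h1 o1) t ht l m hl e
        obtain ⟨ε', hε', hs'⟩ := horb j hj
        obtain ⟨v, hv⟩ := hne
        obtain ⟨x, hx, hx0⟩ := C.F1 v
        have : ε = ε' := sign_eq hε hε' (hs2 v hv x hx hx0) (hs' g2 h2 o2 v hv x hx hx0) one_pos
          (by ring)
        exact hj' ⟨hj, this ▸ hs'⟩)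
    intro g hg
    obtain ⟨w, hw, s, hsX, e⟩ := PK_orbit hg.1
    exact (hK hsX).2 g hg ⟨w, hw, e⟩
  · push Not at hi
    obtain ⟨t, ht, h0⟩ := hi
    have hii := twist_dich hT hI hS ht h0
    obtain ⟨θ, hθ, _⟩ := dom_exists (D := D) hI hS hs0
    obtain ⟨ε, hε, hs⟩ := hsg hθ
    obtain ⟨v, hv⟩ := hne
    obtain ⟨x, hx, hxv, hxL⟩ := C.FL (L := X \ {t}) (hS.mono Set.diff_subset) (v := v)
      (fun l hl => hii v hv l hl.1 hl.2)
    have hval : ∀ g, Full D X g → x (φ g) = g t * x (φ (al t)) := by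
      intro g hg
      conv_lhs => rw [sum_al g]
      simp only [map_sum, map_smul, smul_eq_mul]
      refine Finset.sum_eq_single t (fun s _ hst => ?_) (by simp)
      by_cases hsX : s ∈ X
      · rw [hxL s ⟨hsX, hst⟩, mul_zero]
      · rw [hg.1.2 s hsX, zero_mul]
    refine ⟨ε, hε, hfin ε fun g hg => ?_⟩
    refine hcmp hg hε hs v hv x hx hxv (g t / θ t) (div_pos (hg.2 t ht) (hθ.2 t ht)) ?_
    rw [hval g hg, hval θ hθ]
    have := (hθ.2 t ht).ne'
    field_simp

end TR

namespace TR
open Geo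
variable {ι W : Type*} [Fintype ι] [DecidableEq ι] [Group W] {M : CoxeterMatrix ι}
variable {cs : CoxeterSystem M W} {D G : Geo cs} {a : MulAut W} {φ : (ι → ℝ) →ₗ[ℝ] (ι → ℝ)}

theorem Can.mono {X Y : Set ι} {ε : ℝ} (h : Can D G φ Y ε) (hXY : X ⊆ Y) : Can D G φ X ε :=
  fun x hx => (h x hx).subset fun _ hg => ⟨⟨hg.1.1, hg.1.2.mono hXY⟩, hg.2⟩

theorem pm_eq {ε ε' : ℝ} (h : ε = 1 ∨ ε = -1) (h' : ε' = 1 ∨ ε' = -1) (hn : ¬ (ε * ε' < 0)) :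
    ε = ε' := by
  rcases h with rfl | rfl <;> rcases h' with rfl | rfl
  · rfl
  · exact (hn (by norm_num)).elim
  · exact (hn (by norm_num)).elim
  · rfl

/-- crossing from a finite-type vertex to an infinite-type vertex -/
theorem Ctx.cross (C : Ctx D G a φ) {X : Set ι} (hI : Irr M X) (hF : FinT M X) {θ : ι → ℝ}
    (hθ : Full D X θ) {c v : ι} (hc : c ∈ MX M X) (hcF : FinT M (insert c X)) {ε : ℝ}
    (hG : Good D G φ (insert c X) ε) (hv : v ∈ MX M X) (hvF : ¬ FinT M (insert v X))
    (hM : M c v ≠ 0) {x : (ι → ℝ) →ₗ[ℝ] ℝ} (hx : x ∈ G.U) (hxv : x (φ (al v)) = 0) :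
    0 < ε * x (φ θ) := by
  obtain ⟨hvX, z, hz, hMz⟩ := inf_type hF hvF
  obtain ⟨y, hy, hyc, hyv⟩ := C.F2 hM
  refine C.const hF hθ.1 (hθ.inf_hyp hvX hz hMz) hy hyv hx hxv ?_
  have hvc : v ∉ insert c X := by
    rintro (rfl | h)
    · exact hvF hcF
    · exact hvX h
  have hr := hθ.raise (hθ.B_neg hc)
  have h1 := (hG _ subset_rfl (hI.insert hc) hcF).1 _ hr v
    (hr.inf_hyp hvc (Set.mem_insert_of_mem c hz) hMz) y hy hyv
  rw [rf_apply] at h1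
  simpa [hyc] using h1

theorem Ctx.core (C : Ctx D G a φ) (hT : Twist cs) : ∀ X : Set ι, Irr M X → FinT M X →
    ∃ ε : ℝ, (ε = 1 ∨ ε = -1) ∧ Good D G φ X ε := by
  intro X
  induction X using WellFoundedGT.induction with
  | ind X IH =>
  intro hI hF
  by_cases hN : NW cs X
  · exact ⟨1, Or.inl rfl, hN.good hI.1 1⟩
  have hIH : ∀ c ∈ MX M X, FinT M (insert c X) →
      ∃ ε : ℝ, (ε = 1 ∨ ε = -1) ∧ Good D G φ (insert c X) ε := fun c hc hcF =>
    IH _ (Set.ssubset_insert hc.1) (hI.insert hc) hcF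
  by_cases hS : Sph cs X
  · have hne : (MX M X).Nonempty := by
      rw [Set.nonempty_iff_ne_empty]
      exact fun h => hN ⟨X, subset_rfl, hI, hS, h⟩
    by_cases hc0 : ∃ c ∈ MX M X, FinT M (insert c X)
    · obtain ⟨c0, hc0, hc0F⟩ := hc0
      obtain ⟨ε, hε, hG0⟩ := hIH c0 hc0 hc0F
      have hε0 : ε ≠ 0 := by rcases hε with rfl | rfl <;> norm_num
      obtain ⟨s, hs⟩ := hI.1
      obtain ⟨θ, hθ, _⟩ := dom_exists (D := D) hI hS hs
      have hR : ∀ m ∈ MX M X, (FinT M (insert m X) → Good D G φ (insert m X) ε) ∧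
          (¬ FinT M (insert m X) → ∀ x ∈ G.U, x (φ (al m)) = 0 → 0 < ε * x (φ θ)) := by
        intro m hm
        have hp := hT X hI hS c0 hc0 m hm
        clear hm
        induction hp with
        | refl => exact ⟨fun _ => hG0, fun h => (h hc0F).elim⟩
        | @tail b c _ hst ih =>
          obtain ⟨hb, hc, hM⟩ := hst
          by_cases hbF : FinT M (insert b X)
          · have hbG := ih.1 hbF
            refine ⟨fun hcF => ?_, fun hcF x hx hx0 => C.cross hI hF hθ hb hbF hbG hc hcF hM hx hx0⟩
            by_cases hbc : c = b
            · rw [hbc]; exact hbG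
            obtain ⟨ε', hε', hcG⟩ := hIH c hc hcF
            have hYF : FinT M (insert c (insert b X)) := by
              rintro p (rfl | rfl | hp) q (rfl | rfl | hq)
              · rw [M.diagonal]; norm_num
              · rw [M.symmetric]; exact hM
              · exact hcF _ (Set.mem_insert _ _) _ (Set.mem_insert_of_mem _ hq)
              · exact hM
              · rw [M.diagonal]; norm_num
              · exact hbF _ (Set.mem_insert _ _) _ (Set.mem_insert_of_mem _ hq)
              · exact hcF _ (Set.mem_insert_of_mem _ hp) _ (Set.mem_insert _ _)
              · exact hbF _ (Set.mem_insert_of_mem _ hp) _ (Set.mem_insert _ _)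
              · exact hF _ hp _ hq
            have hYI : Irr M (insert c (insert b X)) := by
              refine (hI.insert hb).insert ⟨?_, ?_⟩
              · rintro (h | h)
                · exact hbc h
                · exact hc.1 h
              · obtain ⟨j, hj, hj2⟩ := hc.2
                exact ⟨j, Set.mem_insert_of_mem _ hj, hj2⟩
            have hsub : X ⊆ insert c (insert b X) := fun i hi =>
              Set.mem_insert_of_mem _ (Set.mem_insert_of_mem _ hi)
            have := pm_eq hε hε' (C.good_unique hYI hYF (fun h => hN (h.mono hsub))
              (hbG.mono (Set.subset_insert _ _))
              (hcG.mono (Set.insert_subset_insert (Set.subset_insert _ _))))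
            rw [this]; exact hcG
          · have hbP := ih.2 hbF
            refine ⟨fun hcF => ?_, fun hcF x hx hx0 => ?_⟩
            · obtain ⟨ε', hε', hcG⟩ := hIH c hc hcF
              obtain ⟨x, hx, hx0⟩ := C.F1 b
              have h1 := C.cross hI hF hθ hc hcF hcG hb hbF (by rw [M.symmetric]; exact hM) hx hx0
              rw [sign_eq hε hε' (hbP x hx hx0) h1 one_pos (by ring)]
              exact hcG
            · obtain ⟨y, hy, hy1, hy2⟩ := C.F2 hM
              obtain ⟨hcX, z, hz, hMz⟩ := inf_type hF hcF
              exact C.const hF hθ.1 (hθ.inf_hyp hcX hz hMz) hy hy2 hx hx0 (hbP y hy hy1)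
      have hG : ∀ c ∈ MX M X, FinT M (insert c X) → Good D G φ (insert c X) ε :=
        fun c hc hcF => (hR c hc).1 hcF
      exact ⟨ε, hε, good_of hI (C.inner hT hI hF hε0 hG (fun h => (h hS).elim)
        (fun _ => ⟨c0, hc0, hc0F⟩)) (fun h => (h hS).elim) hG⟩
    · push Not at hc0
      obtain ⟨ε, hε, h1⟩ := C.even hT hI hS hc0 hne
      exact ⟨ε, hε, good_of hI h1 (fun h => (h hS).elim) fun c hc hcF => (hc0 c hc hcF).elim⟩
  · obtain ⟨ε, hε, hC⟩ := C.P.exists_can (C.iso hF) hI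
    have hε0 : ε ≠ 0 := by rcases hε with rfl | rfl <;> norm_num
    have hG : ∀ c ∈ MX M X, FinT M (insert c X) → Good D G φ (insert c X) ε := by
      intro c hc hcF
      obtain ⟨ε', hε', hcG⟩ := hIH c hc hcF
      have hS' : ¬ Sph cs (insert c X) := fun h => hS (h.mono (Set.subset_insert _ _))
      have hC' := ((hcG _ subset_rfl (hI.insert hc) hcF).2 hS').mono (Set.subset_insert _ _)
      rw [pm_eq hε hε' fun h => C.can_unique hF hS hC hC' h]
      exact hcG
    exact ⟨ε, hε, good_of hI (C.inner hT hI hF hε0 hG (fun _ => hC) (fun h => (hS h).elim))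
      (fun _ => hC) hG⟩

end TR

namespace TR
open Geo
variable {ι W : Type*} [Fintype ι] [DecidableEq ι] [Group W] {M : CoxeterMatrix ι}
variable {cs : CoxeterSystem M W} {D G : Geo cs} {a : MulAut W} {φ : (ι → ℝ) →ₗ[ℝ] (ι → ℝ)}

/-- rescaling of the basis images -/
noncomputable def sc (e : ι → ℝ) (φ : (ι → ℝ) →ₗ[ℝ] (ι → ℝ)) : (ι → ℝ) →ₗ[ℝ] (ι → ℝ) :=
  φ ∘ₗ LinearMap.pi (fun s => e s • LinearMap.proj s)

theorem sc_al (e : ι → ℝ) (φ : (ι → ℝ) →ₗ[ℝ] (ι → ℝ)) (s : ι) :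
    sc e φ (al s) = e s • φ (al s) := by
  unfold sc
  rw [LinearMap.comp_apply, ← map_smul]
  congr 1
  ext t
  by_cases h : t = s
  · subst h; simp
  · simp [al_ne h]

theorem sc_const {e : ι → ℝ} {K : Set ι} {c : ℝ} (h : ∀ s ∈ K, e s = c) {v : ι → ℝ} (hv : Sup K v) :
    sc e φ v = c • φ v := by
  conv_lhs => rw [sum_al v]
  conv_rhs => rw [sum_al v]
  simp only [map_sum, map_smul, sc_al, Finset.smul_sum]
  refine Finset.sum_congr rfl fun s _ => ?_
  by_cases hs : s ∈ K
  · rw [h s hs, smul_comm]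
  · rw [hv s hs]; simp

theorem Pm.sc (P : Pm G a φ) {e : ι → ℝ} (he : ∀ s, e s = 1 ∨ e s = -1) : Pm G a (sc e φ) where
  root s := by
    rw [sc_al]
    rcases he s with h | h
    · rw [h, one_smul]; exact P.root s
    · rw [h, neg_one_smul]; exact (P.root s).neg
  refl s := by
    rw [sc_al]
    rcases he s with h | h
    · rw [h, one_smul]; exact P.refl s
    · rw [h, neg_one_smul, rf_neg_root]; exact P.refl s

theorem irr_single (s : ι) : Irr M {s} := by
  refine ⟨⟨s, rfl⟩, fun K1 h1 hne _ => ?_⟩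
  obtain ⟨i, hi⟩ := hne
  rintro j rfl
  have := h1 hi
  rw [Set.mem_singleton_iff] at this
  exact this ▸ hi

theorem finT_single (s : ι) : FinT M {s} := by
  rintro _ rfl _ rfl
  rw [M.diagonal]; norm_num

/-- signs on simple generators -/
theorem Ctx.exists_sign (C : Ctx D G a φ) (hT : Twist cs) : ∃ e : ι → ℝ,
    (∀ s, e s = 1 ∨ e s = -1) ∧ (∀ s t, M s t ≠ 0 → M s t ≠ 2 → e s = e t) ∧
    ∀ s v, M s v = 0 → ∀ x ∈ G.U, x (φ (al v)) = 0 → 0 < e s * x (φ (al s)) := by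
  classical
  choose e0 he0 hG0 using fun s : ι => C.core hT {s} (irr_single s) (finT_single s)
  have hNW : ∀ s t, M s t ≠ 2 → NW cs {s} → NW cs {t} := by
    rintro s t hM ⟨Z, h1, h2, h3, h4⟩
    refine ⟨Z, ?_, h2, h3, h4⟩
    rw [Set.singleton_subset_iff]
    by_contra hc
    have : t ∈ MX M Z := ⟨hc, s, h1 rfl, hM⟩
    rw [h4] at this
    exact this
  have hG : ∀ s, Good D G φ {s} (if NW cs {s} then 1 else e0 s) := by
    intro s
    split_ifs with h
    · exact h.good ⟨s, rfl⟩ 1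
    · exact hG0 s
  refine ⟨fun s => if NW cs {s} then 1 else e0 s, fun s => ?_, fun s t h0 h2 => ?_,
    fun s v h0 x hx hxv => ?_⟩
  · by_cases h : NW cs {s}
    · left; simp [h]
    · simp only [h, if_false]; exact he0 s
  · by_cases hst : s = t
    · rw [hst]
    by_cases h : NW cs {s}
    · simp [h, hNW s t h2 h]
    · have h' : ¬ NW cs {t} := fun h' => h (hNW t s (by rw [M.symmetric]; exact h2) h')
      simp only [h, h', if_false]
      have hI : Irr M (insert t {s}) := (irr_single s).insert
        ⟨fun hh => hst (Set.mem_singleton_iff.mp hh).symm, s, rfl, h2⟩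
      have hF : FinT M (insert t {s}) := by
        rintro p (rfl | rfl) q (rfl | rfl)
        · rw [M.diagonal]; norm_num
        · rw [M.symmetric]; exact h0
        · exact h0
        · rw [M.diagonal]; norm_num
      exact pm_eq (he0 s) (he0 t) (C.good_unique hI hF
        (fun hh => h (hh.mono (Set.subset_insert _ _))) ((hG0 s).mono (Set.subset_insert _ _))
        ((hG0 t).mono (by rintro _ rfl; exact Set.mem_insert _ _)))
  · refine (hG s _ subset_rfl (irr_single s) (finT_single s)).1 (al s)
      ⟨al_PK rfl, ?_⟩ v (by simpa using D.inf s v h0) x hx hxv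
    rintro _ rfl
    simp

/-- mutually positive walls have form value at most `-1` -/
theorem wall_pair {u v : ι → ℝ} (hu : G.Root u) (hv : G.Root v)
    (h1 : ∀ x ∈ G.U, x v = 0 → 0 < x u) (h2 : ∀ x ∈ G.U, x u = 0 → 0 < x v) : G.B u v ≤ -1 := by
  by_contra hc
  push Not at hc
  by_cases hB : G.B u v < 1
  · obtain ⟨x, hx, hx1, hx2⟩ := ell hu hv (abs_lt.mpr ⟨hc, hB⟩)
    have := h1 x hx hx2
    linarith
  · push Not at hB
    have hx := wall_mem ht_mem_U hv
    have hxv := wall_self hv ht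
    set x := G.wall v ht
    have hxu := h1 x hx hxv
    have hy := U_rf hx hu
    have hz := wall_mem ht_mem_U hu
    have hzu := wall_self hu ht
    set z := G.wall u ht
    have hzv := h2 z hz hzu
    have e1 : (x ∘ₗ G.rf u) u = - x u := by
      rw [LinearMap.comp_apply, rf_self _ hu.norm, map_neg]
    have e2 : (x ∘ₗ G.rf u) v = - (2 * G.B u v * x u) := by
      rw [LinearMap.comp_apply, rf_apply, map_sub, map_smul, hxv, G.B_comm v u]; simp
    have e2' : (x ∘ₗ G.rf u) v < 0 := by
      rw [e2]
      have := mul_pos (show 0 < G.B u v by linarith) hxu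
      linarith
    have hw : (z v) • (x ∘ₗ G.rf u) + (-((x ∘ₗ G.rf u) v)) • z ∈ G.U :=
      U_add (U_smul hy hzv) (U_smul hz (by linarith))
    have := h1 _ hw (by simp only [LinearMap.add_apply, LinearMap.smul_apply, smul_eq_mul]; ring)
    simp only [LinearMap.add_apply, LinearMap.smul_apply, smul_eq_mul, hzu, e1, mul_zero, add_zero]
      at this
    have := mul_pos hzv hxu
    linarith

theorem Ctx.exists_geo (C : Ctx D G a φ) (hT : Twist cs) : ∃ (D' : Geo cs)
    (φ' : (ι → ℝ) →ₗ[ℝ] (ι → ℝ)), Pm G a φ' ∧ Iso D' G φ' Set.univ := by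
  obtain ⟨e, he, hf, hi⟩ := C.exists_sign hT
  have hesq : ∀ s, e s * e s = 1 := by
    intro s
    rcases he s with h | h <;> rw [h] <;> norm_num
  have P' := C.P.sc he
  refine ⟨⟨fun s t => G.B (sc e φ (al s)) (sc e φ (al t)), fun s t => G.B_comm _ _, ?_, ?_⟩, sc e φ,
    P', fun s _ t _ => rfl⟩
  · intro s t h
    rw [← D.fin s t h]
    simp only [sc_al, map_smul, LinearMap.smul_apply, smul_eq_mul, C.fin s t h]
    by_cases h2 : M s t = 2
    · rw [(D.k_eq_zero_iff (M_ne (by rw [h2]; norm_num))).mpr h2]; ring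
    · rw [hf s t h h2]
      linear_combination (D.k s t) * hesq t
  · intro s t h
    have hne : ∀ s, e s ≠ 0 := fun s hs => by have := hesq s; rw [hs] at this; norm_num at this
    have key : ∀ s t, M s t = 0 → ∀ x ∈ G.U, x (sc e φ (al t)) = 0 → 0 < x (sc e φ (al s)) := by
      intro s t h x hx hx0
      rw [sc_al, map_smul, smul_eq_mul] at *
      exact hi s t h x hx ((mul_eq_zero.mp hx0).resolve_left (hne t))
    exact wall_pair (P'.root s) (P'.root t) (key s t h) (key t s (by rw [M.symmetric]; exact h))

/-- connected component -/
def cmp (M : CoxeterMatrix ι) (s : ι) : Set ι := {t | Relation.ReflTransGen (fun x y => M x y ≠ 2) s t}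

theorem rtg_symm {x y : ι} (h : Relation.ReflTransGen (fun x y => M x y ≠ 2) x y) :
    Relation.ReflTransGen (fun x y => M x y ≠ 2) y x := by
  induction h with
  | refl => exact .refl
  | @tail b c _ hbc ih =>
    refine Relation.ReflTransGen.head ?_ ih
    rw [M.symmetric]; exact hbc

theorem cmp_irr (s : ι) : Irr M (cmp M s) := by
  refine ⟨⟨s, Relation.ReflTransGen.refl⟩, fun K1 h1 ⟨i, hi⟩ hp => ?_⟩
  intro t ht
  have hit : Relation.ReflTransGen (fun x y => M x y ≠ 2) i t := (rtg_symm (h1 hi)).trans ht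
  clear ht
  induction hit with
  | refl => exact hi
  | @tail b c _ hbc ih =>
    by_contra hc
    exact hbc (hp b ih c ((h1 ih).tail hbc) hc)

theorem cmp_eq {s t : ι} (h : M s t ≠ 2) : cmp M s = cmp M t := by
  have h' : M t s ≠ 2 := by rw [M.symmetric]; exact h
  ext x
  exact ⟨fun hx => Relation.ReflTransGen.head h' hx, fun hx => Relation.ReflTransGen.head h hx⟩

theorem cmp_closed {s t u : ι} (ht : t ∈ cmp M s) (h : M t u ≠ 2) : u ∈ cmp M s := ht.tail h

theorem cmp_sup (D : Geo cs) (s : ι) (w : W) : ∀ {v : ι → ℝ}, Sup (cmp M s) v →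
    Sup (cmp M s) (D.ρ w v) := by
  induction w using cs.simple_induction_left with
  | one => intro v hv; simpa using hv
  | mul_simple_left w t ih =>
    intro v hv
    have h1 := ih hv
    rw [map_mul, Module.End.mul_apply, ρ_simple]
    by_cases ht : t ∈ cmp M s
    · exact Geo.Sup.rf_al ht h1
    · have : D.B (D.ρ w v) (al t) = 0 := by
        rw [B_al_right]
        refine Finset.sum_eq_zero fun i _ => ?_
        by_cases hi : i ∈ cmp M s
        · have hit : i ≠ t := by rintro rfl; exact ht hi
          rw [(D.k_eq_zero_iff hit).mpr, mul_zero]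
          by_contra hc
          exact ht (cmp_closed hi hc)
        · rw [h1 i hi, zero_mul]
      rw [rf_apply, this]
      simpa using h1

theorem cmp_root {g : ι → ℝ} (hg : D.Root g) : ∃ s, Sup (cmp M s) g := by
  obtain ⟨w, s, rfl⟩ := hg
  exact ⟨s, cmp_sup D s w (sup_al Relation.ReflTransGen.refl)⟩

/-- canonical positivity on all of the root system after adjusting signs -/
theorem exists_global (P : Pm G a φ) (h : Iso D G φ Set.univ) : ∃ φ' : (ι → ℝ) →ₗ[ℝ] (ι → ℝ),
    Pm G a φ' ∧ Iso D G φ' Set.univ ∧ Can D G φ' Set.univ 1 := by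
  have hK : ∀ s, ∃ ε : ℝ, (ε = 1 ∨ ε = -1) ∧ Can D G φ (cmp M s) ε := fun s =>
    P.exists_can (h.mono (Set.subset_univ _)) (cmp_irr s)
  have hK' : ∀ K : Set ι, ∃ ε : ℝ, (ε = 1 ∨ ε = -1) ∧ ((∃ s, K = cmp M s) → Can D G φ K ε) := by
    intro K
    by_cases hh : ∃ s, K = cmp M s
    · obtain ⟨s, rfl⟩ := hh
      obtain ⟨ε, h1, h2⟩ := hK s
      exact ⟨ε, h1, fun _ => h2⟩
    · exact ⟨1, Or.inl rfl, fun h => (hh h).elim⟩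
  choose η hη hC using hK'
  have hesq : ∀ s, η (cmp M s) * η (cmp M s) = 1 := by
    intro s
    rcases hη (cmp M s) with h | h <;> rw [h] <;> norm_num
  refine ⟨sc (fun s => η (cmp M s)) φ, P.sc fun s => hη _, fun s _ t _ => ?_, fun x hx => ?_⟩
  · simp only [sc_al, map_smul, LinearMap.smul_apply, smul_eq_mul, h s trivial t trivial]
    by_cases h2 : M s t = 2
    · rw [(D.k_eq_zero_iff (M_ne (by rw [h2]; norm_num))).mpr h2]; ring
    · rw [cmp_eq h2]
      linear_combination (D.k s t) * hesq t
  · refine (Set.finite_iUnion fun s : ι => hC (cmp M s) ⟨s, rfl⟩ x hx).subset ?_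
    rintro g ⟨hg, hneg⟩
    obtain ⟨s, hs⟩ := cmp_root hg.1.root
    refine Set.mem_iUnion.mpr ⟨s, ⟨hg.1, hs⟩, ?_⟩
    rw [sc_const (K := cmp M s) (c := η (cmp M s)) ?_ hs, map_smul, smul_eq_mul, one_mul] at hneg
    · exact hneg
    · intro t ht
      congr 1
      ext u
      have hsymm : Relation.ReflTransGen (fun x y => M x y ≠ 2) t s :=
        rtg_symm ht
      exact ⟨fun hu => ht.trans hu, fun hu => hsymm.trans hu⟩

theorem Ctx.concl (C : Ctx D G a φ) (hT : Twist cs)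
    (hconj : ∀ t, ∃ w, a (cs.simple t) = w * cs.simple t * w⁻¹) :
    ∃ g : W, ∀ s, ∃ t, g * a (cs.simple s) * g⁻¹ = cs.simple t := by
  obtain ⟨D', φ', P', hI'⟩ := C.exists_geo hT
  obtain ⟨ψ, P, hI, hC⟩ := exists_global P' hI'
  have hwp : ∀ w : W, w ∈ WP cs Set.univ := by
    intro w
    rw [WP, Set.image_univ, cs.subgroup_closure_range_simple]
    trivial
  obtain ⟨w, _, hw⟩ := move (G := D') (ht ∘ₗ ψ) Set.univ (by
    have := hC ht ht_mem_U
    simpa using this)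
  have hact : ∀ (w : W) (v : ι → ℝ), ψ (D'.ρ w v) = G.ρ (a w) (ψ v) := fun w v =>
    P.act hI (hwp w) (sup_univ v)
  have hη : ∀ q, G.PR (G.ρ (a w) (ψ (al q))) := by
    intro q
    have h1 := hw q trivial
    rw [LinearMap.comp_apply, hact] at h1
    refine ((P.root q).act G (a w)).pr.resolve_right fun h2 => ?_
    have := h2.ht_ge
    rw [map_neg] at this
    linarith
  have hr : ∀ q, G.ρ (a w * a (cs.simple q) * (a w)⁻¹) = G.rf (G.ρ (a w) (ψ (al q))) := fun q =>
    rf_conj G _ _ _ (P.refl q)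
  have hex : ∀ t, ∃ s, a w * a (cs.simple s) * (a w)⁻¹ = cs.simple t := by
    intro t
    obtain ⟨p, hp⟩ := hconj t
    -- a root mapping to `± al t`
    set q := (a.symm p)⁻¹ with hq
    have haq : a (w⁻¹ * q) = (a w)⁻¹ * p⁻¹ := by
      rw [map_mul, map_inv, hq, map_inv]; simp
    have h1 : G.rf (ψ (D'.ρ (w⁻¹ * q) (al t))) = G.rf (G.ρ (a w)⁻¹ (al t)) := by
      rw [hact, haq, ← rf_conj G _ _ _ (P.refl t), ← rf_conj G _ _ _ (G.ρ_simple t), hp]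
      congr 1
      group
    have hroot : D'.Root (D'.ρ (w⁻¹ * q) (al t)) := (D'.root_al t).act D' _
    have h2 : ∃ γ, D'.PR γ ∧ (ψ γ = G.ρ (a w)⁻¹ (al t) ∨ ψ γ = - G.ρ (a w)⁻¹ (al t)) := by
      have h3 := rf_inj (G := G) (by rw [hact]; exact (P.root t).act G _)
        ((G.root_al t).act G _) h1
      rcases hroot.pr with h4 | h4
      · exact ⟨_, h4, h3⟩
      · refine ⟨_, h4, ?_⟩
        rw [map_neg]
        rcases h3 with h3 | h3
        · right; rw [h3]
        · left; rw [h3, neg_neg]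
    obtain ⟨γ, hγ, h3⟩ := h2
    have hsum : G.ρ (a w) (ψ γ) = ∑ s, γ s • G.ρ (a w) (ψ (al s)) := by
      conv_lhs => rw [sum_al γ]
      simp only [map_sum, map_smul]
    have hnn : ∀ j, 0 ≤ G.ρ (a w) (ψ γ) j := by
      intro j
      rw [hsum, Finset.sum_apply]
      exact Finset.sum_nonneg fun s _ => mul_nonneg (hγ.nonneg s) ((hη s).nonneg j)
    have h4 : G.ρ (a w) (ψ γ) = al t := by
      rcases h3 with h3 | h3
      · rw [h3, ρ_ρ_inv]
      · exfalso
        have := hnn t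
        rw [h3, map_neg, ρ_ρ_inv, Pi.neg_apply, al_self] at this
        linarith
    obtain ⟨s, hs⟩ := hγ.exists_pos
    refine ⟨s, ?_⟩
    have h5 : G.ρ (a w) (ψ (al s)) = al t := by
      refine PR.eq_al (hη s) fun j hj => ?_
      have h6 : ∑ s, γ s * G.ρ (a w) (ψ (al s)) j = 0 := by
        have := congrFun h4 j
        rw [hsum, Finset.sum_apply, al_ne hj] at this
        exact this
      have h7 := (Finset.sum_eq_zero_iff_of_nonneg (fun s _ =>
        mul_nonneg (hγ.nonneg s) ((hη s).nonneg j))).mp h6 s (Finset.mem_univ s)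
      exact (mul_eq_zero.mp h7).resolve_left (by linarith)
    apply ρ_inj (G := G)
    rw [hr, h5, ρ_simple]
  choose f hf using hex
  have hinj : Function.Injective f := by
    intro t t' h
    have : cs.simple t = cs.simple t' := by rw [← hf t, ← hf t', h]
    have h2 := rf_inj (G.root_al t) (G.root_al t') (by rw [← ρ_simple, ← ρ_simple, this])
    by_contra hne
    rcases h2 with h2 | h2
    · have := congrFun h2 t
      rw [al_self, al_ne hne] at this
      norm_num at this
    · have := congrFun h2 t
      rw [Pi.neg_apply, al_self, al_ne hne] at this
      norm_num at this
  have hsurj := Finite.surjective_of_injective hinj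
  refine ⟨a w, fun s => ?_⟩
  obtain ⟨t, rfl⟩ := hsurj s
  exact ⟨t, hf t⟩

end TR

namespace TR

theorem jac_int : IsJacobsonRing ℤ := by
  rw [isJacobsonRing_iff_prime_eq]
  intro P hP
  by_cases h : P = ⊥
  · subst h
    refine le_antisymm ?_ Ideal.le_jacobson
    intro x hx
    rw [Ideal.mem_jacobson_bot] at hx
    have h1 := hx x
    rw [Int.isUnit_iff] at h1
    rw [Ideal.mem_bot]
    rcases h1 with h1 | h1 <;> nlinarith [mul_self_nonneg x]
  · have := hP.isMaximal h
    exact Ideal.jacobson_eq_self_of_isMaximal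

theorem finite_field_int (F : Type*) [Field F] [Algebra.FiniteType ℤ F] : Finite F := by
  have := jac_int
  have hf : Module.Finite ℤ F := finite_of_finite_type_of_isJacobsonRing ℤ F
  by_cases hi : Function.Injective (algebraMap ℤ F)
  · have : Algebra.IsIntegral ℤ F := Algebra.IsIntegral.of_finite ℤ F
    have h2 := (Algebra.IsIntegral.isField_iff_isField (R := ℤ) (S := F) hi).2 (Field.toIsField F)
    exact absurd h2 Int.not_isField
  · rw [injective_iff_map_eq_zero] at hi
    push Not at hi
    obtain ⟨n, hn, hn0⟩ := hi
    refine Module.finite_of_fg_torsion F ?_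
    intro x
    refine ⟨⟨n, mem_nonZeroDivisors_of_ne_zero hn0⟩, ?_⟩
    change n • x = 0
    rw [Algebra.smul_def, hn, zero_mul]

theorem finite_field_int' {A F : Type} [CommRing A] [Algebra.FiniteType ℤ A] [Field F] (f : A →+* F)
    (hf : Function.Surjective f) : Finite F := by
  have : Algebra.FiniteType ℤ F := Algebra.FiniteType.of_surjective f.toIntAlgHom hf
  exact finite_field_int F

theorem exists_res (A : Type) [CommRing A] [IsDomain A] [Algebra.FiniteType ℤ A] (d : A) (hd : d ≠ 0) :
    ∃ (F : Type) (_ : Field F) (_ : Finite F) (θ : A →+* F), θ d ≠ 0 := by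
  have := jac_int
  have hj : IsJacobsonRing A := isJacobsonRing_of_finiteType (A := ℤ)
  have h1 : (⊥ : Ideal A).jacobson = ⊥ := hj.out (Ideal.isPrime_bot (α := A)).isRadical
  have h2 : d ∉ (⊥ : Ideal A).jacobson := by rw [h1]; simpa using hd
  simp only [Ideal.jacobson, Ideal.mem_sInf] at h2
  push Not at h2
  obtain ⟨m, ⟨-, hm⟩, hdm⟩ := h2
  letI : Field (A ⧸ m) := Ideal.Quotient.field m
  refine ⟨A ⧸ m, inferInstance, finite_field_int' (Ideal.Quotient.mk m) Ideal.Quotient.mk_surjective, Ideal.Quotient.mk m, ?_⟩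
  rwa [Ne, Ideal.Quotient.eq_zero_iff_mem]

/-- a subring of the reals, finitely generated, with finite residue field separating a finite set -/
theorem exists_res_real (X : Set ℝ) (hX : X.Finite) (N : Set ℝ) (hN : N.Finite) :
    ∃ (R : Subring ℝ) (F : Type) (_ : Field F) (_ : Finite F) (θ : R →+* F),
      X ⊆ R ∧ ∀ x : R, (x : ℝ) ∈ N → x ≠ 0 → θ x ≠ 0 := by
  classical
  let A : Subalgebra ℤ ℝ := Algebra.adjoin ℤ X
  have hA : Algebra.FiniteType ℤ A := by
    rw [← Subalgebra.fg_iff_finiteType]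
    have := Subalgebra.fg_adjoin_finset (R := ℤ) (A := ℝ) hX.toFinset
    rwa [hX.coe_toFinset] at this
  have hNA : {x : A | (x : ℝ) ∈ N ∧ x ≠ 0}.Finite := by
    refine (hN.preimage (f := fun x : A => (x : ℝ)) Subtype.val_injective.injOn).subset ?_
    exact fun x hx => hx.1
  obtain ⟨F, i1, i2, θ, hθ⟩ := exists_res A (∏ x ∈ hNA.toFinset, x) (by
    rw [Finset.prod_ne_zero_iff]
    intro x hx
    exact ((Set.Finite.mem_toFinset _).1 hx).2)
  refine ⟨A.toSubring, F, i1, i2, θ, Algebra.subset_adjoin, ?_⟩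
  intro x hx hx0 h0
  apply hθ
  rw [map_prod]
  exact Finset.prod_eq_zero ((Set.Finite.mem_toFinset hNA).2 ⟨hx, hx0⟩) h0

end TR

namespace TR
open Geo
variable {ι W : Type*} [Fintype ι] [DecidableEq ι] [Group W] {M : CoxeterMatrix ι}
variable {cs : CoxeterSystem M W} {D : Geo cs}

/-- the standard (Tits) form -/
noncomputable def stdGeo (cs : CoxeterSystem M W) : Geo cs where
  k s t := if M s t = 0 then -1 else - Real.cos (Real.pi / M s t)
  symm s t := by rw [M.symmetric s t]
  fin s t h := by rw [if_neg h]
  inf s t h := by rw [if_pos h]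

section Cong
variable {R : Subring ℝ} {F : Type} [Field F] {θ : R →+* F}

open Classical in
noncomputable def TT (θ : R →+* F) (x : ℝ) : F := if h : x ∈ R then θ ⟨x, h⟩ else 0

theorem TT_of {x : ℝ} (h : x ∈ R) : TT θ x = θ ⟨x, h⟩ := by rw [TT, dif_pos h]

theorem TT_zero : TT θ 0 = 0 := by rw [TT_of R.zero_mem]; exact map_zero θ
theorem TT_one : TT θ 1 = 1 := by rw [TT_of R.one_mem]; exact map_one θ
theorem TT_add {x y : ℝ} (hx : x ∈ R) (hy : y ∈ R) : TT θ (x + y) = TT θ x + TT θ y := by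
  rw [TT_of hx, TT_of hy, TT_of (R.add_mem hx hy), ← map_add]; rfl
theorem TT_mul {x y : ℝ} (hx : x ∈ R) (hy : y ∈ R) : TT θ (x * y) = TT θ x * TT θ y := by
  rw [TT_of hx, TT_of hy, TT_of (R.mul_mem hx hy), ← map_mul]; rfl
theorem TT_sub {x y : ℝ} (hx : x ∈ R) (hy : y ∈ R) : TT θ (x - y) = TT θ x - TT θ y := by
  rw [TT_of hx, TT_of hy, TT_of (R.sub_mem hx hy), ← map_sub]; rfl
theorem TT_neg {x : ℝ} (hx : x ∈ R) : TT θ (-x) = - TT θ x := by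
  rw [TT_of hx, TT_of (R.neg_mem hx), ← map_neg]; rfl
theorem two_mem (R : Subring ℝ) : (2:ℝ) ∈ R := by
  rw [← one_add_one_eq_two]; exact R.add_mem R.one_mem R.one_mem
theorem TT_two : TT θ 2 = 2 := by
  rw [← one_add_one_eq_two, TT_add R.one_mem R.one_mem, TT_one, one_add_one_eq_two]
theorem TT_sum {κ : Type*} (s : Finset κ) (f : κ → ℝ) (hf : ∀ i, f i ∈ R) :
    TT θ (∑ i ∈ s, f i) = ∑ i ∈ s, TT θ (f i) := by
  classical
  induction s using Finset.induction_on with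
  | empty => simp [TT_zero]
  | insert a s ha ih =>
    rw [Finset.sum_insert ha, Finset.sum_insert ha, TT_add (hf a) (R.sum_mem fun i _ => hf i), ih]

def Intg (R : Subring ℝ) (v : ι → ℝ) : Prop := ∀ s, v s ∈ R

theorem intg_al (s : ι) : Intg R (al s) := by
  intro t; rw [al_apply]; split_ifs
  · exact R.one_mem
  · exact R.zero_mem

theorem two_B (D : Geo cs) (u v : ι → ℝ) : 2 * D.B u v = ∑ s, ∑ t, u s * (2 * D.k s t) * v t := by
  rw [B_sum, Finset.mul_sum]
  refine Finset.sum_congr rfl fun s _ => ?_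
  rw [Finset.mul_sum]
  exact Finset.sum_congr rfl fun t _ => by ring

variable (hk : ∀ s t, 2 * D.k s t ∈ R)

theorem Intg.B {u v : ι → ℝ} (hk : ∀ s t, 2 * D.k s t ∈ R) (hu : Intg R u) (hv : Intg R v) :
    2 * D.B u v ∈ R := by
  rw [two_B]
  exact R.sum_mem fun s _ => R.sum_mem fun t _ => R.mul_mem (R.mul_mem (hu s) (hk s t)) (hv t)

theorem TT_B {u v : ι → ℝ} (hk : ∀ s t, 2 * D.k s t ∈ R) (hu : Intg R u) (hv : Intg R v) :
    TT θ (2 * D.B u v) = ∑ s, ∑ t, TT θ (u s) * TT θ (2 * D.k s t) * TT θ (v t) := by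
  rw [two_B, TT_sum _ _ fun s => R.sum_mem fun t _ =>
    R.mul_mem (R.mul_mem (hu s) (hk s t)) (hv t)]
  refine Finset.sum_congr rfl fun s _ => ?_
  rw [TT_sum _ _ fun t => R.mul_mem (R.mul_mem (hu s) (hk s t)) (hv t)]
  refine Finset.sum_congr rfl fun t _ => ?_
  rw [TT_mul (R.mul_mem (hu s) (hk s t)) (hv t), TT_mul (hu s) (hk s t)]

theorem Intg.rf {g v : ι → ℝ} (hk : ∀ s t, 2 * D.k s t ∈ R) (hg : Intg R g) (hv : Intg R v) :
    Intg R (D.rf g v) := by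
  intro s
  rw [rf_apply]
  exact R.sub_mem (hv s) (R.mul_mem (Intg.B hk hv hg) (hg s))

theorem Intg.ρ {v : ι → ℝ} (hk : ∀ s t, 2 * D.k s t ∈ R) (hv : Intg R v) (w : W) :
    Intg R (D.ρ w v) := by
  induction w using cs.simple_induction_left with
  | one => simpa using hv
  | mul_simple_left w s ih =>
    rw [map_mul, Module.End.mul_apply, ρ_simple]
    exact Intg.rf hk (intg_al s) ih

/-- reduction of the geometric representation -/
noncomputable def qq (D : Geo cs) (θ : R →+* F) (hk : ∀ s t, 2 * D.k s t ∈ R) :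
    W →* Matrix ι ι F where
  toFun w := Matrix.of fun i j => TT θ (D.ρ w (al j) i)
  map_one' := by
    ext i j
    simp only [Matrix.of_apply, map_one, Module.End.one_apply, al_apply, Matrix.one_apply]
    split_ifs
    · exact TT_one
    · exact TT_zero
  map_mul' w w' := by
    ext i j
    simp only [Matrix.of_apply, Matrix.mul_apply]
    have h : D.ρ (w * w') (al j) i = ∑ k, D.ρ w (al k) i * D.ρ w' (al j) k := by
      rw [map_mul, Module.End.mul_apply]
      conv_lhs => rw [sum_al (D.ρ w' (al j))]
      rw [map_sum, Finset.sum_apply]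
      refine Finset.sum_congr rfl fun k _ => ?_
      rw [map_smul, Pi.smul_apply, smul_eq_mul, mul_comm]
    have h1 : ∀ k, D.ρ w (al k) i ∈ R := fun k => Intg.ρ hk (intg_al k) w i
    have h2 : ∀ k, D.ρ w' (al j) k ∈ R := fun k => Intg.ρ hk (intg_al j) w' k
    rw [h, TT_sum _ _ fun k => R.mul_mem (h1 k) (h2 k)]
    exact Finset.sum_congr rfl fun k _ => TT_mul (h1 k) (h2 k)

theorem qq_apply (D : Geo cs) (hk : ∀ s t, 2 * D.k s t ∈ R) (w : W) (i j : ι) :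
    qq D θ hk w i j = TT θ (D.ρ w (al j) i) := rfl

theorem rf_cong (hk : ∀ s t, 2 * D.k s t ∈ R) (h2 : (2 : F) ≠ 0) {s : ι} {g : ι → ℝ} (hg : Intg R g)
    (h : ∀ i, TT θ (D.rf g (al s) i) = TT θ (D.rf (al s) (al s) i)) :
    (∀ i, TT θ (g i) = TT θ (al s i)) ∨ (∀ i, TT θ ((-g) i) = TT θ (al s i)) := by
  set c := TT θ (2 * D.B (al s) g) with hc
  have hcg : ∀ i, c * TT θ (g i) = 2 * TT θ (al s i) := by
    intro i
    have h1 := h i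
    rw [rf_apply, rf_apply, Pi.sub_apply, Pi.sub_apply, Pi.smul_apply, Pi.smul_apply, smul_eq_mul,
      smul_eq_mul, TT_sub (intg_al s i) (R.mul_mem (Intg.B hk (intg_al s) hg) (hg i)),
      TT_sub (intg_al s i) (R.mul_mem (Intg.B hk (intg_al s) (intg_al s)) (intg_al s i)),
      TT_mul (Intg.B hk (intg_al s) hg) (hg i),
      TT_mul (Intg.B hk (intg_al s) (intg_al s)) (intg_al s i), B_al, k_self, mul_one, TT_two] at h1
    exact sub_right_injective h1
  have hc0 : c ≠ 0 := by
    intro h0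
    have := hcg s
    rw [h0, zero_mul, al_self, TT_one, mul_one] at this
    exact h2 this.symm
  set l := TT θ (g s) with hl
  have hgl : ∀ i, TT θ (g i) = l * TT θ (al s i) := by
    intro i
    apply mul_left_cancel₀ hc0
    have := hcg s
    rw [al_self, TT_one, mul_one, ← hl] at this
    rw [hcg i, ← mul_assoc, this]
  have hc2 : c = 2 * l := by
    rw [hc, TT_B hk (intg_al s) hg]
    have : TT θ (2 * D.B (al s) (al s)) = 2 := by rw [B_al, k_self, mul_one, TT_two]
    rw [TT_B hk (intg_al s) (intg_al s)] at this
    rw [← this, Finset.sum_mul]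
    refine Finset.sum_congr rfl fun i _ => ?_
    rw [Finset.sum_mul]
    refine Finset.sum_congr rfl fun j _ => ?_
    rw [hgl j]; ring
  have hl2 : l * l = 1 := by
    have := hcg s
    rw [al_self, TT_one, mul_one, ← hl, hc2, mul_assoc] at this
    apply mul_left_cancel₀ h2
    rw [this, mul_one]
  rcases mul_self_eq_one_iff.1 hl2 with h1 | h1
  · left; intro i; rw [hgl i, h1, one_mul]
  · right; intro i; rw [Pi.neg_apply, TT_neg (hg i), hgl i, h1]; ring

theorem stab_closure {x : (ι → ℝ) →ₗ[ℝ] ℝ} {X : Set W} (h : ∀ w ∈ X, x ∘ₗ D.ρ w = x) {w : W}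
    (hw : w ∈ Subgroup.closure X) : x ∘ₗ D.ρ w = x := by
  induction hw using Subgroup.closure_induction with
  | mem w hw => exact h w hw
  | one => ext; simp
  | mul a b _ _ ha hb =>
    refine LinearMap.ext fun v => ?_
    have h1 := LinearMap.congr_fun ha (D.ρ b v)
    have h2 := LinearMap.congr_fun hb v
    simp only [LinearMap.comp_apply] at h1 h2
    rw [LinearMap.comp_apply, map_mul, Module.End.mul_apply, h1, h2]
  | inv a _ ha =>
    refine LinearMap.ext fun v => ?_
    have h1 := LinearMap.congr_fun ha (D.ρ a⁻¹ v)
    simp only [LinearMap.comp_apply] at h1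
    rw [ρ_ρ_inv] at h1
    rw [LinearMap.comp_apply, h1]

theorem abs_k_lt (D : Geo cs) {s t : ι} (h : s ≠ t) (hM : M s t ≠ 0) : |D.B (al s) (al t)| < 1 := by
  rw [B_al, abs_lt]
  exact ⟨D.k_lt_one h hM, lt_of_le_of_lt (D.k_le_zero h) one_pos⟩

theorem sph_pair (D : Geo cs) {s t : ι} (h : s ≠ t) (hM : M s t ≠ 0) :
    (Subgroup.closure {cs.simple s, cs.simple t} : Set W).Finite := by
  obtain ⟨x, hx, h1, h2⟩ := ell (D.root_al s) (D.root_al t) (abs_k_lt D h hM)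
  refine (stab_finite hx).subset fun w hw => stab_closure (X := {cs.simple s, cs.simple t}) ?_ hw
  have key : ∀ u : ι, x (al u) = 0 → x ∘ₗ D.ρ (cs.simple u) = x := by
    intro u hu
    refine LinearMap.ext fun v => ?_
    rw [LinearMap.comp_apply, ρ_simple, rf_apply, map_sub, map_smul, hu, smul_zero, sub_zero]
  rintro w (rfl | rfl)
  · exact key s h1
  · exact key t h2

theorem pair_FV {γ : MulAut W} {s t : ι} (h : s ≠ t) (hM : M s t ≠ 0) {u v : ι → ℝ} (hu : D.Root u)
    (hv : D.Root v) (h1 : D.ρ (γ (cs.simple s)) = D.rf u) (h2 : D.ρ (γ (cs.simple t)) = D.rf v) :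
    D.B u v ∈ D.FV := by
  obtain ⟨x, hx, hf⟩ := exists_fixed D ((Subgroup.closure {cs.simple s, cs.simple t}).map
    γ.toMonoidHom) (by
      rw [Subgroup.coe_map]; exact (sph_pair D h hM).image _)
  have m : ∀ w ∈ ({cs.simple s, cs.simple t} : Set W), x ∘ₗ D.ρ (γ w) = x := fun w hw =>
    hf _ ⟨w, Subgroup.subset_closure hw, rfl⟩
  refine mem_FV hx hu hv (fixed_zero hu ?_) (fixed_zero hv ?_)
  · rw [← h1]; exact m _ (Set.mem_insert _ _)
  · rw [← h2]; exact m _ (Set.mem_insert_of_mem _ rfl)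

theorem exists_ctx (hk : ∀ s t, 2 * D.k s t ∈ R) (h2 : (2 : F) ≠ 0)
    (hsep : ∀ x : R, (∃ f ∈ D.FV, ∃ f' ∈ D.FV, (x : ℝ) = 2 * f - 2 * f') → θ x = 0 → x = 0)
    {γ : MulAut W} (hq : ∀ w, qq D θ hk (γ w) = qq D θ hk w)
    (hconj : ∀ t, ∃ w, γ (cs.simple t) = w * cs.simple t * w⁻¹) :
    ∃ φ, Ctx D D γ φ := by
  have hb : ∀ s, ∃ b : ι → ℝ, D.Root b ∧ Intg R b ∧ D.ρ (γ (cs.simple s)) = D.rf b ∧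
      ∀ i, TT θ (b i) = TT θ (al s i) := by
    intro s
    obtain ⟨w, hw⟩ := hconj s
    have hρ : D.ρ (γ (cs.simple s)) = D.rf (D.ρ w (al s)) := by
      rw [hw]; exact rf_conj D w _ _ (D.ρ_simple s)
    have hI : Intg R (D.ρ w (al s)) := Intg.ρ hk (intg_al s) w
    have hr : D.Root (D.ρ w (al s)) := (D.root_al s).act D w
    rcases rf_cong (θ := θ) hk h2 (s := s) hI (by
      intro i
      have := congrFun (congrFun (hq (cs.simple s)) i) s
      rwa [qq_apply, qq_apply, hρ, ρ_simple] at this) with h | h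
    · exact ⟨_, hr, hI, hρ, h⟩
    · exact ⟨_, hr.neg, fun i => R.neg_mem (hI i), by rw [rf_neg_root]; exact hρ, h⟩
  choose b hb1 hb2 hb3 hb4 using hb
  have hφ : ∀ s, (Pi.basisFun ℝ ι).constr ℝ b (al s) = b s := by
    intro s
    have : al s = Pi.basisFun ℝ ι s := by simp [al]
    rw [this, Module.Basis.constr_basis]
  refine ⟨(Pi.basisFun ℝ ι).constr ℝ b, ⟨fun s => ?_, fun s => ?_⟩, fun s t hM => ?_⟩
  · rw [hφ]; exact hb1 s
  · rw [hφ]; exact hb3 s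
  · rw [hφ, hφ]
    by_cases hst : s = t
    · subst hst; rw [(hb1 s).norm, k_self]
    · have e1 : 2 * D.B (b s) (b t) ∈ R := Intg.B hk (hb2 s) (hb2 t)
      have := hsep ⟨_, R.sub_mem e1 (hk s t)⟩ ⟨_, pair_FV hst hM (hb1 s) (hb1 t) (hb3 s) (hb3 t), _, by
        have := ell_mem_FV (D.root_al s) (D.root_al t) (abs_k_lt D hst hM)
        rwa [B_al] at this, rfl⟩ (by
        rw [← TT_of (R.sub_mem e1 (hk s t)), TT_sub e1 (hk s t), sub_eq_zero, TT_B hk (hb2 s) (hb2 t),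
          ← B_al D, TT_B hk (intg_al s) (intg_al t)]
        simp only [hb4])
      have := congrArg Subtype.val this
      simp only [ZeroMemClass.coe_zero] at this
      linarith

end Cong

theorem finite_perm (cs : CoxeterSystem M W) :
    {p : MulAut W | ∀ s, ∃ t, p (cs.simple s) = cs.simple t}.Finite := by
  have h1 : (Set.pi Set.univ fun _ : ι => Set.range cs.simple).Finite :=
    Set.Finite.pi fun _ => Set.finite_range _
  refine Set.Finite.of_injOn (f := fun (p : MulAut W) (s : ι) => p (cs.simple s)) ?_ ?_ h1
  · intro p hp s _
    obtain ⟨t, ht⟩ := hp s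
    exact ⟨t, ht.symm⟩
  · intro p _ p' _ h
    have : (p.toMonoidHom : W →* W) = p'.toMonoidHom := cs.ext_simple fun s => congrFun h s
    exact MulEquiv.ext fun w => DFunLike.congr_fun this w

theorem finite_out (cs : CoxeterSystem M W) (hT : Twist cs) :
    Finite (MulAut W ⧸ (MulAut.conj : W →* MulAut W).range) := by
  classical
  set D := stdGeo cs
  obtain ⟨R, F, iF, iFin, θ, hX, hN⟩ := exists_res_real (Set.range fun p : ι × ι => 2 * D.k p.1 p.2)
    (Set.finite_range _) (insert 2 (Set.image2 (fun f f' => 2 * f - 2 * f') D.FV D.FV))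
    ((Set.Finite.image2 _ FV_finite FV_finite).insert _)
  have hk : ∀ s t, 2 * D.k s t ∈ R := fun s t => hX ⟨(s, t), rfl⟩
  have h2 : (2 : F) ≠ 0 := by
    have := hN ⟨2, two_mem R⟩ (Set.mem_insert _ _) (by
      intro h; have := congrArg Subtype.val h; simp at this)
    rwa [← TT_of (two_mem R), TT_two] at this
  have hsep : ∀ x : R, (∃ f ∈ D.FV, ∃ f' ∈ D.FV, (x : ℝ) = 2 * f - 2 * f') → θ x = 0 → x = 0 := by
    rintro x ⟨f, hf, f', hf', he⟩ h0
    by_contra hx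
    exact hN x (Set.mem_insert_of_mem _ ⟨f, hf, f', hf', he.symm⟩) hx h0
  let q := qq D θ hk
  let c : MulAut W → (ι → Matrix ι ι F) × (ι → ConjClasses W) := fun α =>
    (fun s => q (α⁻¹ (cs.simple s)), fun s => ConjClasses.mk (α (cs.simple s)))
  obtain ⟨n, hn⟩ := fin_order_bound D
  have hc : (Set.range c).Finite := by
    have hCl : (Set.pi Set.univ fun _ : ι => ConjClasses.mk '' {w : W | cs.length w ≤ n}).Finite :=
      Set.Finite.pi fun _ => (finite_length_le cs n).image _
    have hMx : (Set.univ : Set (ι → Matrix ι ι F)).Finite := by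
      have : Finite (Matrix ι ι F) := inferInstanceAs (Finite (ι → ι → F))
      exact Set.finite_univ
    refine (hMx.prod hCl).subset ?_
    rintro _ ⟨α, rfl⟩
    refine ⟨Set.mem_univ _, fun s _ => ?_⟩
    have ho : IsOfFinOrder (α (cs.simple s)) := by
      rw [isOfFinOrder_iff_pow_eq_one]
      exact ⟨2, by norm_num, by rw [← map_pow, pow_two, cs.simple_mul_simple_self, map_one]⟩
    obtain ⟨w, hw⟩ := hn _ ho
    refine ⟨_, hw, ?_⟩
    rw [ConjClasses.mk_eq_mk_iff_isConj, isConj_iff]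
    exact ⟨w, by group⟩
  have key : ∀ α β : MulAut W, c α = c β → ∃ g : W, ∀ s, ∃ t,
      (MulAut.conj g * (α⁻¹ * β)) (cs.simple s) = cs.simple t := by
    intro α β h
    have hA : q.comp (α⁻¹ : MulAut W).toMonoidHom = q.comp (β⁻¹ : MulAut W).toMonoidHom :=
      cs.ext_simple fun s => congrFun (congrArg Prod.fst h) s
    have hq : ∀ w, q ((α⁻¹ * β) w) = q w := by
      intro w
      have := DFunLike.congr_fun hA (β w)
      simp only [MonoidHom.comp_apply] at this
      have e : (β⁻¹ : MulAut W) (β w) = w := MulAut.inv_apply_self _ _ _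
      calc q ((α⁻¹ * β) w) = q ((α⁻¹ : MulAut W) (β w)) := rfl
        _ = q ((β⁻¹ : MulAut W) (β w)) := this
        _ = q w := by rw [e]
    have hconj : ∀ t, ∃ w, (α⁻¹ * β) (cs.simple t) = w * cs.simple t * w⁻¹ := by
      intro t
      have := congrFun (congrArg Prod.snd h) t
      simp only [c] at this
      rw [ConjClasses.mk_eq_mk_iff_isConj, isConj_iff] at this
      obtain ⟨w, hw⟩ := this
      refine ⟨(α⁻¹ : MulAut W) w, ?_⟩
      rw [MulAut.mul_apply, ← hw, map_mul, map_mul, map_inv, MulAut.inv_apply_self]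
    obtain ⟨φ, C⟩ := exists_ctx hk h2 hsep hq hconj
    obtain ⟨g, hg⟩ := C.concl hT hconj
    exact ⟨g, hg⟩
  have hP := finite_perm cs
  have hsurj : ∀ x : MulAut W ⧸ (MulAut.conj : W →* MulAut W).range,
      x ∈ Set.image2 (fun y p => (QuotientGroup.mk (Function.invFun c y * p) :
        MulAut W ⧸ (MulAut.conj : W →* MulAut W).range)) (Set.range c)
        {p : MulAut W | ∀ s, ∃ t, p (cs.simple s) = cs.simple t} := by
    intro x
    induction x using QuotientGroup.induction_on with
    | H β =>
      set α := Function.invFun c (c β) with hα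
      have hαβ : c α = c β := Function.invFun_eq ⟨β, rfl⟩
      obtain ⟨g, hg⟩ := key α β hαβ
      refine ⟨c β, ⟨β, rfl⟩, MulAut.conj g * (α⁻¹ * β), hg, ?_⟩
      change (QuotientGroup.mk (α * (MulAut.conj g * (α⁻¹ * β))) :
        MulAut W ⧸ (MulAut.conj : W →* MulAut W).range) = QuotientGroup.mk β
      rw [eq_comm, QuotientGroup.eq]
      refine ⟨(β⁻¹ * α : MulAut W) g, ?_⟩
      ext w
      simp [MulAut.conj_apply, MulAut.mul_apply, mul_assoc]
  have hfin := Set.Finite.image2 (fun y p => (QuotientGroup.mk (Function.invFun c y * p) :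
        MulAut W ⧸ (MulAut.conj : W →* MulAut W).range)) hc hP
  exact Set.finite_univ_iff.1 (hfin.subset fun x _ => hsurj x)

end TR

namespace TR
open Geo

section Tr
variable {ι W : Type*} [Fintype ι] [DecidableEq ι] [Group W] {M : CoxeterMatrix ι}

theorem m_two_of_commute (cs : CoxeterSystem M W) {s t : ι} (h : s ≠ t)
    (hc : Commute (cs.simple s) (cs.simple t)) : M s t = 2 := by
  set D := stdGeo cs
  rw [← D.k_eq_zero_iff h]
  have h1 := congrArg (fun w => D.ρ w (al t)) hc.eq
  simp only [map_mul, Module.End.mul_apply, ρ_simple, rf_apply, map_sub, map_smul,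
    LinearMap.sub_apply, LinearMap.smul_apply, B_al, k_self, smul_eq_mul] at h1
  have h2 := congrFun h1 s
  simp only [Pi.sub_apply, Pi.smul_apply, smul_eq_mul, al_self, al_ne h] at h2
  rw [D.symm t s] at h2
  linarith

theorem commute_of_m_two (cs : CoxeterSystem M W) {s t : ι} (h : M s t = 2) :
    Commute (cs.simple s) (cs.simple t) := by
  have h1 := cs.simple_mul_simple_pow s t
  rw [h, pow_two] at h1
  have h2 : cs.simple s * cs.simple t = (cs.simple s * cs.simple t)⁻¹ := eq_inv_of_mul_eq_one_left h1
  rw [mul_inv_rev, cs.inv_simple, cs.inv_simple] at h2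
  exact h2

end Tr

theorem twist_of {W : Type*} [Group W] {S : Set W} [Fintype ↥S] [DecidableEq ↥S]
    {M : CoxeterMatrix ↥S} (cs : CoxeterSystem M W) (hs : ∀ s : S, cs.simple s = (s : W))
    (hTR : IsTwistRigid S) : Twist cs := by
  intro J hJ hSph
  have hcomm : ∀ {s t : ↥S}, s ≠ t → Commute (s : W) (t : W) → M s t = 2 := by
    intro s t h hc
    rw [← hs, ← hs] at hc
    exact m_two_of_commute cs h hc
  have himg : cs.simple '' J = Subtype.val '' J := Set.image_congr fun s _ => hs s
  have hmem : ∀ {s : ↥S}, (s : W) ∈ Subtype.val '' J ↔ s ∈ J := by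
    intro s
    exact Subtype.val_injective.mem_set_image
  have hconn := hTR (Subtype.val '' J) (by rintro _ ⟨s, -, rfl⟩; exact s.2) (by
      rintro ⟨K, L, ⟨k, hk⟩, ⟨l, hl⟩, hd, hU, hc⟩
      have hKJ : ∀ x ∈ K, ∃ s ∈ J, (s : W) = x := fun x hx => by
        have : x ∈ Subtype.val '' J := by rw [← hU]; exact Or.inl hx
        exact this
      have hLJ : ∀ x ∈ L, ∃ s ∈ J, (s : W) = x := fun x hx => by
        have : x ∈ Subtype.val '' J := by rw [← hU]; exact Or.inr hx
        exact this
      have hsub := hJ.2 {s | s ∈ J ∧ (s : W) ∈ K} (fun s h => h.1) (by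
        obtain ⟨s, hs1, rfl⟩ := hKJ k hk
        exact ⟨s, hs1, hk⟩) (by
        rintro i ⟨hi, hiK⟩ j hj hjK
        have hjL : (j : W) ∈ L := by
          have : (j : W) ∈ K ∪ L := by rw [hU]; exact hmem.2 hj
          rcases this with h | h
          · exact absurd ⟨hj, h⟩ hjK
          · exact h
        refine hcomm ?_ (hc _ hiK _ hjL)
        rintro rfl
        exact hjK ⟨hi, hiK⟩)
      obtain ⟨s, hs1, rfl⟩ := hLJ l hl
      exact Set.disjoint_left.1 hd (hsub hs1).2 hl) (by
      rw [← himg]; exact hSph)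
  set T := S \ (Subtype.val '' J ∪ perpIn S (Subtype.val '' J)) with hT
  have hTin : ∀ p : ↥S, p ∈ MX M J → (p : W) ∈ T := by
    rintro p ⟨h1, j, hj, h2⟩
    refine ⟨p.2, ?_⟩
    rintro (h | h)
    · exact h1 (hmem.1 h)
    · refine h2 (hcomm ?_ (h.2 j (hmem.2 hj)).symm)
      rintro rfl
      exact h1 hj
  have hTout : ∀ p : ↥S, (p : W) ∈ T → p ∈ MX M J := by
    rintro p ⟨-, h⟩
    have h1 : p ∉ J := fun hp => h (Or.inl (hmem.2 hp))
    refine ⟨h1, ?_⟩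
    by_contra hcon
    push Not at hcon
    refine h (Or.inr ⟨⟨p.2, fun hp => h1 (hmem.1 hp)⟩, ?_⟩)
    rintro _ ⟨j, hj, rfl⟩
    have := commute_of_m_two cs (hcon j hj)
    rw [hs, hs] at this
    exact this.symm
  intro p hp q hq
  have hpath := hconn p (hTin p hp) q (hTin q hq)
  have gen : ∀ y : W, Relation.ReflTransGen (fun x y => x ∈ T ∧ y ∈ T ∧ AdjacentElems x y) (p : W) y →
      ∀ y' : ↥S, (y' : W) = y →
      Relation.ReflTransGen (fun x y => x ∈ MX M J ∧ y ∈ MX M J ∧ M x y ≠ 0) p y' := by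
    intro y hy
    induction hy with
    | refl =>
      intro y' h
      rw [Subtype.ext h]
    | tail h1 h2 ih =>
      intro y' h
      obtain ⟨hb, hc, hadj⟩ := h2
      subst h
      refine (ih ⟨_, hb.1⟩ rfl).tail ⟨hTout ⟨_, hb.1⟩ hb, hTout _ hc, ?_⟩
      have hsp : Sph cs {(⟨_, hb.1⟩ : ↥S), y'} := by
        unfold Sph WP
        rw [Set.image_pair, hs, hs]
        exact hadj
      exact sph_fin (stdGeo cs) hsp _ (Set.mem_insert _ _) _ (Set.mem_insert_of_mem _ rfl)
  exact gen q hpath q rfl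

end TR

/-- A finitely generated group admitting a twist-rigid Coxeter generating
set has finite outer automorphism group. -/
theorem finite_out_of_twist_rigid
    {W : Type*} [Group W] (S : Set W)
    (hS : IsCoxeterGeneratingSet S) (hTR : IsTwistRigid S) :
    Finite (MulAut W ⧸ (MulAut.conj : W →* MulAut W).range) := by
  classical
  obtain ⟨hfin, M, cs, hs⟩ := hS
  have : Fintype ↥S := hfin.fintype
  exact TR.finite_out cs (TR.twist_of cs hs hTR)
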